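/- Let u be an AB-entropy solution of u_t + f(x,u)_x = 0 on ℝ × [0,∞). Then for every x ∈ ℝ the set C_0(u,x) is a nonempty compact subset of ℝ, and the maps x ↦ min C_0(u,x) and x ↦ max C_0(u,x) are monotone nondecreasing: for all x_1 < x_2, min C_0(u,x_1) ≤ min C_0(u,x_2) and max C_0(u,x_1) ≤ max C_0(u,x_2). -/

import Mathlib

open MeasureTheory Set Filter

noncomputable section

/-- The discontinuous flux `f(x,u) = f_l(u)` for `x < 0`, `f_r(u)` for `x > 0`
(the value at the interface is taken to be `f_r(u)`). -/
def dflux (fl fr : ℝ → ℝ) (x u : ℝ) : ℝ := if x < 0 then fl u else fr u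

/-- The connection function `c^{AB}`. -/
def cAB (A B : ℝ) (x : ℝ) : ℝ := if x ≤ 0 then A else B

/-- An `AB`-entropy solution of `u_t + f(x,u)_x = 0` on `ℝ × [0,∞)` with
initial datum `u0`, for the flux `f(x,·) = fl` on `x<0` and `fr` on `x>0`,
relative to the connection `(A,B)`.  The structure bundles the solution `u`
(as a function of `(x,t)`), its one-sided spatial limits `um x t = u(x-,t)` and
`up x t = u(x+,t)` (for `t > 0`), the weak (distributional) formulation, the
Kružkov entropy inequalities away from the interface, the `AB`-interface
entropy inequality, `L¹_loc`-continuity in time and the initial condition. -/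
structure ABSol (fl fr : ℝ → ℝ) (A B : ℝ) (u0 : ℝ → ℝ) where
  u : ℝ → ℝ → ℝ
  meas : Measurable (Function.uncurry u)
  bdd : ∃ M : ℝ, ∀ x t, |u x t| ≤ M
  um : ℝ → ℝ → ℝ
  up : ℝ → ℝ → ℝ
  um_spec : ∀ x t, 0 < t →
    Tendsto (fun y => u y t) (nhdsWithin x (Iio x)) (nhds (um x t))
  up_spec : ∀ x t, 0 < t →
    Tendsto (fun y => u y t) (nhdsWithin x (Ioi x)) (nhds (up x t))
  weak : ∀ φ : ℝ → ℝ → ℝ,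
    ContDiff ℝ 1 (fun p : ℝ × ℝ => φ p.1 p.2) →
    HasCompactSupport (fun p : ℝ × ℝ => φ p.1 p.2) →
    (∀ x t, t ≤ 0 → φ x t = 0) →
    (∫ p : ℝ × ℝ, (u p.1 p.2 * deriv (fun s => φ p.1 s) p.2 +
        dflux fl fr p.1 (u p.1 p.2) * deriv (fun y => φ y p.2) p.1)) = 0
  kruzkov_l : ∀ (k : ℝ) (φ : ℝ → ℝ → ℝ),
    ContDiff ℝ 1 (fun p : ℝ × ℝ => φ p.1 p.2) →
    HasCompactSupport (fun p : ℝ × ℝ => φ p.1 p.2) →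
    (∀ x t, 0 ≤ φ x t) →
    (∀ x t, 0 ≤ x ∨ t ≤ 0 → φ x t = 0) →
    0 ≤ ∫ p : ℝ × ℝ, (|u p.1 p.2 - k| * deriv (fun s => φ p.1 s) p.2 +
        Real.sign (u p.1 p.2 - k) * (fl (u p.1 p.2) - fl k) *
          deriv (fun y => φ y p.2) p.1)
  kruzkov_r : ∀ (k : ℝ) (φ : ℝ → ℝ → ℝ),
    ContDiff ℝ 1 (fun p : ℝ × ℝ => φ p.1 p.2) →
    HasCompactSupport (fun p : ℝ × ℝ => φ p.1 p.2) →
    (∀ x t, 0 ≤ φ x t) →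
    (∀ x t, x ≤ 0 ∨ t ≤ 0 → φ x t = 0) →
    0 ≤ ∫ p : ℝ × ℝ, (|u p.1 p.2 - k| * deriv (fun s => φ p.1 s) p.2 +
        Real.sign (u p.1 p.2 - k) * (fr (u p.1 p.2) - fr k) *
          deriv (fun y => φ y p.2) p.1)
  interfaceEntropy : ∀ φ : ℝ → ℝ → ℝ,
    ContDiff ℝ 1 (fun p : ℝ × ℝ => φ p.1 p.2) →
    HasCompactSupport (fun p : ℝ × ℝ => φ p.1 p.2) →
    (∀ x t, 0 ≤ φ x t) →
    (∀ x t, t ≤ 0 → φ x t = 0) →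
    0 ≤ ∫ p : ℝ × ℝ, (|u p.1 p.2 - cAB A B p.1| * deriv (fun s => φ p.1 s) p.2 +
        Real.sign (u p.1 p.2 - cAB A B p.1) *
          (dflux fl fr p.1 (u p.1 p.2) - dflux fl fr p.1 (cAB A B p.1)) *
          deriv (fun y => φ y p.2) p.1)
  timeCont : ∀ (r t₀ : ℝ), 0 ≤ t₀ →
    Tendsto (fun t => ∫ x in Icc (-r) r, |u x t - u x t₀|)
      (nhdsWithin t₀ (Ici 0)) (nhds 0)
  init : ∀ᵐ x : ℝ ∂volume, u x 0 = u0 x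

/-- `AB`-genuine/interface characteristic for the `AB`-entropy solution `sol`,
on the time interval `[0,T]`, where `γ = f_l(A) = f_r(B)`. -/
def IsABgic (T : ℝ) (fl fr : ℝ → ℝ) (γ : ℝ) {A B : ℝ} {u0 : ℝ → ℝ}
    (sol : ABSol fl fr A B u0) (ζ : ℝ → ℝ) : Prop :=
  (∃ K : NNReal, LipschitzOnWith K ζ (Icc 0 T)) ∧
  (∀ᵐ t ∂(volume.restrict (Icc 0 T)),
    (ζ t < 0 → HasDerivAt ζ (deriv fl (sol.um (ζ t) t)) t ∧
      deriv fl (sol.um (ζ t) t) = deriv fl (sol.up (ζ t) t)) ∧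
    (0 < ζ t → HasDerivAt ζ (deriv fr (sol.um (ζ t) t)) t ∧
      deriv fr (sol.um (ζ t) t) = deriv fr (sol.up (ζ t) t)) ∧
    (ζ t = 0 → fl (sol.um 0 t) = γ ∧ fr (sol.up 0 t) = γ))

/-- `C(u,x)`: the set of `AB`-genuine/interface characteristics of `sol`
reaching `x` at time `T`. -/
def charSet (T : ℝ) (fl fr : ℝ → ℝ) (γ : ℝ) {A B : ℝ} {u0 : ℝ → ℝ}
    (sol : ABSol fl fr A B u0) (x : ℝ) : Set (ℝ → ℝ) :=
  {ζ | IsABgic T fl fr γ sol ζ ∧ ζ T = x}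

/-- `C₀(u,x)`: the set of initial positions `ζ(0)` of characteristics in `C(u,x)`. -/
def charSet0 (T : ℝ) (fl fr : ℝ → ℝ) (γ : ℝ) {A B : ℝ} {u0 : ℝ → ℝ}
    (sol : ABSol fl fr A B u0) (x : ℝ) : Set ℝ :=
  (fun ζ : ℝ → ℝ => ζ 0) '' charSet T fl fr γ sol x

/-- Membership in `L^∞(ℝ)`: measurable and (essentially) bounded. -/
def IsLinf (g : ℝ → ℝ) : Prop :=
  Measurable g ∧ ∃ M : ℝ, ∀ᵐ x : ℝ ∂volume, |g x| ≤ M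

/-- `ω ∈ A^{[AB]}(T)`: the profile `ω` is attainable at time `T`. -/
def Attainable (T : ℝ) (fl fr : ℝ → ℝ) (A B : ℝ) (ω : ℝ → ℝ) : Prop :=
  ∃ u0 : ℝ → ℝ, IsLinf u0 ∧
    ∃ sol : ABSol fl fr A B u0, ∀ᵐ x : ℝ ∂volume, sol.u x T = ω x

/-- `I_T^{[AB]}(ω)`: the set of (bounded) initial data whose `AB`-entropy
solution coincides a.e. with `ω` at time `T`. -/
def InitialSet (T : ℝ) (fl fr : ℝ → ℝ) (A B : ℝ) (ω : ℝ → ℝ) : Set (ℝ → ℝ) :=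
  {u0 | IsLinf u0 ∧
    ∃ sol : ABSol fl fr A B u0, ∀ᵐ x : ℝ ∂volume, sol.u x T = ω x}

/-- `x` is a point of continuity of `ω`: the one-sided limits exist and coincide. -/
def ContinuityPt (ω : ℝ → ℝ) (x : ℝ) : Prop :=
  ∃ l : ℝ, Tendsto ω (nhdsWithin x (Iio x)) (nhds l) ∧
    Tendsto ω (nhdsWithin x (Ioi x)) (nhds l)

/-!
An `AB`-entropy solution `u` of `u_t + f(x, u)_x = 0` has a Lipschitz primitive `w`, with `w_x = u`
and `w_t = -f(x, u)`. Kruzkov's inequalities make `w` a viscosity solution of `w_t + f(w_x) = 0` on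
each side of the interface, so by the Hopf-Lax formula `w` grows along an arbitrary path at most by
the action of the Legendre transform of the flux, with equality precisely along genuine
characteristics. The interface inequality says that the flux at the interface is at least `γ`, with
incoming characteristics wherever it is larger; hence `t ↦ w (0, t) + γ t` is nonincreasing, and a
curve may stay on the interface exactly while this function is constant.

From every point an optimal path leads back to the initial line: a characteristic which reaches the
interface stays there, backwards in time, until a characteristic arrives. Conversely every
`AB`-genuine/interface characteristic can be replaced by such a path with at most three pieces: a
genuine characteristic to the interface, a stay on the interface, a genuine characteristic from it.
Membership of `y` in `C₀(u, x)` is then expressed by equalities between values of the continuous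
function `w`, which are preserved by limits, and this gives compactness. Monotonicity holds because
two characteristics which cross can exchange their initial parts.
-/

section LineInequality

lemma mul_sub_le_sub_of_ae_le_deriv {h : ℝ → ℝ} {a b C : ℝ} (hab : a ≤ b)
    (hac : AbsolutelyContinuousOnInterval h a b)
    (hd : ∀ᵐ t, t ∈ Ioo a b → C ≤ deriv h t) : C * (b - a) ≤ h b - h a := by
  have hCle : (fun _ ↦ C) ≤ᵐ[volume.restrict (Icc a b)] deriv h := by
    rw [← restrict_Ioo_eq_restrict_Icc, EventuallyLE, ae_restrict_iff' measurableSet_Ioo]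
    exact hd
  calc C * (b - a) = ∫ _ in a..b, C := by simp [mul_comm]
    _ ≤ ∫ t in a..b, deriv h t := intervalIntegral.integral_mono_ae_restrict hab
        intervalIntegrable_const hac.intervalIntegrable_deriv hCle
    _ = h b - h a := hac.integral_deriv_eq_sub

variable {E : Type*} [NormedAddCommGroup E] [NormedSpace ℝ E] {w : E → ℝ} {K : NNReal} {C : ℝ}

lemma lipschitzWith_add_smul (Q v : E) : LipschitzWith ‖v‖₊ fun s : ℝ ↦ Q + s • v :=
  LipschitzWith.of_dist_le_mul fun s t ↦ by
    simp [dist_eq_norm, ← sub_smul, norm_smul, mul_comm]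

lemma sub_le_mul_of_ae_lineDeriv_le_on_line (hw : LipschitzWith K w) {Q v : E} {τ : ℝ}
    (hτ : 0 ≤ τ) (hd : ∀ᵐ t : ℝ, t ∈ Ioo 0 τ → lineDeriv ℝ w (Q + t • v) v ≤ C) :
    w (Q + τ • v) - w Q ≤ C * τ := by
  have hlip : LipschitzWith (K * ‖v‖₊) fun s : ℝ ↦ -w (Q + s • v) :=
    (hw.comp (lipschitzWith_add_smul Q v)).neg
  have hderiv (t : ℝ) :
      deriv (fun s : ℝ ↦ -w (Q + s • v)) t = -lineDeriv ℝ w (Q + t • v) v := by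
    rw [deriv.fun_neg, lineDeriv]
    simpa [add_smul, add_assoc] using
      (deriv_comp_const_add (f := fun s : ℝ ↦ w (Q + s • v)) t 0).symm
  have := mul_sub_le_sub_of_ae_le_deriv (C := -C) hτ
    hlip.lipschitzOnWith.absolutelyContinuousOnInterval (by
      filter_upwards [hd] with t ht hmem
      rw [hderiv]
      exact neg_le_neg (ht hmem))
  simp only [zero_smul, add_zero, sub_zero] at this
  linarith

/- The bound on the segment from `P` need not hold almost everywhere on that segment, but by Fubini
it does on almost every parallel segment, and these accumulate at `P`. -/
theorem sub_le_mul_of_ae_lineDeriv_le [FiniteDimensional ℝ E] [MeasurableSpace E] [BorelSpace E]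
    {μ : Measure E} [μ.IsAddHaarMeasure] (hw : LipschitzWith K w) {U : Set E} (hU : IsOpen U)
    {v : E} (hd : ∀ᵐ Q ∂μ, Q ∈ U → lineDeriv ℝ w Q v ≤ C) {P : E} {τ : ℝ} (hτ : 0 ≤ τ)
    (hseg : ∀ s ∈ Icc 0 τ, P + s • v ∈ U) : w (P + τ • v) - w P ≤ C * τ := by
  have hlines : ∀ᵐ Q ∂μ, ∀ᵐ t : ℝ, Q + t • v ∈ U → lineDeriv ℝ w (Q + t • v) v ≤ C := by
    have hmeas : MeasurableSet {Q | Q ∈ U → lineDeriv ℝ w Q v ≤ C} := by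
      have : {Q | Q ∈ U → lineDeriv ℝ w Q v ≤ C} = Uᶜ ∪ {Q | lineDeriv ℝ w Q v ≤ C} := by
        ext; simp [imp_iff_not_or]
      rw [this]
      exact hU.measurableSet.compl.union
        (measurableSet_le (measurable_lineDeriv hw.continuous) measurable_const)
    rw [Measure.ae_ae_comm (p := fun Q (t : ℝ) ↦ Q + t • v ∈ U → lineDeriv ℝ w (Q + t • v) v ≤ C)
      (hmeas.preimage (by fun_prop : Measurable fun x : E × ℝ ↦ x.1 + x.2 • v))]
    exact .of_forall fun t ↦
      (measurePreserving_add_right μ (t • v)).quasiMeasurePreserving.ae hd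
  have hnear : ∀ᶠ Q in nhds P, ∀ s ∈ Icc 0 τ, Q + s • v ∈ U :=
    isCompact_Icc.eventually_forall_of_forall_eventually fun s hs ↦
      (by fun_prop : Continuous fun x : E × ℝ ↦ x.1 + x.2 • v).continuousAt.eventually
        (hU.mem_nhds (hseg s hs))
  have hgood : ∃ᶠ Q in nhds P, w (Q + τ • v) - w Q ≤ C * τ :=
    ((mem_closure_iff_frequently.1 (Measure.dense_of_ae hlines P)).and_eventually hnear).mono
      fun Q ⟨hline, hmem⟩ ↦ sub_le_mul_of_ae_lineDeriv_le_on_line hw hτ <| by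
        rw [mem_ofPred_eq] at hline
        filter_upwards [hline] with t hbound ht using hbound (hmem t (Ioo_subset_Icc_self ht))
  have hcont := hw.continuous
  have hclosed : IsClosed {Q | w (Q + τ • v) - w Q ≤ C * τ} :=
    isClosed_le (by fun_prop) continuous_const
  exact hclosed.mem_of_frequently_of_tendsto hgood tendsto_id

end LineInequality

/-- A differentiable function whose derivative is an increasing bijection of `ℝ`, i.e. a strictly
convex superlinear flux. -/
structure IsConvexFlux (f : ℝ → ℝ) : Prop where
  differentiable : Differentiable ℝ f
  strictMono_deriv : StrictMono (deriv f)
  surjective_deriv : Function.Surjective (deriv f)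

/-- The Legendre transform of `f`; it takes the junk value `0` where the supremum is infinite,
which does not happen for an `IsConvexFlux`. -/
def legendre (f : ℝ → ℝ) (p : ℝ) : ℝ := ⨆ v, (p * v - f v)

lemma isConvexFlux_of_le_deriv_deriv {f : ℝ → ℝ} (hf : ContDiff ℝ 2 f) {a : ℝ} (ha : 0 < a)
    (hconvex : ∀ v, a ≤ deriv (deriv f) v) : IsConvexFlux f := by
  have hf' : ContDiff ℝ 1 (deriv f) :=
    ((contDiff_succ_iff_deriv (n := 1)).1 (by norm_num; exact hf)).2.2
  have hgrowth : ∀ x y, x ≤ y → a * (y - x) ≤ deriv f y - deriv f x := fun x y hxy ↦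
    mul_sub_le_image_sub_of_le_deriv (hf'.differentiable (by norm_num)) hconvex hxy
  refine ⟨hf.differentiable (by norm_num), fun x y hxy ↦ ?_, hf'.continuous.surjective ?_ ?_⟩
  · nlinarith [hgrowth x y hxy.le]
  · refine tendsto_atTop_mono' _ (f₁ := fun x ↦ deriv f 0 + a * x) ?_
      (tendsto_atTop_add_const_left _ _ (tendsto_id.const_mul_atTop ha))
    filter_upwards [eventually_ge_atTop 0] with x hx
    linarith [hgrowth 0 x hx]
  · refine tendsto_atBot_mono' _ (f₁ := fun x ↦ deriv f 0 + a * x) ?_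
      (tendsto_atBot_add_const_left _ _ (tendsto_id.const_mul_atBot ha))
    filter_upwards [eventually_le_atBot 0] with x hx
    linarith [hgrowth x 0 hx]

namespace IsConvexFlux

variable {f : ℝ → ℝ}

lemma continuous (hf : IsConvexFlux f) : Continuous f := hf.differentiable.continuous

lemma continuous_deriv (hf : IsConvexFlux f) : Continuous (deriv f) :=
  hf.strictMono_deriv.monotone.continuous_of_surjective hf.surjective_deriv

lemma comp_neg (hf : IsConvexFlux f) : IsConvexFlux fun v ↦ f (-v) := by
  have hderiv : deriv (fun v ↦ f (-v)) = fun v ↦ -deriv f (-v) := funext (deriv_comp_neg f)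
  refine ⟨hf.differentiable.comp differentiable_neg, ?_, ?_⟩ <;> rw [hderiv]
  · exact fun a b hab ↦ neg_lt_neg (hf.strictMono_deriv (neg_lt_neg hab))
  · exact (neg_surjective.comp hf.surjective_deriv).comp neg_surjective

lemma add_deriv_mul_le (hf : IsConvexFlux f) (u v : ℝ) : f v + deriv f v * (u - v) ≤ f u := by
  have hconv : ConvexOn ℝ univ f :=
    hf.strictMono_deriv.monotone.convexOn_univ_of_deriv hf.differentiable
  have hd := (hf.differentiable v).hasDerivAt
  rcases lt_trichotomy u v with h | rfl | h
  · have := hconv.slope_le_of_hasDerivAt (mem_univ u) (mem_univ v) h hd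
    rw [slope_def_field, div_le_iff₀ (by linarith)] at this
    linarith
  · simp
  · have := hconv.le_slope_of_hasDerivAt (mem_univ v) (mem_univ u) h hd
    rw [slope_def_field, le_div_iff₀ (by linarith)] at this
    linarith

lemma legendre_deriv (hf : IsConvexFlux f) (v : ℝ) :
    legendre f (deriv f v) = deriv f v * v - f v :=
  le_antisymm (ciSup_le fun u ↦ by linarith [hf.add_deriv_mul_le u v])
    (le_ciSup (f := fun u ↦ deriv f v * u - f u)
      ⟨deriv f v * v - f v, forall_mem_range.2 fun u ↦ by linarith [hf.add_deriv_mul_le u v]⟩ v)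

lemma mul_sub_le_legendre (hf : IsConvexFlux f) (p v : ℝ) : p * v - f v ≤ legendre f p := by
  obtain ⟨u, rfl⟩ := hf.surjective_deriv p
  rw [hf.legendre_deriv]
  linarith [hf.add_deriv_mul_le v u]

lemma hasDerivAt_legendre (hf : IsConvexFlux f) (v : ℝ) :
    HasDerivAt (legendre f) v (deriv f v) := by
  let e := hf.strictMono_deriv.orderIsoOfSurjective _ hf.surjective_deriv
  have hinv (q : ℝ) : deriv f (e.symm q) = q := e.apply_symm_apply q
  have hsymm : e.symm (deriv f v) = v := e.symm_apply_apply v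
  have hbound (q : ℝ) : |legendre f q - legendre f (deriv f v) - (q - deriv f v) * v| ≤
      |e.symm q - v| * |q - deriv f v| := by
    have hlow := hf.mul_sub_le_legendre q v
    have hupp := hf.mul_sub_le_legendre (deriv f v) (e.symm q)
    have hq : legendre f q = q * e.symm q - f (e.symm q) := by
      simpa only [hinv] using hf.legendre_deriv (e.symm q)
    rw [hf.legendre_deriv] at hupp ⊢
    rw [← abs_mul, abs_of_nonneg (by linarith)]
    exact le_trans (by linarith) (le_abs_self _)
  rw [hasDerivAt_iff_isLittleO, Asymptotics.isLittleO_iff]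
  intro c hc
  have hclose : ∀ᶠ q in nhds (deriv f v), |e.symm q - v| < c := by
    simpa [Real.dist_eq, hsymm] using
      Metric.continuousAt_iff'.1 (e.symm.continuous.continuousAt (x := deriv f v)) c hc
  filter_upwards [hclose] with q hq
  simp only [smul_eq_mul, Real.norm_eq_abs]
  exact (hbound q).trans (by gcongr)

lemma continuous_legendre (hf : IsConvexFlux f) : Continuous (legendre f) :=
  continuous_iff_continuousAt.2 fun p ↦ by
    obtain ⟨v, rfl⟩ := hf.surjective_deriv p
    exact (hf.hasDerivAt_legendre v).continuousAt

end IsConvexFlux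

/-! ### Divergence inequalities in the sense of distributions -/

section DivergenceInequality

open scoped Convolution

variable {E : Type*} [NormedAddCommGroup E]

variable (E) in
/-- Bump functions on `E` shrinking to the origin, used as mollifying kernels. -/
def mollifier (n : ℕ) : ContDiffBump (0 : E) where
  rIn := 1 / (2 * ((n : ℝ) + 1))
  rOut := 1 / ((n : ℝ) + 1)
  rIn_pos := by positivity
  rIn_lt_rOut := by gcongr; linarith [n.cast_nonneg (α := ℝ)]

lemma tendsto_rOut_mollifier : Tendsto (fun n ↦ (mollifier E n).rOut) atTop (nhds 0) :=
  tendsto_one_div_add_atTop_nhds_zero_nat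

lemma rOut_mollifier_le_one (n : ℕ) : (mollifier E n).rOut ≤ 1 :=
  div_le_one_of_le₀ (by linarith [n.cast_nonneg (α := ℝ)]) (by positivity)

variable [NormedSpace ℝ E] [MeasurableSpace E] {μ : Measure E}

/-- The differential inequality `div X ≤ 0` on `U` in the sense of distributions. -/
def DivNonposOn (μ : Measure E) (X : E → E) (U : Set E) : Prop :=
  ∀ φ : E → ℝ, ContDiff ℝ 1 φ → HasCompactSupport φ → (∀ P, 0 ≤ φ P) → tsupport φ ⊆ U →
    0 ≤ ∫ P, fderiv ℝ φ P (X P) ∂μ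

variable [BorelSpace E] [FiniteDimensional ℝ E] [μ.IsAddHaarMeasure]
  {ρ h : E → ℝ} {K : NNReal} {X : E → E} {U : Set E}

lemma hasFDerivAt_convolution_of_lipschitzWith (hρ : Continuous ρ) (hρ_supp : HasCompactSupport ρ)
    (hh : LipschitzWith K h) (x : E) :
    HasFDerivAt (ρ ⋆[ContinuousLinearMap.lsmul ℝ ℝ, μ] h)
      ((ρ ⋆[ContinuousLinearMap.lsmul ℝ ℝ, μ] fderiv ℝ h) x) x := by
  have hh_cont := hh.continuous
  refine (hasFDerivAt_integral_of_dominated_loc_of_lip (s := univ)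
    (F' := fun t ↦ ρ t • fderiv ℝ h (x - t)) (bound := fun t ↦ |ρ t| * K) univ_mem
    (.of_forall fun y ↦ Continuous.aestronglyMeasurable ?_)
    (Continuous.integrable_of_hasCompactSupport ?_ hρ_supp.mul_right)
    (hρ.aestronglyMeasurable.smul ?_) (.of_forall fun t ↦ ?_)
    ((hρ.integrable_of_hasCompactSupport hρ_supp).abs.mul_const _) ?_).2
  · simp only [ContinuousLinearMap.lsmul_apply]
    fun_prop
  · fun_prop
  · exact ((measurable_fderiv ℝ h).comp (measurable_const.sub measurable_id)).aestronglyMeasurable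
  · refine LipschitzOnWith.of_dist_le_mul fun y _ z _ ↦ ?_
    have hdist := hh.dist_le_mul (y - t) (z - t)
    rw [dist_sub_right] at hdist
    simp only [ContinuousLinearMap.lsmul_apply, smul_eq_mul, Real.dist_eq] at hdist ⊢
    rw [← mul_sub, abs_mul, Real.coe_nnabs, abs_of_nonneg (by positivity : 0 ≤ |ρ t| * (K : ℝ)),
      mul_assoc]
    gcongr
  · filter_upwards [(Measure.measurePreserving_sub_left μ x).quasiMeasurePreserving.ae
      hh.ae_differentiableAt] with t ht
    exact (ht.hasFDerivAt.comp x ((hasFDerivAt_id x).sub_const t)).const_smul (ρ t)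

lemma norm_convolution_normed_le {F : Type*} [NormedAddCommGroup F] [NormedSpace ℝ F]
    (φ : ContDiffBump (0 : E)) {g : E → F} {C : ℝ} (hg : ∀ x, ‖g x‖ ≤ C) (x : E) :
    ‖(φ.normed μ ⋆[ContinuousLinearMap.lsmul ℝ ℝ, μ] g) x‖ ≤ C := by
  have hint : Integrable (fun t ↦ φ.normed μ t * C) μ :=
    (φ.continuous_normed.integrable_of_hasCompactSupport φ.hasCompactSupport_normed).mul_const _
  calc ‖(φ.normed μ ⋆[ContinuousLinearMap.lsmul ℝ ℝ, μ] g) x‖ ≤ ∫ t, φ.normed μ t * C ∂μ := by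
        refine norm_integral_le_of_norm_le hint (.of_forall fun t ↦ ?_)
        rw [ContinuousLinearMap.lsmul_apply, norm_smul, Real.norm_of_nonneg (φ.nonneg_normed t)]
        exact mul_le_mul_of_nonneg_left (hg _) (φ.nonneg_normed t)
    _ = C := by rw [integral_mul_const, φ.integral_normed, one_mul]

lemma tsupport_convolution_normed_subset (φ : ContDiffBump (0 : E)) (h : E → ℝ) :
    tsupport (φ.normed μ ⋆[ContinuousLinearMap.lsmul ℝ ℝ, μ] h) ⊆
      Metric.cthickening φ.rOut (tsupport h) := by
  refine closure_minimal ((support_convolution_subset _).trans ?_) Metric.isClosed_cthickening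
  rw [φ.support_normed_eq]
  rintro _ ⟨t, ht, y, hy, rfl⟩
  refine Metric.mem_cthickening_of_dist_le _ y _ _ (subset_tsupport h hy) ?_
  simpa using (mem_ball_zero_iff.1 ht).le

lemma ae_tendsto_fderiv_convolution_mollifier (hh : LipschitzWith K h) :
    ∀ᵐ P ∂μ, Tendsto (fun n ↦ fderiv ℝ
      ((mollifier E n).normed μ ⋆[ContinuousLinearMap.lsmul ℝ ℝ, μ] h) P) atTop
      (nhds (fderiv ℝ h P)) := by
  have hint : LocallyIntegrable (fderiv ℝ h) μ :=
    (locallyIntegrable_const (K : ℝ)).mono (measurable_fderiv ℝ h).aestronglyMeasurable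
      (.of_forall fun P ↦ by simpa using norm_fderiv_le_of_lipschitz ℝ hh)
  filter_upwards [ContDiffBump.ae_convolution_tendsto_right_of_locallyIntegrable (K := 2)
    tendsto_rOut_mollifier (.of_forall fun n ↦ by simp only [mollifier]; field_simp; rfl) hint]
    with P hP
  simpa only [(hasFDerivAt_convolution_of_lipschitzWith (mollifier E _).continuous_normed
    (mollifier E _).hasCompactSupport_normed hh _).fderiv] using hP

lemma tendsto_integral_fderiv_convolution_mollifier (hX : Measurable X) {M : ℝ}
    (hX_bdd : ∀ P, ‖X P‖ ≤ M) (hh : LipschitzWith K h) (hh_supp : HasCompactSupport h) :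
    Tendsto (fun n ↦ ∫ P, fderiv ℝ
      ((mollifier E n).normed μ ⋆[ContinuousLinearMap.lsmul ℝ ℝ, μ] h) P (X P) ∂μ) atTop
      (nhds (∫ P, fderiv ℝ h P (X P) ∂μ)) := by
  have hZ : IsCompact (Metric.cthickening 1 (tsupport h)) := IsCompact.cthickening hh_supp
  refine tendsto_integral_of_dominated_convergence
    ((Metric.cthickening 1 (tsupport h)).indicator fun _ ↦ K * M) (fun n ↦ ?_)
    ((integrable_indicator_iff hZ.measurableSet).2 (integrableOn_const hZ.measure_lt_top.ne))
    (fun n ↦ .of_forall fun P ↦ ?_) ?_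
  · exact (ContinuousLinearMap.id ℝ (E →L[ℝ] ℝ)).aestronglyMeasurable_comp₂
      (measurable_fderiv ℝ _).aestronglyMeasurable hX.aestronglyMeasurable
  · by_cases hP : P ∈ Metric.cthickening 1 (tsupport h)
    · rw [indicator_of_mem hP]
      refine ContinuousLinearMap.le_of_opNorm_le_of_le _ ?_ (hX_bdd P)
      rw [(hasFDerivAt_convolution_of_lipschitzWith (mollifier E _).continuous_normed
        (mollifier E _).hasCompactSupport_normed hh P).fderiv]
      exact norm_convolution_normed_le _ (fun x ↦ norm_fderiv_le_of_lipschitz ℝ hh) P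
    · rw [indicator_of_notMem hP, Function.notMem_support.1 fun hmem ↦ hP
        (Metric.cthickening_mono (rOut_mollifier_le_one n) _
          (tsupport_convolution_normed_subset _ _ (support_fderiv_subset ℝ hmem)))]
      simp
  · filter_upwards [ae_tendsto_fderiv_convolution_mollifier hh] with P hP
    exact ((ContinuousLinearMap.apply ℝ ℝ (X P)).continuous.tendsto _).comp hP

theorem DivNonposOn.integral_fderiv_nonneg (hdiv : DivNonposOn μ X U) (hX : Measurable X) {M : ℝ}
    (hX_bdd : ∀ P, ‖X P‖ ≤ M) (hU : IsOpen U) (hh : LipschitzWith K h)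
    (hh_supp : HasCompactSupport h) (hh_nonneg : ∀ P, 0 ≤ h P) (hhU : tsupport h ⊆ U) :
    0 ≤ ∫ P, fderiv ℝ h P (X P) ∂μ := by
  obtain ⟨δ, hδ, hδU⟩ := IsCompact.exists_cthickening_subset_open hh_supp hU hhU
  refine ge_of_tendsto (tendsto_integral_fderiv_convolution_mollifier hX hX_bdd hh hh_supp) ?_
  filter_upwards [(tendsto_rOut_mollifier (E := E)).eventually (gt_mem_nhds hδ)] with n hn
  have hbump := (mollifier E n).hasCompactSupport_normed (μ := μ)
  refine hdiv _ (hbump.contDiff_convolution_left _ (mollifier E n).contDiff_normed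
    hh.continuous.locallyIntegrable) (hbump.convolution _ hh_supp) (fun P ↦ ?_) ?_
  · exact integral_nonneg fun t ↦ mul_nonneg ((mollifier E n).nonneg_normed t) (hh_nonneg _)
  · exact (tsupport_convolution_normed_subset _ _).trans
      ((Metric.cthickening_mono hn.le _).trans hδU)

theorem DivNonposOn.ae_eq_zero (hdiv : DivNonposOn μ X U) (hX : Measurable X) {M : ℝ}
    (hX_bdd : ∀ P, ‖X P‖ ≤ M) (hU : IsOpen U) (hh : LipschitzWith K h)
    (hh_supp : HasCompactSupport h) (hh_nonneg : ∀ P, 0 ≤ h P) (hhU : tsupport h ⊆ U)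
    {g : E → ℝ} (hg : ∀ P, 0 ≤ g P) (hle : ∀ᵐ P ∂μ, 0 < h P → fderiv ℝ h P (X P) ≤ -g P) :
    ∀ᵐ P ∂μ, 0 < h P → g P = 0 := by
  have hnonpos : ∀ᵐ P ∂μ, fderiv ℝ h P (X P) ≤ 0 := by
    filter_upwards [hle] with P hP
    rcases (hh_nonneg P).eq_or_lt with h0 | hpos
    · have hmin : IsLocalMin h P := .of_forall fun Q ↦ h0 ▸ hh_nonneg Q
      rw [hmin.fderiv_eq_zero, zero_apply]
    · linarith [hP hpos, hg P]
  have hint : Integrable (fun P ↦ fderiv ℝ h P (X P)) μ := by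
    have hcompact : IsCompact (tsupport h) := hh_supp
    refine (integrableOn_iff_integrable_of_support_subset (s := tsupport h) fun P hP ↦ ?_).1 <|
      Measure.integrableOn_of_bounded (M := K * M) hcompact.measure_lt_top.ne
        ((ContinuousLinearMap.id ℝ (E →L[ℝ] ℝ)).aestronglyMeasurable_comp₂
          (measurable_fderiv ℝ h).aestronglyMeasurable hX.aestronglyMeasurable)
        (.of_forall fun P ↦ ContinuousLinearMap.le_of_opNorm_le_of_le _
          (norm_fderiv_le_of_lipschitz ℝ hh) (hX_bdd P))
    exact support_fderiv_subset ℝ fun h0 ↦ hP (by simp [h0])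
  have hzero : (fun P ↦ -fderiv ℝ h P (X P)) =ᵐ[μ] 0 := by
    rw [← integral_eq_zero_iff_of_nonneg_ae (hnonpos.mono fun P hP ↦ neg_nonneg.2 hP) hint.neg]
    refine le_antisymm ?_ (integral_nonneg_of_ae (hnonpos.mono fun P hP ↦ neg_nonneg.2 hP))
    rw [integral_neg]
    exact neg_nonpos.2 (hdiv.integral_fderiv_nonneg hX hX_bdd hU hh hh_supp hh_nonneg hhU)
  filter_upwards [hle, hzero] with P hP h0 hpos
  have := hP hpos
  simp only [Pi.zero_apply, neg_eq_zero] at h0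
  linarith [hg P]

end DivergenceInequality

/-! ### Entropy potentials -/

lemma IsConvexFlux.exists_lipschitzOnWith {f : ℝ → ℝ} (hf : IsConvexFlux f) {s : Set ℝ}
    (hs : IsCompact s) : ∃ C, LipschitzOnWith C f s :=
  ((hf.strictMono_deriv.monotone.convexOn_univ_of_deriv
    hf.differentiable).locallyLipschitz.locallyLipschitzOn).exists_lipschitzOnWith_of_compact hs

lemma measurable_real_sign : Measurable Real.sign :=
  Measurable.ite measurableSet_Iio measurable_const
    (Measurable.ite measurableSet_Ioi measurable_const measurable_const)

lemma abs_real_sign_le_one (y : ℝ) : |Real.sign y| ≤ 1 := by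
  rcases Real.sign_apply_eq y with h | h | h <;> simp [h]

lemma real_sign_mul_self (y : ℝ) : Real.sign y * y = |y| := by
  rcases lt_trichotomy y 0 with h | rfl | h
  · simp [Real.sign_of_neg h, abs_of_neg h]
  · simp
  · simp [Real.sign_of_pos h, abs_of_pos h]

/-- The entropy flux-entropy pair of Kruzkov's entropy `v ↦ |v - k|`, as a vector field in the
`(x, t)`-plane. -/
def kruzkovField (f : ℝ → ℝ) (u : ℝ × ℝ → ℝ) (k : ℝ) (P : ℝ × ℝ) : ℝ × ℝ :=
  (Real.sign (u P - k) * (f (u P) - f k), |u P - k|)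

/-- `w` is a potential (`w_x = u`, `w_t = -f(u)`) on `U` of a bounded Kruzkov entropy solution `u`
of `u_t + f(u)_x = 0`; equivalently, a viscosity solution of `w_t + f(w_x) = 0`. -/
structure IsEntropyPotential (f : ℝ → ℝ) (w u : ℝ × ℝ → ℝ) (U : Set (ℝ × ℝ)) : Prop where
  lipschitz : ∃ K, LipschitzWith K w
  measurable : Measurable u
  bounded : ∃ M, ∀ P, |u P| ≤ M
  hasFDerivAt : ∀ᵐ P, P ∈ U → HasFDerivAt w
    (u P • ContinuousLinearMap.fst ℝ ℝ ℝ - f (u P) • ContinuousLinearMap.snd ℝ ℝ ℝ) P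
  kruzkov : ∀ k, DivNonposOn volume (kruzkovField f u k) U

lemma lipschitzWith_norm_sub {E : Type*} [SeminormedAddCommGroup E] (P : E) :
    LipschitzWith 1 fun Q ↦ ‖Q - P‖ :=
  LipschitzWith.of_dist_le_mul fun Q R ↦ by
    simpa [Real.dist_eq, dist_eq_norm] using abs_norm_sub_norm_le (Q - P) (R - P)

/- The bump is the positive part of `ωρ/2 - (w - w P - L + 2ω‖· - P‖)`; replacing `w` by its maximum
with the lower bound `w P + L - ω‖· - P‖`, which changes nothing near `P`, makes the support
compact. -/
lemma exists_lipschitz_bump_of_touching {E : Type*} [NormedAddCommGroup E] [NormedSpace ℝ E]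
    {w : E → ℝ} {K : NNReal} {L : E →L[ℝ] ℝ} {P : E} {ω ρ : ℝ} (hw : LipschitzWith K w) (hω : 0 < ω)
    (hρ : 0 < ρ)
    (htouch : ∀ Q ∈ Metric.ball P ρ, w P + L (Q - P) - ω * ‖Q - P‖ ≤ w Q) :
    ∃ (h : E → ℝ) (C : NNReal) (c : ℝ), LipschitzWith C h ∧ (∀ Q, 0 ≤ h Q) ∧ 0 < h P ∧
      tsupport h ⊆ Metric.closedBall P (ρ / 2) ∧
      ∀ Q, 0 < h Q → h =ᶠ[nhds Q] fun Q ↦ c - (w Q - L Q + 2 * ω * ‖Q - P‖) := by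
  have hpen (r : ℝ) : LipschitzWith (‖r‖₊ * 1) fun Q ↦ r * ‖Q - P‖ :=
    (lipschitzWith_smul r).comp (lipschitzWith_norm_sub P)
  let low : E → ℝ := fun Q ↦ w P + (L Q - L P) - ω * ‖Q - P‖
  let d : E → ℝ := fun Q ↦ ω * ρ / 2 - (max (w Q) (low Q) - (w P + (L Q - L P))
    + 2 * ω * ‖Q - P‖)
  have hlin := (LipschitzWith.const (α := E) (w P)).add (L.lipschitz.sub (.const (L P)))
  have hd := (LipschitzWith.const (ω * ρ / 2)).sub
    (((hw.max (hlin.sub (hpen ω))).sub hlin).add (hpen (2 * ω)))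
  have hnear (Q : E) (hQ : 0 < max 0 (d Q)) : dist Q P < ρ / 2 := by
    have hdQ : 0 < d Q := by simpa using hQ
    simp only [d, low] at hdQ
    have := le_max_right (w Q) (w P + (L Q - L P) - ω * ‖Q - P‖)
    rw [dist_eq_norm]
    nlinarith
  refine ⟨fun Q ↦ max 0 (d Q), _, ω * ρ / 2 + w P - L P, hd.const_max 0,
    fun Q ↦ le_max_left _ _, ?_, ?_, fun Q hQ ↦ ?_⟩
  · have : 0 < ω * ρ / 2 := by positivity
    simpa [d, low] using this
  · refine closure_minimal (fun Q hQ ↦ ?_) Metric.isClosed_closedBall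
    exact (hnear Q ((le_max_left _ _).lt_of_ne (Ne.symm hQ))).le
  · have hball : Metric.ball P ρ ∈ nhds Q :=
      Metric.isOpen_ball.mem_nhds ((hnear Q hQ).trans (by linarith))
    have hpos : ∀ᶠ Q in nhds Q, 0 < max 0 (d Q) :=
      (hd.const_max 0).continuous.continuousAt.eventually (lt_mem_nhds hQ)
    filter_upwards [hball, hpos] with R hRball hR
    have hmax : max (w R) (low R) = w R :=
      max_eq_left (by simpa only [low, map_sub] using htouch R hRball)
    rw [max_eq_right (by simpa using hR : 0 < d R).le]
    simp only [d, hmax]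
    ring

lemma kruzkovField_apply_le {f : ℝ → ℝ} {u : ℝ × ℝ → ℝ} {k C c ω : ℝ} {P : ℝ × ℝ}
    (hC : 0 ≤ C) (hf : |f (u P) - f k| ≤ C * |u P - k|) (hω : 0 ≤ ω) (hωC : 4 * ω * (1 + C) ≤ c)
    {L n : ℝ × ℝ →L[ℝ] ℝ} (hLk : L (1, 0) = k) (hLc : L (0, 1) = -f k - c)
    (hn : ‖n‖ ≤ 1) :
    (-((u P • ContinuousLinearMap.fst ℝ ℝ ℝ - f (u P) • ContinuousLinearMap.snd ℝ ℝ ℝ) - L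
      + (2 * ω) • n)) (kruzkovField f u k P) ≤ -(c / 2 * |u P - k|) := by
  set S := Real.sign (u P - k) * (f (u P) - f k) with hS
  have hS_le : |S| ≤ C * |u P - k| := by
    rw [hS, abs_mul]
    nlinarith [abs_real_sign_le_one (u P - k), abs_nonneg (f (u P) - f k)]
  have hS_mul : S * (u P - k) = |u P - k| * (f (u P) - f k) := by
    rw [hS, ← real_sign_mul_self]
    ring
  have hLX : L (S, |u P - k|) = S * k + |u P - k| * (-f k - c) := by
    have : ((S, |u P - k|) : ℝ × ℝ) = S • (1, 0) + |u P - k| • (0, 1) := by simp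
    rw [this, map_add, map_smul, map_smul, hLk, hLc, smul_eq_mul, smul_eq_mul]
  have hnX : |n (S, |u P - k|)| ≤ (1 + C) * |u P - k| := by
    refine (n.le_opNorm _).trans ?_
    have hX : ‖(S, |u P - k|)‖ ≤ (1 + C) * |u P - k| := by
      have := mul_nonneg hC (abs_nonneg (u P - k))
      rw [Prod.norm_mk, Real.norm_eq_abs, Real.norm_eq_abs, abs_abs]
      exact max_le (by linarith [abs_nonneg (u P - k)]) (by linarith)
    nlinarith [norm_nonneg (S, |u P - k|)]
  have hωn : 2 * ω * -n (S, |u P - k|) ≤ c / 2 * |u P - k| := by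
    calc 2 * ω * -n (S, |u P - k|) ≤ 2 * ω * ((1 + C) * |u P - k|) := by
          gcongr
          exact (neg_le_abs _).trans hnX
      _ ≤ c / 2 * |u P - k| := by nlinarith [abs_nonneg (u P - k)]
  simp only [kruzkovField, ← hS, neg_apply, add_apply, sub_apply, smul_apply,
    ContinuousLinearMap.coe_fst', ContinuousLinearMap.coe_snd', smul_eq_mul, hLX]
  linarith

namespace IsEntropyPotential

variable {f : ℝ → ℝ} {w u : ℝ × ℝ → ℝ} {U : Set (ℝ × ℝ)}

lemma measurable_kruzkovField (hw : IsEntropyPotential f w u U) (hf : IsConvexFlux f) (k : ℝ) :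
    Measurable (kruzkovField f u k) :=
  ((measurable_real_sign.comp (hw.measurable.sub_const k)).mul
    ((hf.continuous.measurable.comp hw.measurable).sub_const _)).prodMk
    (hw.measurable.sub_const k).abs

lemma exists_abs_sub_le (hw : IsEntropyPotential f w u U) (hf : IsConvexFlux f) (k : ℝ) :
    ∃ C, 0 ≤ C ∧ ∀ P, |f (u P) - f k| ≤ C * |u P - k| := by
  obtain ⟨M, hM⟩ := hw.bounded
  obtain ⟨C, hC⟩ := hf.exists_lipschitzOnWith (isCompact_closedBall 0 (max M |k|))
  refine ⟨C, C.coe_nonneg, fun P ↦ ?_⟩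
  simpa [Real.dist_eq] using hC.dist_le_mul (u P) (by simp [hM P]) k (by simp)

lemma exists_norm_kruzkovField_le (hw : IsEntropyPotential f w u U) (hf : IsConvexFlux f) (k : ℝ) :
    ∃ M, ∀ P, ‖kruzkovField f u k P‖ ≤ M := by
  obtain ⟨M, hM⟩ := hw.bounded
  obtain ⟨C, hC, hfC⟩ := hw.exists_abs_sub_le hf k
  refine ⟨max (C * (M + |k|)) (M + |k|), fun P ↦ ?_⟩
  have hle : |u P - k| ≤ M + |k| := (abs_sub _ _).trans (by linarith [hM P])
  rw [kruzkovField, Prod.norm_mk]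
  refine max_le_max ?_ (by simpa using hle)
  calc |Real.sign (u P - k) * (f (u P) - f k)| ≤ 1 * |f (u P) - f k| := by
        rw [abs_mul]
        gcongr
        exact abs_real_sign_le_one _
    _ ≤ C * (M + |k|) := by
        rw [one_mul]
        exact (hfC P).trans (by gcongr)

/- Testing the entropy inequality with a bump of `L - w` near a touching point at which
`L (0, 1) < -f k` forces `u = k` there, so that `w` is affine in `t` with slope `-f k`. -/
lemma exists_isOpen_ae_eq (hw : IsEntropyPotential f w u U) (hf : IsConvexFlux f)
    (hU : IsOpen U) {P : ℝ × ℝ} (hP : P ∈ U) {L : ℝ × ℝ →L[ℝ] ℝ} {k : ℝ} (hLk : L (1, 0) = k)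
    (hL : L (0, 1) < -f k)
    (htouch : ∀ ω > 0, ∀ᶠ Q in nhds P, w P + L (Q - P) - ω * ‖Q - P‖ ≤ w Q) :
    ∃ V, IsOpen V ∧ P ∈ V ∧ V ⊆ U ∧ ∀ᵐ Q, Q ∈ V → u Q = k := by
  obtain ⟨K, hK⟩ := hw.lipschitz
  obtain ⟨M, hM⟩ := hw.exists_norm_kruzkovField_le hf k
  obtain ⟨C, hC, hfC⟩ := hw.exists_abs_sub_le hf k
  set c := -f k - L (0, 1) with hc
  have hc_pos : 0 < c := by linarith
  have hω : 0 < c / (4 * (1 + C)) := by positivity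
  have hωC : 4 * (c / (4 * (1 + C))) * (1 + C) ≤ c := by field_simp; rfl
  set ω := c / (4 * (1 + C))
  obtain ⟨ρ, hρ, hball⟩ := Metric.eventually_nhds_iff_ball.1
    ((htouch ω hω).and (hU.mem_nhds hP))
  obtain ⟨h, Kh, c', hh, hh_nonneg, hhP, hh_supp, hh_eq⟩ :=
    exists_lipschitz_bump_of_touching hK hω hρ fun Q hQ ↦ (hball Q hQ).1
  have hhU : tsupport h ⊆ U := fun Q hQ ↦ (hball Q
    (Metric.closedBall_subset_ball (by linarith) (hh_supp hQ))).2
  have hh_compact : HasCompactSupport h :=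
    (isCompact_closedBall P (ρ / 2)).of_isClosed_subset (isClosed_tsupport h) hh_supp
  have hnorm := lipschitzWith_norm_sub P
  have hle : ∀ᵐ Q, 0 < h Q → fderiv ℝ h Q (kruzkovField f u k Q) ≤ -(c / 2 * |u Q - k|) := by
    filter_upwards [hw.hasFDerivAt, hnorm.ae_differentiableAt] with Q hwQ hnQ hQ
    have hderiv := (((hwQ (hhU (subset_tsupport h hQ.ne'))).sub L.hasFDerivAt).add
      (hnQ.hasFDerivAt.const_mul (2 * ω))).const_sub c'
    rw [(hderiv.congr_of_eventuallyEq (hh_eq Q hQ)).fderiv]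
    exact kruzkovField_apply_le hC (hfC Q) hω.le hωC hLk (by simp [hc])
      (norm_fderiv_le_of_lipschitz ℝ hnorm)
  have hzero := (hw.kruzkov k).ae_eq_zero (hw.measurable_kruzkovField hf k) hM hU hh hh_compact
    hh_nonneg hhU (fun Q ↦ by positivity) hle
  refine ⟨{Q | 0 < h Q}, isOpen_lt continuous_const hh.continuous, hhP,
    fun Q hQ ↦ hhU (subset_tsupport h (ne_of_gt hQ)), ?_⟩
  filter_upwards [hzero] with Q hQ hQpos
  simpa [hc_pos.ne', sub_eq_zero] using hQ hQpos

theorem le_neg_of_touching (hw : IsEntropyPotential f w u U) (hf : IsConvexFlux f)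
    (hU : IsOpen U) {P : ℝ × ℝ} (hP : P ∈ U) {L : ℝ × ℝ →L[ℝ] ℝ}
    (htouch : ∀ ω > 0, ∀ᶠ Q in nhds P, w P + L (Q - P) - ω * ‖Q - P‖ ≤ w Q) :
    -f (L (1, 0)) ≤ L (0, 1) := by
  by_contra! hL
  obtain ⟨V, hV, hPV, hVU, huV⟩ := hw.exists_isOpen_ae_eq hf hU hP rfl hL htouch
  obtain ⟨K, hK⟩ := hw.lipschitz
  set ω := (-f (L (1, 0)) - L (0, 1)) / 2 with hω
  obtain ⟨ρ, hρ, hball⟩ := Metric.eventually_nhds_iff_ball.1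
    ((htouch ω (by linarith)).and (hV.mem_nhds hPV))
  have hmem (s : ℝ) (hs : s ∈ Icc 0 (ρ / 2)) : P + s • (0, -1) ∈ Metric.ball P ρ := by
    have : s < ρ := by linarith [hs.2]
    simpa [Prod.norm_def, abs_of_nonneg hs.1, hρ] using this
  have hline := sub_le_mul_of_ae_lineDeriv_le (μ := volume) hK hV (v := (0, -1))
    (C := f (L (1, 0))) (P := P) (τ := ρ / 2) (by
      filter_upwards [hw.hasFDerivAt, huV] with Q hwQ huQ hQ
      rw [((hwQ (hVU hQ)).hasLineDerivAt _).lineDeriv, huQ hQ]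
      simp) (by positivity) fun s hs ↦ (hball _ (hmem s hs)).2
  have hbelow := (hball _ (hmem (ρ / 2) ⟨by positivity, le_rfl⟩)).1
  rw [add_sub_cancel_left, map_smul, show ((0, -1) : ℝ × ℝ) = -(0, 1) by simp, map_neg,
    smul_eq_mul, norm_smul, norm_neg] at hbelow
  simp only [Prod.norm_mk, norm_zero, norm_one, Real.norm_eq_abs, abs_of_pos (half_pos hρ),
    zero_le_one, sup_of_le_right, mul_one, smul_neg] at hbelow
  rw [show ((0, -1) : ℝ × ℝ) = -(0, 1) by simp, smul_neg] at hline
  nlinarith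

theorem apply_snd_le_of_isLocalMin (hw : IsEntropyPotential f w u U) (hf : IsConvexFlux f)
    (hU : IsOpen U) {P : ℝ × ℝ} (hP : P ∈ U) {ψ : ℝ × ℝ → ℝ} {D : ℝ × ℝ →L[ℝ] ℝ}
    (hψ : HasFDerivAt ψ D P) (hmin : IsLocalMin (fun Q ↦ w Q + ψ Q) P) :
    D (0, 1) ≤ f (-D (1, 0)) := by
  have := hw.le_neg_of_touching hf hU hP (L := -D) fun ω hω ↦ by
    filter_upwards [hmin, hψ.isLittleO.def hω] with Q hQ hψQ
    simp only [neg_apply]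
    rw [Real.norm_eq_abs] at hψQ
    linarith [hQ, (abs_le.1 hψQ).2, show w P + ψ P ≤ w Q + ψ Q from hQ]
  simpa using this

theorem add_smul_le_add_mul_legendre (hw : IsEntropyPotential f w u U) (hf : IsConvexFlux f)
    (hU : IsOpen U) {P : ℝ × ℝ} {p τ : ℝ} (hτ : 0 ≤ τ)
    (hseg : ∀ s ∈ Icc 0 τ, P + s • (p, 1) ∈ U) :
    w (P + τ • (p, 1)) ≤ w P + τ * legendre f p := by
  obtain ⟨K, hK⟩ := hw.lipschitz
  have := sub_le_mul_of_ae_lineDeriv_le (μ := volume) hK hU (C := legendre f p) (by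
    filter_upwards [hw.hasFDerivAt] with Q hwQ hQ
    rw [((hwQ hQ).hasLineDerivAt _).lineDeriv]
    simpa [mul_comm] using hf.mul_sub_le_legendre p (u Q)) hτ hseg
  linarith

end IsEntropyPotential

/-! ### The backward Hopf-Lax formula -/

/-- The open quadrant `{x > 0, t > 0}` of the `(x, t)`-plane. -/
def quadrant : Set (ℝ × ℝ) := Ioi 0 ×ˢ Ioi 0

lemma isOpen_quadrant : IsOpen quadrant := isOpen_Ioi.prod isOpen_Ioi

/-- The action of the straight line from `P` to `Q` for the Lagrangian `legendre f`; only meaningful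
when `P.2 < Q.2`. -/
def hopfLaxCost (f : ℝ → ℝ) (P Q : ℝ × ℝ) : ℝ :=
  (Q.2 - P.2) * legendre f ((Q.1 - P.1) / (Q.2 - P.2))

lemma abs_sub_le_of_lipschitzWith {w : ℝ × ℝ → ℝ} {K : NNReal} (hw : LipschitzWith K w)
    (P Q : ℝ × ℝ) : |w P - w Q| ≤ K * (|P.1 - Q.1| + |P.2 - Q.2|) := by
  refine (hw.dist_le_mul P Q).trans ?_
  rw [Prod.dist_eq, Real.dist_eq, Real.dist_eq]
  gcongr
  exact max_le_add_of_nonneg (abs_nonneg _) (abs_nonneg _)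

lemma exists_steep_penalty (t B : ℝ) {ε : ℝ} (hε : 0 < ε) :
    ∃ β β' : ℝ → ℝ, (∀ s, HasDerivAt β (β' s) s) ∧ (∀ s, 0 < β' s) ∧ (∀ s, 0 < β s) ∧ β t = ε ∧
      B < β (t + ε) := by
  have hexp (s : ℝ) : HasDerivAt (fun s ↦ ε * Real.exp (|B| / ε ^ 2 * (s - t) + (s - t)))
      (ε * (Real.exp (|B| / ε ^ 2 * (s - t) + (s - t)) * (|B| / ε ^ 2 * 1 + 1))) s :=
    (((((hasDerivAt_id s).sub_const t).const_mul (|B| / ε ^ 2)).add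
      ((hasDerivAt_id s).sub_const t)).exp).const_mul ε
  refine ⟨_, _, hexp, fun s ↦ by positivity, fun s ↦ by positivity, by simp, ?_⟩
  have hle := mul_le_mul_of_nonneg_left
    (Real.add_one_le_exp (|B| / ε ^ 2 * (t + ε - t) + (t + ε - t))) hε.le
  have heq : ε * (|B| / ε ^ 2 * (t + ε - t) + (t + ε - t) + 1) = |B| + ε ^ 2 + ε := by
    field_simp
    ring
  nlinarith [le_abs_self B]

namespace IsConvexFlux

variable {f : ℝ → ℝ}

lemma exists_mul_abs_sub_le_legendre (hf : IsConvexFlux f) (A : ℝ) :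
    ∃ C, 0 ≤ C ∧ ∀ p, A * |p| - C ≤ legendre f p := by
  refine ⟨max |f A| |f (-A)|, (abs_nonneg _).trans (le_max_left _ _), fun p ↦ ?_⟩
  have hpos := hf.mul_sub_le_legendre p A
  have hneg := hf.mul_sub_le_legendre p (-A)
  have h₁ := (le_abs_self (f A)).trans (le_max_left _ |f (-A)|)
  have h₂ := (le_abs_self (f (-A))).trans (le_max_right |f A| _)
  rcases abs_cases p with ⟨h, _⟩ | ⟨h, _⟩ <;> rw [h] <;> linarith

lemma exists_mul_abs_sub_le_hopfLaxCost (hf : IsConvexFlux f) (A : ℝ) :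
    ∃ C, 0 ≤ C ∧ ∀ P Q : ℝ × ℝ, P.2 < Q.2 →
      A * |Q.1 - P.1| - C * (Q.2 - P.2) ≤ hopfLaxCost f P Q := by
  obtain ⟨C, hC, hle⟩ := hf.exists_mul_abs_sub_le_legendre A
  refine ⟨C, hC, fun P Q hPQ ↦ ?_⟩
  have hd : 0 < Q.2 - P.2 := sub_pos.2 hPQ
  have := mul_le_mul_of_nonneg_left (hle ((Q.1 - P.1) / (Q.2 - P.2))) hd.le
  rw [abs_div, abs_of_pos hd] at this
  refine le_trans (le_of_eq ?_) this
  field_simp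

lemma continuousOn_hopfLaxCost (hf : IsConvexFlux f) :
    ContinuousOn (fun p : (ℝ × ℝ) × (ℝ × ℝ) ↦ hopfLaxCost f p.1 p.2) {p | p.1.2 < p.2.2} := by
  have hd : ∀ p ∈ {p : (ℝ × ℝ) × (ℝ × ℝ) | p.1.2 < p.2.2}, p.2.2 - p.1.2 ≠ 0 :=
    fun p hp ↦ (sub_pos.2 hp).ne'
  have hslope : ContinuousOn (fun p : (ℝ × ℝ) × (ℝ × ℝ) ↦ (p.2.1 - p.1.1) / (p.2.2 - p.1.2))
      {p | p.1.2 < p.2.2} := by fun_prop (disch := assumption)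
  exact (by fun_prop : Continuous fun p : (ℝ × ℝ) × (ℝ × ℝ) ↦ p.2.2 - p.1.2).continuousOn.mul
    (hf.continuous_legendre.comp_continuousOn hslope)

lemma hasFDerivAt_hopfLaxCost (hf : IsConvexFlux f) {P Q : ℝ × ℝ} (hPQ : P.2 < Q.2) {v : ℝ}
    (hv : deriv f v = (Q.1 - P.1) / (Q.2 - P.2)) :
    HasFDerivAt (fun P ↦ hopfLaxCost f P Q)
      (-v • ContinuousLinearMap.fst ℝ ℝ ℝ + f v • ContinuousLinearMap.snd ℝ ℝ ℝ) P := by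
  have hd : Q.2 - P.2 ≠ 0 := (sub_pos.2 hPQ).ne'
  have htime : HasFDerivAt (fun P : ℝ × ℝ ↦ Q.2 - P.2) (-ContinuousLinearMap.snd ℝ ℝ ℝ) P :=
    hasFDerivAt_snd.const_sub Q.2
  have hspace : HasFDerivAt (fun P : ℝ × ℝ ↦ Q.1 - P.1) (-ContinuousLinearMap.fst ℝ ℝ ℝ) P :=
    hasFDerivAt_fst.const_sub Q.1
  have hslope := hspace.mul ((hasDerivAt_inv hd).comp_hasFDerivAt P htime)
  have hleg := (hv ▸ hf.hasDerivAt_legendre v).comp_hasFDerivAt P hslope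
  refine (htime.mul hleg).congr_fderiv ?_
  ext
  · simp
    field_simp
  · simp [← div_eq_mul_inv, ← hv, hf.legendre_deriv]
    field_simp
    linear_combination -v * (eq_div_iff hd).1 hv

end IsConvexFlux

/-- `P` and `Q` are joined by a straight line, of slope `p`, along which the potential `w` grows by
exactly the Lagrangian action, i.e. by a genuine characteristic of slope `p`; it lies in the closed
quadrant. -/
structure IsCharSegment (f : ℝ → ℝ) (w : ℝ × ℝ → ℝ) (p : ℝ) (P Q : ℝ × ℝ) : Prop where
  fst_nonneg_left : 0 ≤ P.1
  fst_nonneg_right : 0 ≤ Q.1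
  snd_nonneg_left : 0 ≤ P.2
  snd_le : P.2 ≤ Q.2
  fst_eq : Q.1 = P.1 + p * (Q.2 - P.2)
  eq_add : w Q = w P + (Q.2 - P.2) * legendre f p

namespace IsEntropyPotential

variable {f : ℝ → ℝ} {w u : ℝ × ℝ → ℝ} {U : Set (ℝ × ℝ)}

lemma exists_add_abs_sub_le (hw : IsEntropyPotential f w u U) (hf : IsConvexFlux f) :
    ∃ C, 0 ≤ C ∧ ∀ (P Q : ℝ × ℝ) (T : ℝ), P.2 < T →
      w Q + |Q.1 - P.1| - C * (|Q.2 - P.2| + (T - P.2)) ≤ w P + hopfLaxCost f P (Q.1, T) := by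
  obtain ⟨K, hK⟩ := hw.lipschitz
  obtain ⟨C, hC, hle⟩ := hf.exists_mul_abs_sub_le_hopfLaxCost (K + 1)
  refine ⟨K + C, by positivity, fun P Q T hT ↦ ?_⟩
  have hlip := (abs_le.1 (abs_sub_le_of_lipschitzWith hK Q P)).2
  have hcost := hle P (Q.1, T) hT
  have hK_nonneg : 0 ≤ K * (T - P.2) := mul_nonneg K.coe_nonneg (sub_nonneg.2 hT.le)
  have hC_nonneg : 0 ≤ C * |Q.2 - P.2| := by positivity
  simp only at hcost
  linarith

lemma le_add_mul_legendre (hw : IsEntropyPotential f w u quadrant) (hf : IsConvexFlux f)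
    {y s x t p : ℝ} (hy : 0 ≤ y) (hx : 0 ≤ x) (hs : 0 ≤ s) (hst : s ≤ t)
    (hp : x = y + p * (t - s)) : w (x, t) ≤ w (y, s) + (t - s) * legendre f p := by
  obtain ⟨K, hK⟩ := hw.lipschitz
  have hcont := hK.continuous
  have hshift (ε : ℝ) (hε : 0 < ε) :
      w (x + ε, t + ε) ≤ w (y + ε, s + ε) + (t - s) * legendre f p := by
    have := hw.add_smul_le_add_mul_legendre hf isOpen_quadrant (P := (y + ε, s + ε)) (p := p)
      (sub_nonneg.2 hst) fun r hr ↦ ⟨?_, ?_⟩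
    · rw [show (x + ε, t + ε) = (y + ε, s + ε) + (t - s) • (p, (1 : ℝ)) by
        ext <;> simp [hp] <;> ring]
      exact this
    · simp only [Prod.smul_mk, Prod.mk_add_mk, smul_eq_mul, mem_Ioi]
      rcases le_total 0 p with h | h
      · linarith [mul_nonneg hr.1 h]
      · linarith [mul_le_mul_of_nonpos_right hr.2 h]
    · simp only [Prod.smul_mk, Prod.mk_add_mk, smul_eq_mul, mem_Ioi]
      linarith [hr.1]
  have hlim : Tendsto (fun ε ↦ w (y + ε, s + ε) + (t - s) * legendre f p - w (x + ε, t + ε))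
      (nhdsWithin 0 (Ioi 0)) (nhds (w (y, s) + (t - s) * legendre f p - w (x, t))) := by
    have : Continuous fun ε ↦ w (y + ε, s + ε) + (t - s) * legendre f p - w (x + ε, t + ε) := by
      fun_prop
    simpa using (this.tendsto 0).mono_left nhdsWithin_le_nhds
  have := ge_of_tendsto hlim (b := 0) (by
    filter_upwards [self_mem_nhdsWithin] with ε hε
    linarith [hshift ε hε])
  linarith

lemma le_add_hopfLaxCost (hw : IsEntropyPotential f w u quadrant) (hf : IsConvexFlux f)
    {P Q : ℝ × ℝ} (hP : 0 ≤ P.1) (hQ : 0 ≤ Q.1) (hP' : 0 ≤ P.2) (hPQ : P.2 < Q.2) :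
    w Q ≤ w P + hopfLaxCost f P Q :=
  hw.le_add_mul_legendre hf hP hQ hP' hPQ.le (by
    have : Q.2 - P.2 ≠ 0 := (sub_pos.2 hPQ).ne'
    field_simp
    ring)

lemma not_isLocalMin_add_hopfLaxCost (hw : IsEntropyPotential f w u U) (hf : IsConvexFlux f)
    (hU : IsOpen U) {P Q : ℝ × ℝ} (hP : P ∈ U) (hPQ : P.2 < Q.2) {β : ℝ → ℝ} {b : ℝ}
    (hβ : HasDerivAt β b P.2) (hb : 0 < b) :
    ¬ IsLocalMin (fun P ↦ w P + (hopfLaxCost f P Q + β P.2)) P := fun hmin ↦ by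
  obtain ⟨v, hv⟩ := hf.surjective_deriv ((Q.1 - P.1) / (Q.2 - P.2))
  have hpenalty : HasFDerivAt (fun P : ℝ × ℝ ↦ β P.2) (b • ContinuousLinearMap.snd ℝ ℝ ℝ) P :=
    hβ.comp_hasFDerivAt P hasFDerivAt_snd
  have := hw.apply_snd_le_of_isLocalMin hf hU hP
    ((hf.hasFDerivAt_hopfLaxCost hPQ hv).add hpenalty) hmin
  simp only [add_apply, smul_apply, ContinuousLinearMap.coe_fst', ContinuousLinearMap.coe_snd',
    smul_eq_mul] at this
  norm_num at this
  linarith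

lemma exists_lt_add_hopfLaxCost (hw : IsEntropyPotential f w u U) (hf : IsConvexFlux f)
    (x : ℝ) {t ε : ℝ} (ht : 0 < t) (hε : 0 < ε) :
    ∃ B, 0 < B ∧ ∀ (P : ℝ × ℝ) (b : ℝ), 0 ≤ P.2 → P.2 ≤ t + ε → B ≤ |x - P.1| + b →
      w (x, t) + 2 * ε * legendre f 0 + ε < w P + (hopfLaxCost f P (x, t + 2 * ε) + b) := by
  obtain ⟨C, hC, hcoer⟩ := hw.exists_add_abs_sub_le hf
  refine ⟨C * (2 * t + 3 * ε) + |2 * ε * legendre f 0 + ε| + 1, by positivity,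
    fun P b hP hP' hB ↦ ?_⟩
  have hcost := hcoer P (x, t) (t + 2 * ε) (by linarith)
  have habs : |t - P.2| ≤ t + ε := abs_le.2 ⟨by linarith, by linarith⟩
  have hC_le := mul_le_mul_of_nonneg_left
    (show |t - P.2| + (t + 2 * ε - P.2) ≤ 2 * t + 3 * ε by linarith) hC
  linarith [le_abs_self (2 * ε * legendre f 0 + ε)]

/- Minimise `w P + hopfLaxCost f P (x, t + 2ε)` plus a steep exponential penalty in time that keeps
the minimum away from `P.2 = t + ε`. -/
lemma exists_boundary_add_hopfLaxCost_le (hw : IsEntropyPotential f w u quadrant)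
    (hf : IsConvexFlux f) {x t ε : ℝ} (hx : 0 < x) (ht : 0 < t) (hε : 0 < ε) :
    ∃ P : ℝ × ℝ, 0 ≤ P.1 ∧ 0 ≤ P.2 ∧ P.2 < t + ε ∧ (P.1 = 0 ∨ P.2 = 0) ∧
      w P + hopfLaxCost f P (x, t + 2 * ε) ≤ w (x, t) + 2 * ε * legendre f 0 + ε := by
  obtain ⟨B, hB, hlarge⟩ := hw.exists_lt_add_hopfLaxCost hf x ht hε
  obtain ⟨K, hK⟩ := hw.lipschitz
  obtain ⟨β, β', hβ, hβ'_pos, hβ_pos, hβ_t, hβ_end⟩ := exists_steep_penalty t B hε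
  set Ψ : ℝ × ℝ → ℝ := fun P ↦ w P + (hopfLaxCost f P (x, t + 2 * ε) + β P.2) with hΨ
  have hΨ_start : Ψ (x, t) = w (x, t) + 2 * ε * legendre f 0 + ε := by
    simp [hΨ, hβ_t, hopfLaxCost]
    ring
  have hcont : ContinuousOn Ψ (Icc 0 (x + B) ×ˢ Icc 0 (t + ε)) := by
    have hβ_cont : Continuous β := continuous_iff_continuousAt.2 fun s ↦ (hβ s).continuousAt
    refine hK.continuous.continuousOn.add (.add ?_ (by fun_prop))
    refine hf.continuousOn_hopfLaxCost.comp (f := fun P ↦ (P, (x, t + 2 * ε))) (by fun_prop)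
      fun P hP ↦ ?_
    simp only [mem_ofPred_eq]
    linarith [hP.2.2]
  have hmem : (x, t) ∈ Icc 0 (x + B) ×ˢ Icc 0 (t + ε) :=
    ⟨⟨hx.le, by linarith⟩, ⟨ht.le, by linarith⟩⟩
  obtain ⟨P, hP, hmin⟩ := (isCompact_Icc.prod isCompact_Icc).exists_isMinOn ⟨_, hmem⟩ hcont
  have hle : Ψ P ≤ Ψ (x, t) := hmin hmem
  have hsmall : |x - P.1| + β P.2 < B := by
    by_contra! h
    have := hlarge P (β P.2) hP.2.1 hP.2.2 h
    rw [hΨ_start] at hle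
    simp only [hΨ] at hle
    linarith
  have hP₁ : P.1 < x + B := by linarith [neg_le_abs (x - P.1), hβ_pos P.2]
  have hP₂ : P.2 < t + ε :=
    lt_of_le_of_ne hP.2.2 fun h ↦ by rw [h] at hsmall; linarith [abs_nonneg (x - P.1)]
  refine ⟨P, hP.1.1, hP.2.1, hP₂, ?_, ?_⟩
  · by_contra! h
    have hP₁' : 0 < P.1 := lt_of_le_of_ne hP.1.1 h.1.symm
    have hP₂' : 0 < P.2 := lt_of_le_of_ne hP.2.1 h.2.symm
    exact hw.not_isLocalMin_add_hopfLaxCost hf isOpen_quadrant ⟨hP₁', hP₂'⟩ (by simp; linarith)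
      (hβ P.2) (hβ'_pos P.2)
      (hmin.isLocalMin (prod_mem_nhds (Icc_mem_nhds hP₁' hP₁) (Icc_mem_nhds hP₂' hP₂)))
  · rw [← hΨ_start]
    refine le_trans ?_ hle
    simp only [hΨ]
    linarith [hβ_pos P.2]

lemma add_hopfLaxCost_le_of_tendsto (hw : IsEntropyPotential f w u U) (hf : IsConvexFlux f)
    {x t : ℝ} {P : ℕ → ℝ × ℝ} {P₀ : ℝ × ℝ} {ε : ℕ → ℝ} (hP : Tendsto P atTop (nhds P₀))
    (hε : Tendsto ε atTop (nhds 0)) (ht : P₀.2 < t)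
    (hle : ∀ n, w (P n) + hopfLaxCost f (P n) (x, t + 2 * ε n) ≤
      w (x, t) + 2 * ε n * legendre f 0 + ε n) :
    w P₀ + hopfLaxCost f P₀ (x, t) ≤ w (x, t) := by
  obtain ⟨K, hK⟩ := hw.lipschitz
  have hcost : Tendsto (fun n ↦ hopfLaxCost f (P n) (x, t + 2 * ε n)) atTop
      (nhds (hopfLaxCost f P₀ (x, t))) := by
    have hcont : Continuous fun q : (ℝ × ℝ) × ℝ ↦ (q.1, (x, t + 2 * q.2)) := by fun_prop
    have hopen : IsOpen {p : (ℝ × ℝ) × (ℝ × ℝ) | p.1.2 < p.2.2} :=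
      isOpen_lt (by fun_prop) (by fun_prop)
    have hat := hf.continuousOn_hopfLaxCost.continuousAt (hopen.mem_nhds (x := (P₀, (x, t))) ht)
    refine hat.tendsto.comp (f := fun n ↦ (P n, (x, t + 2 * ε n))) ?_
    simpa using! (hcont.tendsto (P₀, 0)).comp (hP.prodMk_nhds hε)
  have hrhs : Tendsto (fun n ↦ w (x, t) + 2 * ε n * legendre f 0 + ε n) atTop
      (nhds (w (x, t))) := by
    have : Continuous fun e ↦ w (x, t) + 2 * e * legendre f 0 + e := by fun_prop
    simpa using! (this.tendsto 0).comp hε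
  exact le_of_tendsto_of_tendsto (((hK.continuous.tendsto P₀).comp hP).add hcost) hrhs
    (.of_forall hle)

lemma exists_tendsto_boundary_add_hopfLaxCost_le (hw : IsEntropyPotential f w u quadrant)
    (hf : IsConvexFlux f) {x t : ℝ} (hx : 0 < x) (ht : 0 < t) :
    ∃ (ε : ℕ → ℝ) (P : ℕ → ℝ × ℝ) (P₀ : ℝ × ℝ),
      Tendsto ε atTop (nhds 0) ∧ Tendsto P atTop (nhds P₀) ∧
      ∀ n, 0 < ε n ∧ 0 ≤ (P n).1 ∧ 0 ≤ (P n).2 ∧ (P n).2 < t + ε n ∧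
        ((P n).1 = 0 ∨ (P n).2 = 0) ∧
        w (P n) + hopfLaxCost f (P n) (x, t + 2 * ε n) ≤
          w (x, t) + 2 * ε n * legendre f 0 + ε n := by
  obtain ⟨C, _, hcoer⟩ := hw.exists_add_abs_sub_le hf
  let ε : ℕ → ℝ := fun n ↦ 1 / ((n : ℝ) + 1)
  have hε (n : ℕ) : 0 < ε n := by positivity
  have hε_le (n : ℕ) : ε n ≤ 1 := div_le_one_of_le₀ (by simp) (by positivity)
  have hε_lim : Tendsto ε atTop (nhds 0) := tendsto_one_div_add_atTop_nhds_zero_nat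
  choose P hP₁ hP₂ hPt hbdry hle using fun n ↦ hw.exists_boundary_add_hopfLaxCost_le hf hx ht (hε n)
  obtain ⟨R, hR⟩ := ((isCompact_Icc (a := 0) (b := t + 1)).prod
    (isCompact_Icc (a := (0 : ℝ)) (b := 1))).bddAbove_image (f := fun q ↦
      C * (|t - q.1| + (t + 2 * q.2 - q.1)) + (2 * q.2 * legendre f 0 + q.2)) (by fun_prop)
  have hmem (n : ℕ) : P n ∈ Icc 0 (x + R) ×ˢ Icc 0 (t + 1) := by
    have hP₂' : (P n).2 ∈ Icc 0 (t + 1) := ⟨hP₂ n, by linarith [hPt n, hε_le n]⟩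
    have hR' := hR (mem_image_of_mem _ (mk_mem_prod hP₂' ⟨(hε n).le, hε_le n⟩))
    have hdist := hcoer (P n) (x, t) (t + 2 * ε n) (by linarith [hPt n, hε n])
    exact ⟨⟨hP₁ n, by linarith [hdist, hle n, neg_le_abs (x - (P n).1)]⟩, hP₂'⟩
  obtain ⟨P₀, -, φ, hφ, hlim⟩ := (isCompact_Icc.prod isCompact_Icc).tendsto_subseq hmem
  exact ⟨ε ∘ φ, P ∘ φ, P₀, hε_lim.comp hφ.tendsto_atTop, hlim,
    fun n ↦ ⟨hε _, hP₁ _, hP₂ _, hPt _, hbdry _, hle _⟩⟩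

lemma exists_boundary_add_hopfLaxCost_eq (hw : IsEntropyPotential f w u quadrant)
    (hf : IsConvexFlux f) {x t : ℝ} (hx : 0 < x) (ht : 0 < t) :
    ∃ P : ℝ × ℝ, 0 ≤ P.1 ∧ 0 ≤ P.2 ∧ P.2 < t ∧ (P.1 = 0 ∨ P.2 = 0) ∧
      w (x, t) = w P + hopfLaxCost f P (x, t) := by
  obtain ⟨C, _, hcoer⟩ := hw.exists_add_abs_sub_le hf
  obtain ⟨ε, P, P₀, hε_lim, hP_lim, happrox⟩ :=
    hw.exists_tendsto_boundary_add_hopfLaxCost_le hf hx ht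
  choose hε hP₁ hP₂ hPt hbdry hle using happrox
  have hlim : Tendsto (fun n ↦ (P n, ε n)) atTop (nhds (P₀, 0)) := hP_lim.prodMk_nhds hε_lim
  have hP₀ : 0 ≤ P₀.1 ∧ 0 ≤ P₀.2 ∧ (P₀.1 = 0 ∨ P₀.2 = 0) :=
    ((isClosed_le continuous_const continuous_fst).inter
      ((isClosed_le continuous_const continuous_snd).inter
        ((isClosed_eq continuous_fst continuous_const).union
          (isClosed_eq continuous_snd continuous_const)))).mem_of_tendsto hP_lim
            (.of_forall fun n ↦ ⟨hP₁ n, hP₂ n, hbdry n⟩)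
  have hdist₀ : |x - P₀.1| ≤ C * (|t - P₀.2| + (t - P₀.2)) := by
    have := (isClosed_le (f := fun q : (ℝ × ℝ) × ℝ ↦ |x - q.1.1|) (g := fun q ↦
      C * (|t - q.1.2| + (t + 2 * q.2 - q.1.2)) + (2 * q.2 * legendre f 0 + q.2))
      (by fun_prop) (by fun_prop)).mem_of_tendsto hlim (.of_forall fun n ↦ by
        have := hcoer (P n) (x, t) (t + 2 * ε n) (by linarith [hPt n, hε n])
        simp only [mem_ofPred_eq]
        linarith [hle n])
    simpa using this
  have hPt₀ : P₀.2 ≤ t := by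
    have := (isClosed_le (f := fun q : (ℝ × ℝ) × ℝ ↦ q.1.2) (g := fun q ↦ t + q.2)
      (by fun_prop) (by fun_prop)).mem_of_tendsto hlim (.of_forall fun n ↦ (hPt n).le)
    simpa using this
  have hlt : P₀.2 < t := lt_of_le_of_ne hPt₀ fun h ↦ by
    rcases hP₀.2.2 with h' | h'
    · rw [h, h', sub_zero, sub_self, abs_zero, add_zero, mul_zero] at hdist₀
      exact hx.not_ge ((le_abs_self x).trans hdist₀)
    · linarith
  exact ⟨P₀, hP₀.1, hP₀.2.1, hlt, hP₀.2.2, le_antisymm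
    (hw.le_add_hopfLaxCost hf hP₀.1 hx.le hP₀.2.1 hlt)
    (hw.add_hopfLaxCost_le_of_tendsto hf hP_lim hε_lim hlt hle)⟩

end IsEntropyPotential

/-! ### Genuine characteristics -/

section OneSidedDerivative

variable {h : ℝ → ℝ} {a x : ℝ}

lemma nonneg_of_hasDerivWithinAt_Ioi (hh : HasDerivWithinAt h a (Ioi x) x)
    (hle : ∀ᶠ y in nhdsWithin x (Ioi x), h x ≤ h y) : 0 ≤ a := by
  refine ge_of_tendsto ((hasDerivWithinAt_iff_tendsto_slope' (by simp)).1 hh) ?_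
  filter_upwards [hle, self_mem_nhdsWithin] with y hy hxy
  rw [slope_def_field]
  exact div_nonneg (sub_nonneg.2 hy) (sub_nonneg.2 (le_of_lt hxy))

lemma nonpos_of_hasDerivWithinAt_Iio (hh : HasDerivWithinAt h a (Iio x) x)
    (hle : ∀ᶠ y in nhdsWithin x (Iio x), h x ≤ h y) : a ≤ 0 := by
  refine le_of_tendsto ((hasDerivWithinAt_iff_tendsto_slope' (by simp)).1 hh) ?_
  filter_upwards [hle, self_mem_nhdsWithin] with y hy hxy
  rw [slope_def_field]
  exact div_nonpos_of_nonneg_of_nonpos (sub_nonneg.2 hy) (sub_nonpos.2 (le_of_lt hxy))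

end OneSidedDerivative

lemma isClosed_setOf_exists_mem {X Y : Type*} [TopologicalSpace X] [TopologicalSpace Y]
    {C : Set (X × Y)} (hC : IsClosed C) {K : Set Y} (hK : IsCompact K) :
    IsClosed {x | ∃ y ∈ K, (x, y) ∈ C} := by
  have : CompactSpace K := isCompact_iff_compactSpace.1 hK
  have himage := isClosedMap_fst_of_compactSpace _
    (hC.preimage (f := fun q : X × K ↦ (q.1, (q.2 : Y))) (by fun_prop))
  convert himage using 1
  ext x
  simp

namespace IsConvexFlux

variable {f : ℝ → ℝ}

lemma hasDerivAt_hopfLaxCost_right (hf : IsConvexFlux f) {P : ℝ × ℝ} {x t v : ℝ} (ht : P.2 < t)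
    (hv : deriv f v = (x - P.1) / (t - P.2)) :
    HasDerivAt (fun y ↦ hopfLaxCost f P (y, t)) v x := by
  have hd : t - P.2 ≠ 0 := (sub_pos.2 ht).ne'
  have hslope : HasDerivAt (fun y ↦ (y - P.1) / (t - P.2)) (1 / (t - P.2)) x :=
    ((hasDerivAt_id x).sub_const P.1).div_const _
  refine (((hv ▸ hf.hasDerivAt_legendre v).comp x hslope).const_mul (t - P.2)).congr_deriv ?_
  field_simp

lemma hasDerivAt_hopfLaxCost_left (hf : IsConvexFlux f) {Q : ℝ × ℝ} {y s v : ℝ} (hs : s < Q.2)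
    (hv : deriv f v = (Q.1 - y) / (Q.2 - s)) :
    HasDerivAt (fun x ↦ hopfLaxCost f (x, s) Q) (-v) y := by
  have hcomp := (hf.hasFDerivAt_hopfLaxCost (P := (y, s)) hs hv).comp_hasDerivAt y
    ((hasDerivAt_id y).prodMk (hasDerivAt_const y s))
  simpa using! hcomp

end IsConvexFlux

namespace IsCharSegment

variable {f : ℝ → ℝ} {w u : ℝ × ℝ → ℝ} {p : ℝ} {P Q : ℝ × ℝ}

lemma refl (hP₁ : 0 ≤ P.1) (hP₂ : 0 ≤ P.2) : IsCharSegment f w 0 P P :=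
  ⟨hP₁, hP₁, hP₂, le_rfl, by simp, by simp⟩

lemma eq_add_hopfLaxCost (h : IsCharSegment f w p P Q) (hlt : P.2 < Q.2) :
    (Q.1 - P.1) / (Q.2 - P.2) = p ∧ w Q = w P + hopfLaxCost f P Q := by
  have hd : Q.2 - P.2 ≠ 0 := (sub_pos.2 hlt).ne'
  have hslope : (Q.1 - P.1) / (Q.2 - P.2) = p := by
    rw [h.fst_eq]
    field_simp
    ring
  exact ⟨hslope, by rw [hopfLaxCost, hslope, h.eq_add]⟩

lemma fst_nonneg (h : IsCharSegment f w p P Q) {r : ℝ} (hr : r ∈ Icc P.2 Q.2) :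
    0 ≤ P.1 + p * (r - P.2) := by
  have hQ := h.fst_nonneg_right
  rw [h.fst_eq] at hQ
  rcases le_total 0 p with hp | hp
  · linarith [h.fst_nonneg_left, mul_nonneg hp (sub_nonneg.2 hr.1)]
  · linarith [mul_le_mul_of_nonpos_left (sub_le_sub_right hr.2 P.2) hp]

lemma fst_pos (h : IsCharSegment f w p P Q) {r : ℝ} (hr : r ∈ Ioo P.2 Q.2)
    (hne : P.1 ≠ 0 ∨ Q.1 ≠ 0) : 0 < P.1 + p * (r - P.2) := by
  refine lt_of_le_of_ne (h.fst_nonneg (Ioo_subset_Icc_self hr)) fun h₀ ↦ ?_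
  have hsum : P.1 * (Q.2 - r) + Q.1 * (r - P.2) = 0 := by
    rw [h.fst_eq]
    linear_combination -(Q.2 - P.2) * h₀
  have hP := mul_nonneg h.fst_nonneg_left (sub_nonneg.2 hr.2.le)
  have hQ := mul_nonneg h.fst_nonneg_right (sub_nonneg.2 hr.1.le)
  rcases hne with hne | hne
  · exact mul_ne_zero hne (sub_pos.2 hr.2).ne' (by linarith)
  · exact mul_ne_zero hne (sub_pos.2 hr.1).ne' (by linarith)

lemma split (h : IsCharSegment f w p P Q) (hw : IsEntropyPotential f w u quadrant)
    (hf : IsConvexFlux f) {r : ℝ} (hr : r ∈ Icc P.2 Q.2) :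
    IsCharSegment f w p P (P.1 + p * (r - P.2), r) ∧
      IsCharSegment f w p (P.1 + p * (r - P.2), r) Q := by
  have hnonneg := h.fst_nonneg hr
  have hQ : Q.1 = P.1 + p * (r - P.2) + p * (Q.2 - r) := by rw [h.fst_eq]; ring
  have hr₀ := h.snd_nonneg_left.trans hr.1
  have hleft := hw.le_add_mul_legendre hf h.fst_nonneg_left hnonneg h.snd_nonneg_left hr.1 rfl
  have hright := hw.le_add_mul_legendre hf hnonneg h.fst_nonneg_right hr₀ hr.2 hQ
  have heq := h.eq_add
  simp only [Prod.mk.eta] at hleft hright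
  exact ⟨⟨h.fst_nonneg_left, hnonneg, h.snd_nonneg_left, hr.1, rfl, by linarith⟩,
    ⟨hnonneg, h.fst_nonneg_right, hr₀, hr.2, hQ, by linarith⟩⟩

end IsCharSegment

namespace IsEntropyPotential

variable {f : ℝ → ℝ} {w u : ℝ × ℝ → ℝ}

lemma exists_abs_slope_le {U : Set (ℝ × ℝ)} (hw : IsEntropyPotential f w u U)
    (hf : IsConvexFlux f) :
    ∃ R, 0 ≤ R ∧ ∀ p P Q, IsCharSegment f w p P Q → P.2 < Q.2 → |p| ≤ R := by
  obtain ⟨K, hK⟩ := hw.lipschitz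
  obtain ⟨C, hC, hle⟩ := hf.exists_mul_abs_sub_le_legendre (K + 1)
  refine ⟨K + C, by positivity, fun p P Q h hlt ↦ ?_⟩
  have hd : 0 < Q.2 - P.2 := sub_pos.2 hlt
  have hlip := (le_abs_self _).trans (abs_sub_le_of_lipschitzWith hK Q P)
  rw [h.eq_add, h.fst_eq, add_sub_cancel_left, add_sub_cancel_left, abs_mul, abs_of_pos hd] at hlip
  have hleg : legendre f p ≤ K * (|p| + 1) :=
    le_of_mul_le_mul_left (hlip.trans_eq (by ring)) hd
  linarith [hle p]

lemma exists_isCharSegment (hw : IsEntropyPotential f w u quadrant) (hf : IsConvexFlux f)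
    {x t : ℝ} (hx : 0 < x) (ht : 0 < t) :
    ∃ (P : ℝ × ℝ) (p : ℝ), P.2 < t ∧ (P.1 = 0 ∨ P.2 = 0) ∧ IsCharSegment f w p P (x, t) := by
  obtain ⟨P, hP₁, hP₂, hlt, hbdry, heq⟩ := hw.exists_boundary_add_hopfLaxCost_eq hf hx ht
  have hd : t - P.2 ≠ 0 := (sub_pos.2 hlt).ne'
  refine ⟨P, (x - P.1) / (t - P.2), hlt, hbdry, hP₁, hx.le, hP₂, hlt.le, ?_, heq⟩
  field_simp
  ring

end IsEntropyPotential

/-- `P` and `Q` are joined by some genuine characteristic in the closed quadrant. -/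
def CharJoined (f : ℝ → ℝ) (w : ℝ × ℝ → ℝ) (P Q : ℝ × ℝ) : Prop :=
  ∃ p, IsCharSegment f w p P Q

namespace IsEntropyPotential

variable {f : ℝ → ℝ} {w u : ℝ × ℝ → ℝ}

lemma exists_charJoined_bound (hw : IsEntropyPotential f w u quadrant) (hf : IsConvexFlux f) :
    ∃ R, 0 ≤ R ∧ ∀ P Q, CharJoined f w P Q → |Q.1 - P.1| ≤ R * (Q.2 - P.2) := by
  obtain ⟨R, hR, hslope⟩ := hw.exists_abs_slope_le hf
  refine ⟨R, hR, fun P Q ⟨p, h⟩ ↦ ?_⟩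
  rcases h.snd_le.eq_or_lt with heq | hlt
  · simp [h.fst_eq, heq]
  · rw [h.fst_eq, add_sub_cancel_left, abs_mul, abs_of_pos (sub_pos.2 hlt)]
    exact mul_le_mul_of_nonneg_right (hslope p P Q h hlt) (sub_pos.2 hlt).le

lemma isClosed_charJoined (hw : IsEntropyPotential f w u quadrant) (hf : IsConvexFlux f) :
    IsClosed {q : (ℝ × ℝ) × (ℝ × ℝ) | CharJoined f w q.1 q.2} := by
  obtain ⟨R, hR, hslope⟩ := hw.exists_abs_slope_le hf
  obtain ⟨K, hK⟩ := hw.lipschitz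
  have hcont := hK.continuous
  have hleg := hf.continuous_legendre
  have hclosed : IsClosed {z : ((ℝ × ℝ) × (ℝ × ℝ)) × ℝ | IsCharSegment f w z.2 z.1.1 z.1.2} := by
    have : {z : ((ℝ × ℝ) × (ℝ × ℝ)) × ℝ | IsCharSegment f w z.2 z.1.1 z.1.2} =
        {z | 0 ≤ z.1.1.1} ∩ {z | 0 ≤ z.1.2.1} ∩ {z | 0 ≤ z.1.1.2} ∩ {z | z.1.1.2 ≤ z.1.2.2} ∩
          {z | z.1.2.1 = z.1.1.1 + z.2 * (z.1.2.2 - z.1.1.2)} ∩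
          {z | w z.1.2 = w z.1.1 + (z.1.2.2 - z.1.1.2) * legendre f z.2} := by
      ext z
      exact ⟨fun ⟨h₁, h₂, h₃, h₄, h₅, h₆⟩ ↦ ⟨⟨⟨⟨⟨h₁, h₂⟩, h₃⟩, h₄⟩, h₅⟩, h₆⟩,
        fun ⟨⟨⟨⟨⟨h₁, h₂⟩, h₃⟩, h₄⟩, h₅⟩, h₆⟩ ↦ ⟨h₁, h₂, h₃, h₄, h₅, h₆⟩⟩
    rw [this]
    refine .inter (.inter (.inter (.inter (.inter ?_ ?_) ?_) ?_) ?_) ?_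
    all_goals first | exact isClosed_le (by fun_prop) (by fun_prop)
                    | exact isClosed_eq (by fun_prop) (by fun_prop)
  convert isClosed_setOf_exists_mem hclosed (isCompact_Icc (a := -R) (b := R)) using 1
  ext ⟨P, Q⟩
  refine ⟨fun ⟨p, h⟩ ↦ ?_, fun ⟨p, _, h⟩ ↦ ⟨p, h⟩⟩
  change IsCharSegment f w p P Q at h
  rcases h.snd_le.eq_or_lt with heq | hlt
  · have hfst := h.fst_eq
    have hw_eq := h.eq_add
    rw [heq, sub_self] at hfst hw_eq
    exact ⟨0, ⟨neg_nonpos.2 hR, hR⟩, h.fst_nonneg_left, h.fst_nonneg_right, h.snd_nonneg_left,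
      h.snd_le, by simpa using hfst, by simpa [heq] using hw_eq⟩
  · exact ⟨p, abs_le.1 (hslope p P Q h hlt), h⟩

end IsEntropyPotential

/-- An entropy potential `w` on the quadrant together with the one-sided traces `um` and `up` of its
space derivative; on the interface `x = 0` only the trace `up` from inside exists. -/
structure IsTracedPotential (f : ℝ → ℝ) (w : ℝ × ℝ → ℝ) (um up : ℝ → ℝ → ℝ) : Prop where
  isConvexFlux : IsConvexFlux f
  exists_isEntropyPotential : ∃ u, IsEntropyPotential f w u quadrant
  hasDerivWithinAt_Ioi : ∀ {x t}, 0 ≤ x → 0 < t →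
    HasDerivWithinAt (fun y ↦ w (y, t)) (up x t) (Ioi x) x
  hasDerivWithinAt_Iio : ∀ {x t}, 0 < x → 0 < t →
    HasDerivWithinAt (fun y ↦ w (y, t)) (um x t) (Iio x) x
  tendsto_interface : ∀ {t}, 0 < t →
    Tendsto (fun x ↦ um x t) (nhdsWithin 0 (Ioi 0)) (nhds (up 0 t))

namespace IsTracedPotential

variable {f : ℝ → ℝ} {w : ℝ × ℝ → ℝ} {um up : ℝ → ℝ → ℝ} {p v : ℝ} {P Q : ℝ × ℝ}

lemma le_add_hopfLaxCost (hw : IsTracedPotential f w um up)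
    (hP : 0 ≤ P.1) (hQ : 0 ≤ Q.1) (hP' : 0 ≤ P.2) (hPQ : P.2 < Q.2) :
    w Q ≤ w P + hopfLaxCost f P Q := by
  obtain ⟨u, hu⟩ := hw.exists_isEntropyPotential
  exact hu.le_add_hopfLaxCost hw.isConvexFlux hP hQ hP' hPQ

lemma up_right_le (hw : IsTracedPotential f w um up) (h : IsCharSegment f w p P Q)
    (hlt : P.2 < Q.2) (hv : deriv f v = p) : up Q.1 Q.2 ≤ v := by
  obtain ⟨hslope, heq⟩ := h.eq_add_hopfLaxCost hlt
  have hcost := hw.isConvexFlux.hasDerivAt_hopfLaxCost_right hlt (hv.trans hslope.symm)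
  refine sub_nonneg.1 <| nonneg_of_hasDerivWithinAt_Ioi
    ((hcost.hasDerivWithinAt.const_add (w P)).sub
      
      (hw.hasDerivWithinAt_Ioi h.fst_nonneg_right (h.snd_nonneg_left.trans_lt hlt))) ?_
  filter_upwards [self_mem_nhdsWithin] with y hy
  have := hw.le_add_hopfLaxCost (Q := (y, Q.2)) h.fst_nonneg_left
    (h.fst_nonneg_right.trans (le_of_lt hy)) h.snd_nonneg_left hlt
  simp only [Pi.sub_apply]
  linarith

lemma le_um_right (hw : IsTracedPotential f w um up) (h : IsCharSegment f w p P Q)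
    (hlt : P.2 < Q.2) (hQ : 0 < Q.1) (hv : deriv f v = p) : v ≤ um Q.1 Q.2 := by
  obtain ⟨hslope, heq⟩ := h.eq_add_hopfLaxCost hlt
  have hcost := hw.isConvexFlux.hasDerivAt_hopfLaxCost_right hlt (hv.trans hslope.symm)
  refine sub_nonpos.1 <| nonpos_of_hasDerivWithinAt_Iio
    ((hcost.hasDerivWithinAt.const_add (w P)).sub
      (hw.hasDerivWithinAt_Iio hQ (h.snd_nonneg_left.trans_lt hlt))) ?_
  filter_upwards [nhdsWithin_le_nhds (lt_mem_nhds hQ)] with y hy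
  have := hw.le_add_hopfLaxCost (Q := (y, Q.2)) h.fst_nonneg_left (le_of_lt hy)
    h.snd_nonneg_left hlt
  simp only [Pi.sub_apply]
  linarith

lemma le_up_left (hw : IsTracedPotential f w um up) (h : IsCharSegment f w p P Q)
    (hlt : P.2 < Q.2) (hP : 0 < P.2) (hv : deriv f v = p) : v ≤ up P.1 P.2 := by
  obtain ⟨hslope, heq⟩ := h.eq_add_hopfLaxCost hlt
  have hcost := hw.isConvexFlux.hasDerivAt_hopfLaxCost_left hlt (hv.trans hslope.symm)
  refine le_neg_add_iff_le.1 <| nonneg_of_hasDerivWithinAt_Ioi (hcost.hasDerivWithinAt.add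
    (hw.hasDerivWithinAt_Ioi h.fst_nonneg_left hP)) ?_
  filter_upwards [self_mem_nhdsWithin] with y hy
  have := hw.le_add_hopfLaxCost (P := (y, P.2)) (h.fst_nonneg_left.trans (le_of_lt hy))
    h.fst_nonneg_right h.snd_nonneg_left hlt
  simp only [Pi.add_apply]
  linarith

lemma um_left_le (hw : IsTracedPotential f w um up) (h : IsCharSegment f w p P Q)
    (hlt : P.2 < Q.2) (hP₁ : 0 < P.1) (hP₂ : 0 < P.2) (hv : deriv f v = p) : um P.1 P.2 ≤ v := by
  obtain ⟨hslope, heq⟩ := h.eq_add_hopfLaxCost hlt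
  have hcost := hw.isConvexFlux.hasDerivAt_hopfLaxCost_left hlt (hv.trans hslope.symm)
  refine neg_add_nonpos_iff.1 <| nonpos_of_hasDerivWithinAt_Iio (hcost.hasDerivWithinAt.add
    (hw.hasDerivWithinAt_Iio hP₁ hP₂)) ?_
  filter_upwards [nhdsWithin_le_nhds (lt_mem_nhds hP₁)] with y hy
  have := hw.le_add_hopfLaxCost (P := (y, P.2)) (le_of_lt hy) h.fst_nonneg_right
    h.snd_nonneg_left hlt
  simp only [Pi.add_apply]
  linarith

lemma traces_eq_of_isCharSegment (hw : IsTracedPotential f w um up)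
    (h : IsCharSegment f w p P Q) {r : ℝ} (hr : r ∈ Ioo P.2 Q.2) (hpos : 0 < P.1 + p * (r - P.2))
    (hv : deriv f v = p) :
    um (P.1 + p * (r - P.2)) r = v ∧ up (P.1 + p * (r - P.2)) r = v := by
  obtain ⟨u, hu⟩ := hw.exists_isEntropyPotential
  obtain ⟨hleft, hright⟩ := h.split hu hw.isConvexFlux (Ioo_subset_Icc_self hr)
  have hr₀ := h.snd_nonneg_left.trans_lt hr.1
  exact ⟨le_antisymm (hw.um_left_le hright hr.2 hpos hr₀ hv) (hw.le_um_right hleft hr.1 hpos hv),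
    le_antisymm (hw.up_right_le hleft hr.1 hv) (hw.le_up_left hright hr.2 hr₀ hv)⟩

lemma exists_isCharSegment_of_traces_eq (hw : IsTracedPotential f w um up) {x t : ℝ}
    (hx : 0 < x) (ht : 0 < t) (heq : deriv f (um x t) = deriv f (up x t)) :
    ∃ P : ℝ × ℝ, P.2 < t ∧ IsCharSegment f w (deriv f (um x t)) P (x, t) := by
  obtain ⟨u, hu⟩ := hw.exists_isEntropyPotential
  have hf := hw.isConvexFlux
  obtain ⟨P, p, hlt, -, h⟩ := hu.exists_isCharSegment hf hx ht
  obtain ⟨v, hv⟩ := hf.surjective_deriv p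
  have hle : v ≤ um x t := hw.le_um_right h hlt hx hv
  have hge : um x t ≤ v :=
    (hf.strictMono_deriv.injective heq).trans_le (hw.up_right_le h hlt hv)
  rw [le_antisymm hge hle, hv]
  exact ⟨P, hlt, h⟩

/- The limit of the backward characteristics from `(x, t)` as `x → 0`: their slopes are negative, so
they cannot hit the interface. -/
lemma exists_charJoined_of_deriv_neg (hw : IsTracedPotential f w um up) {t : ℝ} (ht : 0 < t)
    (hneg : deriv f (up 0 t) < 0) : ∃ y, CharJoined f w (y, 0) (0, t) := by
  obtain ⟨u, hu⟩ := hw.exists_isEntropyPotential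
  have hf := hw.isConvexFlux
  obtain ⟨R, _, hbound⟩ := hu.exists_charJoined_bound hf
  have hclosed : IsClosed {x : ℝ | ∃ y ∈ Icc 0 (1 + R * t), CharJoined f w (y, 0) (x, t)} :=
    isClosed_setOf_exists_mem ((hu.isClosed_charJoined hf).preimage
      (f := fun z : ℝ × ℝ ↦ ((z.2, (0 : ℝ)), (z.1, t))) (by fun_prop)) isCompact_Icc
  have hev : ∀ᶠ x in nhdsWithin 0 (Ioi 0),
      x ∈ {x : ℝ | ∃ y ∈ Icc 0 (1 + R * t), CharJoined f w (y, 0) (x, t)} := by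
    filter_upwards [((hf.continuous_deriv.tendsto _).comp (hw.tendsto_interface ht)).eventually
      (gt_mem_nhds hneg), self_mem_nhdsWithin, nhdsWithin_le_nhds (gt_mem_nhds one_pos)]
      with x hx_neg hx hx_lt
    obtain ⟨P, p, hlt, hbdry, h⟩ := hu.exists_isCharSegment hf hx ht
    obtain ⟨v, hv⟩ := hf.surjective_deriv p
    have hp : p < 0 :=
      hv ▸ (hf.strictMono_deriv.monotone (hw.le_um_right h hlt hx hv)).trans_lt hx_neg
    have hP : P.1 ≠ 0 := fun h₀ ↦ by
      have := h.fst_eq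
      simp only [h₀, zero_add] at this
      exact (this ▸ mul_neg_of_neg_of_pos hp (sub_pos.2 hlt)).not_gt hx
    have hP' : P = (P.1, 0) := Prod.ext rfl (hbdry.resolve_left hP)
    refine ⟨P.1, ⟨h.fst_nonneg_left, ?_⟩, p, hP' ▸ h⟩
    have := (abs_le.1 (hbound P (x, t) ⟨p, h⟩)).1
    rw [hbdry.resolve_left hP] at this
    linarith
  obtain ⟨y, -, h⟩ := hclosed.mem_of_frequently_of_tendsto hev.frequently
    (tendsto_id.mono_left nhdsWithin_le_nhds)
  exact ⟨y, h⟩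

end IsTracedPotential

/-! ### Genuine/interface characteristics -/

lemma mul_sub_le_sub_of_ae_le_of_hasDerivAt {h : ℝ → ℝ} {a b C : ℝ} {K : NNReal} (hab : a ≤ b)
    (hlip : LipschitzOnWith K h (Icc a b))
    (hd : ∀ᵐ t, t ∈ Ioo a b → ∀ d, HasDerivAt h d t → C ≤ d) : C * (b - a) ≤ h b - h a := by
  rw [← uIcc_of_le hab] at hlip
  have hac := hlip.absolutelyContinuousOnInterval
  refine mul_sub_le_sub_of_ae_le_deriv hab hac ?_
  filter_upwards [hd, hac.ae_differentiableAt] with t ht hdiff hmem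
  exact ht hmem _ (hdiff (uIcc_of_le hab ▸ Ioo_subset_Icc_self hmem)).hasDerivAt

lemma lipschitzOnWith_along {w : ℝ × ℝ → ℝ} {K K' : NNReal} (hw : LipschitzWith K w) {ζ : ℝ → ℝ}
    {s : Set ℝ} (hζ : LipschitzOnWith K' ζ s) :
    LipschitzOnWith (K * max K' 1) (fun τ ↦ w (ζ τ, τ)) s :=
  hw.comp_lipschitzOnWith (hζ.prodMk LipschitzWith.id.lipschitzOnWith)

lemma IsCharSegment.hasDerivWithinAt_along {f : ℝ → ℝ} {w u : ℝ × ℝ → ℝ} {p : ℝ} {P Q : ℝ × ℝ}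
    (h : IsCharSegment f w p P Q) (hw : IsEntropyPotential f w u quadrant) (hf : IsConvexFlux f)
    (hlt : P.2 < Q.2) :
    HasDerivWithinAt (fun τ ↦ w (P.1 + p * (τ - P.2), τ)) (legendre f p) (Iio Q.2) Q.2 := by
  have haffine (τ : ℝ) (hτ : τ ∈ Icc P.2 Q.2) :
      w (P.1 + p * (τ - P.2), τ) = w P + (τ - P.2) * legendre f p := (h.split hw hf hτ).1.eq_add
  have hderiv : HasDerivAt (fun τ ↦ w P + (τ - P.2) * legendre f p) (legendre f p) Q.2 := by
    simpa using (((hasDerivAt_id Q.2).sub_const P.2).mul_const (legendre f p)).const_add (w P)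
  refine hderiv.hasDerivWithinAt.congr_of_eventuallyEq ?_ (haffine _ ⟨hlt.le, le_rfl⟩)
  filter_upwards [Ioo_mem_nhdsLT hlt] with τ hτ using haffine τ (Ioo_subset_Icc_self hτ)

namespace IsTracedPotential

variable {f : ℝ → ℝ} {w : ℝ × ℝ → ℝ} {um up : ℝ → ℝ → ℝ} {ζ : ℝ → ℝ}

/- Up to an error `o(r - τ)` the curve `ζ` runs along the genuine characteristic which arrives at
`(ζ r, r)` with the same slope. -/
lemma eq_legendre_of_hasDerivAt_along (hw : IsTracedPotential f w um up) {r d : ℝ} (hr : 0 < r)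
    (hpos : 0 < ζ r) (hζ : HasDerivAt ζ (deriv f (um (ζ r) r)) r)
    (heq : deriv f (um (ζ r) r) = deriv f (up (ζ r) r))
    (hd : HasDerivAt (fun τ ↦ w (ζ τ, τ)) d r) : d = legendre f (deriv f (um (ζ r) r)) := by
  obtain ⟨u, hu⟩ := hw.exists_isEntropyPotential
  obtain ⟨K, hK⟩ := hu.lipschitz
  obtain ⟨P, hlt, h⟩ := hw.exists_isCharSegment_of_traces_eq hpos hr heq
  set p := deriv f (um (ζ r) r)
  have hline := h.hasDerivWithinAt_along hu hw.isConvexFlux hlt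
  have hdiff : HasDerivAt (fun τ ↦ w (ζ τ, τ) - w (P.1 + p * (τ - P.2), τ)) 0 r := by
    rw [hasDerivAt_iff_isLittleO] at hζ ⊢
    refine (Asymptotics.IsBigO.of_bound K (Eventually.of_forall fun τ ↦ ?_)).trans_isLittleO hζ
    have hdist := abs_sub_le_of_lipschitzWith hK (ζ τ, τ) (P.1 + p * (τ - P.2), τ)
    have hfst : ζ r = P.1 + p * (r - P.2) := h.fst_eq
    have hτ : ζ τ - (P.1 + p * (τ - P.2)) = ζ τ - ζ r - (τ - r) * p := by rw [hfst]; ring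
    simpa [← hfst, hτ] using hdist
  have hsum := (hdiff.hasDerivWithinAt (s := Iio r)).add hline
  refine (uniqueDiffWithinAt_Iio r).eq_deriv _ hd.hasDerivWithinAt
    ((hsum.congr_deriv (zero_add _)).congr_of_eventuallyEq (Eventually.of_forall fun τ ↦ ?_) ?_)
  all_goals simp

/- Fenchel's inequality bounds the growth of `w - v * x` along a characteristic from below by
`-f v`, for every `v`. -/
lemma neg_le_of_hasDerivAt_along (hw : IsTracedPotential f w um up) {r d : ℝ} (hr : 0 < r)
    (hpos : 0 < ζ r) (hζ : HasDerivAt ζ (deriv f (um (ζ r) r)) r)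
    (heq : deriv f (um (ζ r) r) = deriv f (up (ζ r) r)) (v : ℝ)
    (hd : HasDerivAt (fun τ ↦ w (ζ τ, τ) - v * ζ τ) d r) : -f v ≤ d := by
  have hd' : HasDerivAt (fun τ ↦ w (ζ τ, τ)) (d + v * deriv f (um (ζ r) r)) r := by
    refine (hd.add (hζ.const_mul v)).congr_of_eventuallyEq (Eventually.of_forall fun τ ↦ ?_)
    simp
  have hleg := hw.eq_legendre_of_hasDerivAt_along hr hpos hζ heq hd'
  linarith [hw.isConvexFlux.mul_sub_le_legendre (deriv f (um (ζ r) r)) v]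

lemma charJoined_of_pos (hw : IsTracedPotential f w um up) {K : NNReal} {s t : ℝ} (hs : 0 ≤ s)
    (hst : s < t) (hζ : LipschitzOnWith K ζ (Icc s t)) (hpos : ∀ r ∈ Ioo s t, 0 < ζ r)
    (hchar : ∀ᵐ r, r ∈ Ioo s t → HasDerivAt ζ (deriv f (um (ζ r) r)) r ∧
      deriv f (um (ζ r) r) = deriv f (up (ζ r) r)) :
    CharJoined f w (ζ s, s) (ζ t, t) := by
  obtain ⟨u, hu⟩ := hw.exists_isEntropyPotential
  obtain ⟨K', hK'⟩ := hu.lipschitz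
  have hf := hw.isConvexFlux
  have hnonneg : ∀ r ∈ Icc s t, 0 ≤ ζ r := by
    rw [← closure_Ioo hst.ne] at hζ ⊢
    exact fun r hr ↦ le_on_closure (fun r hr ↦ (hpos r hr).le) continuousOn_const hζ.continuousOn hr
  have hys := hnonneg s ⟨le_rfl, hst.le⟩
  have hxt := hnonneg t ⟨hst.le, le_rfl⟩
  obtain ⟨v, hv⟩ := hf.surjective_deriv ((ζ t - ζ s) / (t - s))
  have hfst : ζ t = ζ s + deriv f v * (t - s) := by
    rw [hv]
    field_simp [(sub_pos.2 hst).ne']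
    ring
  refine ⟨deriv f v, hys, hxt, hs, hst.le, hfst,
    le_antisymm (hu.le_add_mul_legendre hf hys hxt hs hst.le hfst) ?_⟩
  have hgrowth := mul_sub_le_sub_of_ae_le_of_hasDerivAt (C := -f v) hst.le
    ((lipschitzOnWith_along hK' hζ).sub ((lipschitzWith_smul v).comp_lipschitzOnWith hζ)) (by
      filter_upwards [hchar] with r hr hmem d hd
      exact hw.neg_le_of_hasDerivAt_along (hs.trans_lt hmem.1) (hpos r hmem) (hr hmem).1
        (hr hmem).2 v hd)
  rw [hf.legendre_deriv]
  simp only [Function.comp_apply, smul_eq_mul] at hgrowth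
  linear_combination hgrowth - v * hfst

end IsTracedPotential

/-- What the definition of a genuine/interface characteristic refers to: the fluxes `fl` and `fr` on
the two sides of the interface, the value `γ` of the flux along the interface, and the one-sided
traces `um` and `up` of the solution. -/
structure GicData where
  fl : ℝ → ℝ
  fr : ℝ → ℝ
  γ : ℝ
  um : ℝ → ℝ → ℝ
  up : ℝ → ℝ → ℝ

namespace GicData

variable (D : GicData)

/-- The data transformed by the symmetry `u(x, t) ↦ -u(-x, t)`, which swaps the two sides of the
interface. -/
def mirror : GicData where
  fl v := D.fr (-v)
  fr v := D.fl (-v)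
  γ := D.γ
  um x t := -D.up (-x) t
  up x t := -D.um (-x) t

lemma mirror_mirror : D.mirror.mirror = D := by
  simp [mirror]

/-- The condition imposed at time `t` on a genuine/interface characteristic `ζ`. -/
def IsGicAt (ζ : ℝ → ℝ) (t : ℝ) : Prop :=
  (ζ t < 0 → HasDerivAt ζ (deriv D.fl (D.um (ζ t) t)) t ∧
    deriv D.fl (D.um (ζ t) t) = deriv D.fl (D.up (ζ t) t)) ∧
  (0 < ζ t → HasDerivAt ζ (deriv D.fr (D.um (ζ t) t)) t ∧
    deriv D.fr (D.um (ζ t) t) = deriv D.fr (D.up (ζ t) t)) ∧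
  (ζ t = 0 → D.fl (D.um 0 t) = D.γ ∧ D.fr (D.up 0 t) = D.γ)

/-- `ζ` is a genuine/interface characteristic on the time interval `[s, t]`. -/
def IsGicOn (ζ : ℝ → ℝ) (s t : ℝ) : Prop :=
  (∃ K, LipschitzOnWith K ζ (Icc s t)) ∧ ∀ᵐ r, r ∈ Ioo s t → D.IsGicAt ζ r

/-- Some genuine/interface characteristic leads from the point `P` to the point `Q`. -/
def GicJoined (P Q : ℝ × ℝ) : Prop :=
  ∃ ζ, D.IsGicOn ζ P.2 Q.2 ∧ ζ P.2 = P.1 ∧ ζ Q.2 = Q.1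

variable {D} {ζ ζ' : ℝ → ℝ} {s t : ℝ} {P Q R : ℝ × ℝ}

lemma IsGicAt.congr (h : D.IsGicAt ζ t) (heq : ζ' =ᶠ[nhds t] ζ) : D.IsGicAt ζ' t := by
  obtain ⟨hneg, hpos, hzero⟩ := h
  rw [IsGicAt, heq.eq_of_nhds]
  exact ⟨fun h ↦ ⟨(hneg h).1.congr_of_eventuallyEq heq, (hneg h).2⟩,
    fun h ↦ ⟨(hpos h).1.congr_of_eventuallyEq heq, (hpos h).2⟩, hzero⟩

lemma IsGicAt.mirror (h : D.IsGicAt ζ t) : D.mirror.IsGicAt (fun r ↦ -ζ r) t := by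
  obtain ⟨hneg, hpos, hzero⟩ := h
  simp only [IsGicAt, GicData.mirror, neg_neg, neg_zero, deriv_comp_neg, neg_inj, Left.neg_neg_iff,
    Left.neg_pos_iff, neg_eq_zero]
  exact ⟨fun h ↦ ⟨(hpos h).2 ▸ (hpos h).1.neg, (hpos h).2.symm⟩,
    fun h ↦ ⟨(hneg h).2 ▸ (hneg h).1.neg, (hneg h).2.symm⟩, fun h ↦ (hzero h).symm⟩

lemma IsGicOn.mono (h : D.IsGicOn ζ s t) {s' t' : ℝ} (hs : s ≤ s') (ht : t' ≤ t) :
    D.IsGicOn ζ s' t' := by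
  obtain ⟨⟨K, hK⟩, hae⟩ := h
  refine ⟨⟨K, hK.mono (Icc_subset_Icc hs ht)⟩, ?_⟩
  filter_upwards [hae] with r hr hmem using hr (Ioo_subset_Ioo hs ht hmem)

lemma IsGicOn.mirror (h : D.IsGicOn ζ s t) : D.mirror.IsGicOn (fun r ↦ -ζ r) s t := by
  obtain ⟨⟨K, hK⟩, hae⟩ := h
  refine ⟨⟨K, hK.neg⟩, ?_⟩
  filter_upwards [hae] with r hr hmem using (hr hmem).mirror

lemma GicJoined.refl (P : ℝ × ℝ) : D.GicJoined P P :=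
  ⟨fun _ ↦ P.1, ⟨⟨0, (LipschitzWith.const _).lipschitzOnWith⟩, by simp⟩, rfl, rfl⟩

lemma GicJoined.trans (h₁ : D.GicJoined P Q) (h₂ : D.GicJoined Q R) (hPQ : P.2 ≤ Q.2)
    (hQR : Q.2 ≤ R.2) : D.GicJoined P R := by
  obtain ⟨ζ₁, ⟨⟨K₁, hK₁⟩, hae₁⟩, hP, hQ₁⟩ := h₁
  obtain ⟨ζ₂, ⟨⟨K₂, hK₂⟩, hae₂⟩, hQ₂, hR⟩ := h₂
  refine ⟨fun τ ↦ ζ₁ (min τ Q.2) + ζ₂ (max τ Q.2) - Q.1, ⟨⟨K₁ * 1 + K₂ * 1 + 0, ?_⟩, ?_⟩, ?_, ?_⟩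
  · exact ((hK₁.comp (LipschitzWith.id.min_const Q.2).lipschitzOnWith
      fun τ hτ ↦ ⟨le_min hτ.1 hPQ, min_le_right _ _⟩).add
      (hK₂.comp (LipschitzWith.id.max_const Q.2).lipschitzOnWith
      fun τ hτ ↦ ⟨le_max_right _ _, max_le hτ.2 hQR⟩)).sub
      (LipschitzWith.const Q.1).lipschitzOnWith
  · filter_upwards [hae₁, hae₂, Measure.ae_ne volume Q.2] with τ hτ₁ hτ₂ hne hmem
    rcases hne.lt_or_gt with hlt | hgt
    · refine (hτ₁ ⟨hmem.1, hlt⟩).congr ?_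
      filter_upwards [gt_mem_nhds hlt] with σ hσ
      simp [min_eq_left (le_of_lt hσ), max_eq_right (le_of_lt hσ), hQ₂]
    · refine (hτ₂ ⟨hgt, hmem.2⟩).congr ?_
      filter_upwards [lt_mem_nhds hgt] with σ hσ
      simp [min_eq_right (le_of_lt hσ), max_eq_left (le_of_lt hσ), hQ₁]
  · simp [hPQ, hP, hQ₂]
  · simp [hQR, hQ₁, hR]

lemma GicJoined.mirror {y x : ℝ} (h : D.mirror.GicJoined (-y, s) (-x, t)) :
    D.GicJoined (y, s) (x, t) := by
  obtain ⟨ζ, hζ, hy, hx⟩ := h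
  refine ⟨fun r ↦ -ζ r, ?_, neg_eq_iff_eq_neg.2 hy, neg_eq_iff_eq_neg.2 hx⟩
  simpa only [mirror_mirror] using hζ.mirror

lemma GicJoined.cross {x₁ x₂ y₁ y₂ : ℝ} (hst : s ≤ t) (h₁ : D.GicJoined (y₁, s) (x₁, t))
    (h₂ : D.GicJoined (y₂, s) (x₂, t)) (hx : x₁ ≤ x₂) (hy : y₂ ≤ y₁) :
    D.GicJoined (y₂, s) (x₁, t) ∧ D.GicJoined (y₁, s) (x₂, t) := by
  obtain ⟨ζ₁, (hζ₁ : D.IsGicOn ζ₁ s t), (rfl : ζ₁ s = y₁), (rfl : ζ₁ t = x₁)⟩ := h₁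
  obtain ⟨ζ₂, (hζ₂ : D.IsGicOn ζ₂ s t), (rfl : ζ₂ s = y₂), (rfl : ζ₂ t = x₂)⟩ := h₂
  obtain ⟨K₁, hK₁⟩ := hζ₁.1
  obtain ⟨K₂, hK₂⟩ := hζ₂.1
  obtain ⟨r, hr, hzero⟩ := intermediate_value_Icc hst (hK₂.continuousOn.sub hK₁.continuousOn)
    (show (0 : ℝ) ∈ Icc (ζ₂ s - ζ₁ s) (ζ₂ t - ζ₁ t) from ⟨sub_nonpos.2 hy, sub_nonneg.2 hx⟩)
  have hmeet : ζ₂ r = ζ₁ r := sub_eq_zero.1 hzero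
  have hstart (ζ) (h : D.IsGicOn ζ s t) : D.GicJoined (ζ s, s) (ζ r, r) :=
    ⟨ζ, h.mono le_rfl hr.2, rfl, rfl⟩
  have hend (ζ) (h : D.IsGicOn ζ s t) : D.GicJoined (ζ r, r) (ζ t, t) :=
    ⟨ζ, h.mono hr.1 le_rfl, rfl, rfl⟩
  exact ⟨(hstart ζ₂ hζ₂).trans (hmeet ▸ hend ζ₁ hζ₁) hr.1 hr.2,
    (hstart ζ₁ hζ₁).trans (hmeet ▸ hend ζ₂ hζ₂) hr.1 hr.2⟩

end GicData

/-! ### Optimal paths across the interface -/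

lemma ae_uniqueDiffWithinAt_inter_Ioi (Z : Set ℝ) :
    ∀ᵐ r, r ∈ Z → UniqueDiffWithinAt ℝ (Z ∩ Ioi r) r := by
  filter_upwards [(countable_setOfPred_isolated_right_within (s := Z)).ae_notMem volume]
    with r hr hrZ
  have hdiff : (Z ∩ Ioi r) \ {r} = Z ∩ Ioi r := sdiff_singleton_eq_self fun h ↦ lt_irrefl r h.2
  rw [uniqueDiffWithinAt_iff_accPt, accPt_principal_iff_nhdsWithin, hdiff, neBot_iff]
  exact fun h ↦ hr ⟨hrZ, h⟩

/-- The mirror image of a point of space-time in the interface `x = 0`. -/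
def mirrorPt (P : ℝ × ℝ) : ℝ × ℝ := (-P.1, P.2)

lemma mirrorPt_mirrorPt (P : ℝ × ℝ) : mirrorPt (mirrorPt P) = P := by
  simp [mirrorPt]

lemma mirrorPt_comp_mirrorPt : mirrorPt ∘ mirrorPt = id :=
  funext mirrorPt_mirrorPt

lemma comp_mirrorPt_comp_mirrorPt (w : ℝ × ℝ → ℝ) : (w ∘ mirrorPt) ∘ mirrorPt = w :=
  funext fun P ↦ congrArg w (mirrorPt_mirrorPt P)

lemma continuous_mirrorPt : Continuous mirrorPt := by
  unfold mirrorPt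
  fun_prop

/-- A potential on the half plane `0 ≤ t` which is an entropy potential on both sides of the
interface; the interface conditions say that the flux through the interface is at least `γ`, and
that when it is larger than `γ` a characteristic arrives at the interface. -/
structure IsInterfacePotential (D : GicData) (w : ℝ × ℝ → ℝ) : Prop where
  right : IsTracedPotential D.fr w D.um D.up
  left : IsTracedPotential D.mirror.fr (w ∘ mirrorPt) D.mirror.um D.mirror.up
  exists_fl_eq : ∃ A, D.fl A = D.γ
  exists_fr_eq : ∃ B, D.fr B = D.γ
  flux_eq : ∀ᵐ t, 0 < t → D.fl (D.um 0 t) = D.fr (D.up 0 t)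
  le_flux : ∀ᵐ t, 0 < t → D.γ ≤ D.fr (D.up 0 t)
  incoming : ∀ᵐ t, 0 < t → D.γ < D.fr (D.up 0 t) →
    0 < deriv D.fl (D.um 0 t) ∨ deriv D.fr (D.up 0 t) < 0
  hasDerivAt_interface : ∀ᵐ t, 0 < t → HasDerivAt (fun s ↦ w (0, s)) (-D.fr (D.up 0 t)) t

/-- The interface is an optimal path from `(0, s)` to `(0, t)`. -/
def InterfaceJoined (D : GicData) (w : ℝ × ℝ → ℝ) (s t : ℝ) : Prop :=
  w (0, t) = w (0, s) - D.γ * (t - s)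

/-- `P` and `Q` are joined by a genuine characteristic on one side of the interface. -/
def SideJoined (D : GicData) (w : ℝ × ℝ → ℝ) (P Q : ℝ × ℝ) : Prop :=
  CharJoined D.fr w P Q ∨ CharJoined D.mirror.fr (w ∘ mirrorPt) (mirrorPt P) (mirrorPt Q)

/-- `P` and `Q` are joined by a genuine characteristic, or by one to the interface, a stay on the
interface and one from the interface. -/
def PathJoined (D : GicData) (w : ℝ × ℝ → ℝ) (P Q : ℝ × ℝ) : Prop :=
  SideJoined D w P Q ∨ ∃ s ∈ Icc P.2 Q.2, ∃ t ∈ Icc P.2 Q.2, s ≤ t ∧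
    SideJoined D w P (0, s) ∧ InterfaceJoined D w s t ∧ SideJoined D w (0, t) Q

/-- The primitive of the connection `c^{AB}` which vanishes on the interface. -/
def connectionPotential (A B x : ℝ) : ℝ := B * max x 0 + A * min x 0

lemma exists_lipschitzWith_connectionPotential (A B : ℝ) :
    ∃ K, LipschitzWith K (connectionPotential A B) :=
  ⟨_, ((lipschitzWith_smul B).comp (LipschitzWith.id.max_const 0)).add
    ((lipschitzWith_smul A).comp (LipschitzWith.id.min_const 0))⟩

lemma connectionPotential_neg (A B x : ℝ) :
    connectionPotential (-B) (-A) (-x) = connectionPotential A B x := by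
  have hmax : max (-x) 0 = -min x 0 := by rw [← max_neg_neg, neg_zero]
  have hmin : min (-x) 0 = -max x 0 := by rw [← min_neg_neg, neg_zero]
  rw [connectionPotential, connectionPotential, hmax, hmin]
  ring

lemma SideJoined.refl {D : GicData} {w : ℝ × ℝ → ℝ} {P : ℝ × ℝ} (hP : 0 ≤ P.2) :
    SideJoined D w P P :=
  (le_total 0 P.1).imp (fun h ↦ ⟨0, .refl h hP⟩) (fun h ↦ ⟨0, .refl (neg_nonneg.2 h) hP⟩)

lemma SideJoined.snd_le {D : GicData} {w : ℝ × ℝ → ℝ} {P Q : ℝ × ℝ} (h : SideJoined D w P Q) :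
    0 ≤ P.2 ∧ P.2 ≤ Q.2 := by
  obtain ⟨p, h⟩ | ⟨p, h⟩ := h
  all_goals exact ⟨h.snd_nonneg_left, h.snd_le⟩

lemma SideJoined.mirror {D : GicData} {w : ℝ × ℝ → ℝ} {P Q : ℝ × ℝ}
    (h : SideJoined D.mirror (w ∘ mirrorPt) (mirrorPt P) (mirrorPt Q)) : SideJoined D w P Q := by
  simpa only [SideJoined, D.mirror_mirror, comp_mirrorPt_comp_mirrorPt, mirrorPt_mirrorPt]
    using h.symm

namespace IsInterfacePotential

variable {D : GicData} {w : ℝ × ℝ → ℝ} {P Q : ℝ × ℝ} {ζ : ℝ → ℝ} {s t r : ℝ}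

lemma mirror (h : IsInterfacePotential D w) :
    IsInterfacePotential D.mirror (w ∘ mirrorPt) where
  right := h.left
  left := by simpa only [D.mirror_mirror, comp_mirrorPt_comp_mirrorPt] using h.right
  exists_fl_eq := h.exists_fr_eq.imp' Neg.neg fun B hB ↦ by simpa [GicData.mirror] using hB
  exists_fr_eq := h.exists_fl_eq.imp' Neg.neg fun A hA ↦ by simpa [GicData.mirror] using hA
  flux_eq := by
    filter_upwards [h.flux_eq] with t heq ht
    simpa [GicData.mirror] using (heq ht).symm
  le_flux := by
    filter_upwards [h.flux_eq, h.le_flux] with t heq hle ht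
    simpa [GicData.mirror, heq ht] using hle ht
  incoming := by
    filter_upwards [h.flux_eq, h.incoming] with t heq hin ht
    simpa [GicData.mirror, heq ht, deriv_comp_neg] using fun hlt ↦ (hin ht hlt).symm
  hasDerivAt_interface := by
    filter_upwards [h.flux_eq, h.hasDerivAt_interface] with t heq hderiv ht
    simpa [GicData.mirror, mirrorPt, heq ht] using hderiv ht

lemma exists_lipschitzWith (h : IsInterfacePotential D w) : ∃ K, LipschitzWith K w :=
  let ⟨_, hu⟩ := h.right.exists_isEntropyPotential
  hu.lipschitz

lemma exists_lipschitzOnWith_interface (h : IsInterfacePotential D w) :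
    ∃ K, LipschitzOnWith K (fun r ↦ w (0, r)) (Icc s t) :=
  let ⟨_, hK⟩ := h.exists_lipschitzWith
  ⟨_, lipschitzOnWith_along hK (LipschitzWith.const 0).lipschitzOnWith⟩

lemma interface_le (h : IsInterfacePotential D w) (hs : 0 ≤ s) (hst : s ≤ t) :
    w (0, t) ≤ w (0, s) - D.γ * (t - s) := by
  obtain ⟨K, hK⟩ := h.exists_lipschitzOnWith_interface (s := s) (t := t)
  have := mul_sub_le_sub_of_ae_le_of_hasDerivAt (C := D.γ) hst hK.neg (by
    filter_upwards [h.le_flux, h.hasDerivAt_interface] with r hle hderiv hmem d hd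
    have hr := hs.trans_lt hmem.1
    exact (hle hr).trans_eq (by rw [hd.unique (hderiv hr).neg, neg_neg]))
  simp only [Pi.neg_apply] at this
  linarith

lemma interfaceJoined_of_flux_le (h : IsInterfacePotential D w) (hs : 0 ≤ s) (hst : s ≤ t)
    (hle : ∀ᵐ r, r ∈ Ioo s t → D.fr (D.up 0 r) ≤ D.γ) : InterfaceJoined D w s t := by
  obtain ⟨K, hK⟩ := h.exists_lipschitzOnWith_interface (s := s) (t := t)
  have := mul_sub_le_sub_of_ae_le_of_hasDerivAt (C := -D.γ) hst hK (by
    filter_upwards [hle, h.hasDerivAt_interface] with r hle hderiv hmem d hd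
    rw [hd.unique (hderiv (hs.trans_lt hmem.1))]
    exact neg_le_neg (hle hmem))
  exact le_antisymm (h.interface_le hs hst) (by linarith)

lemma gicJoined_of_interfaceJoined (h : IsInterfacePotential D w) (hs : 0 ≤ s)
    (hst : InterfaceJoined D w s t) : D.GicJoined (0, s) (0, t) := by
  refine ⟨fun _ ↦ 0, ⟨⟨0, (LipschitzWith.const _).lipschitzOnWith⟩, ?_⟩, rfl, rfl⟩
  filter_upwards [h.flux_eq, h.hasDerivAt_interface] with r heq hderiv hmem
  have hr := hs.trans_lt hmem.1
  have haffine (τ : ℝ) (hτ : τ ∈ Ioo s t) : w (0, τ) = w (0, s) - D.γ * (τ - s) :=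
    le_antisymm (h.interface_le hs hτ.1.le) (by
      have := h.interface_le (hs.trans hτ.1.le) hτ.2.le
      rw [InterfaceJoined] at hst
      linarith)
  have hline : HasDerivAt (fun τ ↦ w (0, s) - D.γ * (τ - s)) (-D.γ) r := by
    simpa using (((hasDerivAt_id r).sub_const s).const_mul D.γ).const_sub (w (0, s))
  have hγ := (hline.congr_of_eventuallyEq (by
    filter_upwards [Ioo_mem_nhds hmem.1 hmem.2] with τ hτ using haffine τ hτ)).unique (hderiv hr)
  have hγ' := (neg_inj.1 hγ).symm
  exact ⟨fun h ↦ (lt_irrefl _ h).elim, fun h ↦ (lt_irrefl _ h).elim,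
    fun _ ↦ ⟨(heq hr).trans hγ', hγ'⟩⟩

/- A characteristic which stays on the interface has slope `0`, and `-legendre f 0` is the minimum
of the flux `f`, so it is optimal on the interface as well. -/
lemma gicJoined_of_charJoined (h : IsInterfacePotential D w) (hPQ : CharJoined D.fr w P Q) :
    D.GicJoined P Q := by
  obtain ⟨p, hp⟩ := hPQ
  rcases hp.snd_le.eq_or_lt with heq | hlt
  · obtain rfl : P = Q := Prod.ext (by simp [hp.fst_eq, heq]) heq
    exact .refl P
  by_cases hzero : P.1 = 0 ∧ Q.1 = 0
  · obtain ⟨B, hB⟩ := h.exists_fr_eq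
    have hp₀ : p = 0 := by
      have := hp.fst_eq
      rw [hzero.1, hzero.2, zero_add, zero_eq_mul] at this
      exact this.resolve_right (sub_pos.2 hlt).ne'
    have hP : P = (0, P.2) := Prod.ext hzero.1 rfl
    have hQ : Q = (0, Q.2) := Prod.ext hzero.2 rfl
    have hleg := h.right.isConvexFlux.mul_sub_le_legendre 0 B
    have heq := hp.eq_add
    rw [hp₀] at heq
    rw [hP, hQ] at heq ⊢
    refine h.gicJoined_of_interfaceJoined hp.snd_nonneg_left
      (le_antisymm (h.interface_le hp.snd_nonneg_left hlt.le) ?_)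
    nlinarith
  · obtain ⟨v, hv⟩ := h.right.isConvexFlux.surjective_deriv p
    refine ⟨fun r ↦ P.1 + p * (r - P.2), ⟨⟨‖p‖₊, LipschitzWith.lipschitzOnWith
      (.of_dist_le_mul fun a b ↦ by simp [Real.dist_eq, ← mul_sub, abs_mul])⟩,
      Eventually.of_forall fun r hr ↦ ?_⟩, by simp, hp.fst_eq.symm⟩
    have hpos := hp.fst_pos hr (not_and_or.1 hzero)
    obtain ⟨hum, hup⟩ := h.right.traces_eq_of_isCharSegment hp hr hpos hv
    refine ⟨fun h ↦ (h.not_gt hpos).elim, fun _ ↦ ?_, fun h ↦ (hpos.ne' h).elim⟩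
    rw [hum, hup, hv]
    exact ⟨by simpa using (((hasDerivAt_id r).sub_const P.2).const_mul p).const_add P.1, rfl⟩

lemma gicJoined_of_sideJoined (h : IsInterfacePotential D w) (hPQ : SideJoined D w P Q) :
    D.GicJoined P Q :=
  hPQ.elim h.gicJoined_of_charJoined fun hPQ ↦ (h.mirror.gicJoined_of_charJoined hPQ).mirror

lemma gicJoined_of_pathJoined (h : IsInterfacePotential D w) (hPQ : PathJoined D w P Q) :
    D.GicJoined P Q := by
  obtain hPQ | ⟨s, hs, t, ht, hst, hP, hmid, hQ⟩ := hPQ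
  · exact h.gicJoined_of_sideJoined hPQ
  · exact ((h.gicJoined_of_sideJoined hP).trans
      (h.gicJoined_of_interfaceJoined (hP.snd_le.1.trans hP.snd_le.2) hmid) hs.1 hst).trans
      (h.gicJoined_of_sideJoined hQ) ht.1 ht.2

lemma exists_sideJoined_bound (h : IsInterfacePotential D w) :
    ∃ R, 0 ≤ R ∧ ∀ P Q, SideJoined D w P Q → |Q.1 - P.1| ≤ R * (Q.2 - P.2) := by
  obtain ⟨u, hu⟩ := h.right.exists_isEntropyPotential
  obtain ⟨v, hv⟩ := h.left.exists_isEntropyPotential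
  obtain ⟨R, hR, hbound⟩ := hu.exists_charJoined_bound h.right.isConvexFlux
  obtain ⟨R', -, hbound'⟩ := hv.exists_charJoined_bound h.left.isConvexFlux
  refine ⟨max R R', hR.trans (le_max_left _ _), fun P Q hPQ ↦ ?_⟩
  have hd := sub_nonneg.2 hPQ.snd_le.2
  rcases hPQ with hPQ | hPQ
  · exact (hbound P Q hPQ).trans (mul_le_mul_of_nonneg_right (le_max_left _ _) hd)
  · have hmirror : |Q.1 - P.1| = |(mirrorPt Q).1 - (mirrorPt P).1| := by
      rw [abs_sub_comm, mirrorPt, mirrorPt, neg_sub_neg]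
    exact (hmirror.trans_le (hbound' _ _ hPQ)).trans
      (mul_le_mul_of_nonneg_right (le_max_right _ _) hd)

lemma isClosed_sideJoined (h : IsInterfacePotential D w) :
    IsClosed {q : (ℝ × ℝ) × (ℝ × ℝ) | SideJoined D w q.1 q.2} := by
  obtain ⟨u, hu⟩ := h.right.exists_isEntropyPotential
  obtain ⟨v, hv⟩ := h.left.exists_isEntropyPotential
  exact (hu.isClosed_charJoined h.right.isConvexFlux).union
    ((hv.isClosed_charJoined h.left.isConvexFlux).preimage
      (continuous_mirrorPt.prodMap continuous_mirrorPt))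

lemma isClosed_setOf_sideJoined (h : IsInterfacePotential D w) {X : Type*} [TopologicalSpace X]
    {F G : X → ℝ × ℝ} (hF : Continuous F) (hG : Continuous G) :
    IsClosed {x | SideJoined D w (F x) (G x)} :=
  h.isClosed_sideJoined.preimage (hF.prodMk hG)

lemma exists_sideJoined_of_lt_flux (h : IsInterfacePotential D w) :
    ∀ᵐ t, 0 < t → D.γ < D.fr (D.up 0 t) → ∃ y, SideJoined D w (y, 0) (0, t) := by
  filter_upwards [h.incoming] with t hin ht hlt
  rcases hin ht hlt with hneg | hneg
  · obtain ⟨y, hy⟩ := h.left.exists_charJoined_of_deriv_neg ht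
      (by simpa [GicData.mirror, deriv_comp_neg] using hneg)
    exact ⟨-y, Or.inr (by simpa [mirrorPt] using hy)⟩
  · exact (h.right.exists_charJoined_of_deriv_neg ht hneg).imp fun y ↦ Or.inl

/- Follow the interface backwards until the last time at which a characteristic issued at time `0`
arrives at it. -/
lemma exists_interfaceJoined (h : IsInterfacePotential D w) (ht : 0 ≤ t) :
    ∃ s y, s ∈ Icc 0 t ∧ SideJoined D w (y, 0) (0, s) ∧ InterfaceJoined D w s t := by
  obtain ⟨R, hR, hbound⟩ := h.exists_sideJoined_bound
  set S := {s | ∃ y ∈ Icc (-(R * t)) (R * t), SideJoined D w (y, 0) (0, s)}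
  have hS : IsClosed S := isClosed_setOf_exists_mem
    (h.isClosed_setOf_sideJoined (F := fun z : ℝ × ℝ ↦ (z.2, 0)) (G := fun z ↦ (0, z.1))
      (by fun_prop) (by fun_prop)) isCompact_Icc
  have hcompact : IsCompact (Icc 0 t ∩ S) := isCompact_Icc.inter_right hS
  have hmem {s y : ℝ} (hs : s ≤ t) (hy : SideJoined D w (y, 0) (0, s)) : s ∈ Icc 0 t ∩ S := by
    refine ⟨⟨hy.snd_le.2, hs⟩, y, abs_le.1 ?_, hy⟩
    simpa using (hbound _ _ hy).trans (mul_le_mul_of_nonneg_left (by simpa using hs) hR)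
  have hlast := hcompact.sSup_mem ⟨0, hmem ht (.refl le_rfl)⟩
  obtain ⟨⟨hs, hst⟩, y, -, hy⟩ := hlast
  refine ⟨sSup (Icc 0 t ∩ S), y, ⟨hs, hst⟩, hy, h.interfaceJoined_of_flux_le hs hst ?_⟩
  filter_upwards [h.exists_sideJoined_of_lt_flux] with r hr hrmem
  by_contra! hlt
  obtain ⟨z, hz⟩ := hr (hs.trans_lt hrmem.1) hlt
  exact (le_csSup hcompact.bddAbove (hmem hrmem.2.le hz)).not_gt hrmem.1

lemma exists_boundary_sideJoined (h : IsInterfacePotential D w) {x : ℝ} (ht : 0 < t) :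
    ∃ P : ℝ × ℝ, (P.1 = 0 ∨ P.2 = 0) ∧ SideJoined D w P (x, t) := by
  rcases lt_trichotomy x 0 with hx | rfl | hx
  · obtain ⟨v, hv⟩ := h.left.exists_isEntropyPotential
    obtain ⟨P, p, -, hbdry, hP⟩ := hv.exists_isCharSegment h.left.isConvexFlux (neg_pos.2 hx) ht
    exact ⟨mirrorPt P, by simpa [mirrorPt] using hbdry,
      Or.inr ⟨p, by rwa [mirrorPt_mirrorPt]⟩⟩
  · exact ⟨(0, t), Or.inl rfl, .refl ht.le⟩
  · obtain ⟨u, hu⟩ := h.right.exists_isEntropyPotential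
    obtain ⟨P, p, -, hbdry, hP⟩ := hu.exists_isCharSegment h.right.isConvexFlux hx ht
    exact ⟨P, hbdry, Or.inl ⟨p, hP⟩⟩

lemma exists_pathJoined (h : IsInterfacePotential D w) (ht : 0 < t) (x : ℝ) :
    ∃ y, PathJoined D w (y, 0) (x, t) := by
  obtain ⟨⟨y, s⟩, rfl | rfl, hP⟩ := h.exists_boundary_sideJoined (x := x) ht
  · have hs := hP.snd_le
    obtain ⟨r, y, hr, hy, hmid⟩ := h.exists_interfaceJoined hs.1
    exact ⟨y, Or.inr ⟨r, ⟨hr.1, hr.2.trans hs.2⟩, s, hs, hr.2, hy, hmid, hP⟩⟩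
  · exact ⟨y, Or.inl hP⟩

lemma isCompact_setOf_pathJoined (h : IsInterfacePotential D w) (x T : ℝ) :
    IsCompact {y | PathJoined D w (y, 0) (x, T)} := by
  obtain ⟨K, hK⟩ := h.exists_lipschitzWith
  obtain ⟨R, hR, hbound⟩ := h.exists_sideJoined_bound
  have hcont := hK.continuous
  have hside : IsClosed {y : ℝ | SideJoined D w (y, 0) (x, T)} :=
    h.isClosed_setOf_sideJoined (by fun_prop) (by fun_prop)
  have hvia : IsClosed {z : (ℝ × ℝ) × ℝ | z.1.2 ≤ z.2 ∧ SideJoined D w (z.1.1, 0) (0, z.1.2) ∧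
      InterfaceJoined D w z.1.2 z.2 ∧ SideJoined D w (0, z.2) (x, T)} := by
    refine (isClosed_le (by fun_prop) (by fun_prop)).and <|
      (h.isClosed_setOf_sideJoined (by fun_prop) (by fun_prop)).and <| IsClosed.and ?_ <|
        h.isClosed_setOf_sideJoined (by fun_prop) (by fun_prop)
    unfold InterfaceJoined
    exact isClosed_eq (by fun_prop) (by fun_prop)
  have hclosed : IsClosed {y | PathJoined D w (y, 0) (x, T)} := hside.union <|
    isClosed_setOf_exists_mem (isClosed_setOf_exists_mem hvia (isCompact_Icc (a := 0) (b := T)))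
      (isCompact_Icc (a := 0) (b := T))
  refine (isCompact_Icc (a := -(|x| + R * T)) (b := |x| + R * T)).of_isClosed_subset hclosed ?_
  rintro y (hy | ⟨s, -, t, -, hst, hy, -, hx⟩)
  all_goals refine abs_le.1 ?_
  · have hdist := hbound _ _ hy
    have := abs_sub_abs_le_abs_sub y x
    rw [abs_sub_comm] at this
    linarith
  · have hdist := hbound _ _ hy
    have hmono := mul_le_mul_of_nonneg_left (hst.trans hx.snd_le.2) hR
    rw [zero_sub, abs_neg] at hdist
    linarith [abs_nonneg x]

lemma sideJoined_of_pos (h : IsInterfacePotential D w) (hs : 0 ≤ s) (hst : s < t)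
    (hζ : D.IsGicOn ζ s t) (hpos : ∀ r ∈ Ioo s t, 0 < ζ r) :
    SideJoined D w (ζ s, s) (ζ t, t) := by
  obtain ⟨⟨K, hK⟩, hae⟩ := hζ
  refine Or.inl (h.right.charJoined_of_pos hs hst hK hpos ?_)
  filter_upwards [hae] with r hr hmem using (hr hmem).2.1 (hpos r hmem)

lemma sideJoined_of_ne_zero (h : IsInterfacePotential D w) (hs : 0 ≤ s) (hst : s ≤ t)
    (hζ : D.IsGicOn ζ s t) (hne : ∀ r ∈ Ioo s t, ζ r ≠ 0) :
    SideJoined D w (ζ s, s) (ζ t, t) := by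
  rcases hst.eq_or_lt with rfl | hst
  · exact .refl hs
  obtain ⟨K, hK⟩ := hζ.1
  have hsign : (∀ r ∈ Ioo s t, 0 < ζ r) ∨ ∀ r ∈ Ioo s t, ζ r < 0 := by
    by_contra! hcon
    obtain ⟨⟨r₁, hr₁, hle⟩, r₂, hr₂, hge⟩ := hcon
    obtain ⟨r, hr, hzero⟩ := isPreconnected_Ioo.intermediate_value hr₁ hr₂
      (hK.continuousOn.mono Ioo_subset_Icc_self) ⟨hle, hge⟩
    exact hne r hr hzero
  rcases hsign with hpos | hneg
  · exact h.sideJoined_of_pos hs hst hζ hpos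
  · exact (h.mirror.sideJoined_of_pos hs hst hζ.mirror fun r hr ↦ neg_pos.2 (hneg r hr)).mirror

lemma neg_le_of_pos (h : IsInterfacePotential D w) {A B d : ℝ} (hB : D.fr B = D.γ) (hr : 0 < r)
    (hζ : D.IsGicAt ζ r) (hpos : 0 < ζ r)
    (hd : HasDerivAt (fun τ ↦ w (ζ τ, τ) - connectionPotential A B (ζ τ)) d r) : -D.γ ≤ d := by
  obtain ⟨hderiv, heq⟩ := hζ.2.1 hpos
  rw [← hB]
  refine h.right.neg_le_of_hasDerivAt_along hr hpos hderiv heq B (hd.congr_of_eventuallyEq ?_)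
  filter_upwards [hderiv.continuousAt.eventually (lt_mem_nhds hpos)] with τ hτ
  simp [connectionPotential, max_eq_left hτ.le, min_eq_right hτ.le]

lemma neg_le_of_neg (h : IsInterfacePotential D w) {A B d : ℝ} (hA : D.fl A = D.γ) (hr : 0 < r)
    (hζ : D.IsGicAt ζ r) (hneg : ζ r < 0)
    (hd : HasDerivAt (fun τ ↦ w (ζ τ, τ) - connectionPotential A B (ζ τ)) d r) : -D.γ ≤ d := by
  refine h.mirror.neg_le_of_pos (A := -B) (B := -A) (by simpa [GicData.mirror] using hA) hr
    hζ.mirror (neg_pos.2 hneg) ?_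
  simpa only [connectionPotential_neg, Function.comp_apply, mirrorPt, neg_neg] using hd

/- Along a genuine/interface characteristic `w - connectionPotential A B` decreases at most at the
rate `γ`; while on the interface this is seen by differentiating along the zeros of `ζ`. -/
lemma interfaceJoined_of_eq_zero (h : IsInterfacePotential D w) (hs : 0 ≤ s) (hst : s ≤ t)
    (hζ : D.IsGicOn ζ s t) (hζs : ζ s = 0) (hζt : ζ t = 0) : InterfaceJoined D w s t := by
  obtain ⟨A, hA⟩ := h.exists_fl_eq
  obtain ⟨B, hB⟩ := h.exists_fr_eq
  obtain ⟨K, hK⟩ := h.exists_lipschitzWith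
  obtain ⟨⟨K', hK'⟩, hae⟩ := hζ
  obtain ⟨K'', hK''⟩ := exists_lipschitzWith_connectionPotential A B
  have hgrowth := mul_sub_le_sub_of_ae_le_of_hasDerivAt (C := -D.γ) hst
    ((lipschitzOnWith_along hK hK').sub (hK''.comp_lipschitzOnWith hK')) (by
      filter_upwards [hae, ae_uniqueDiffWithinAt_inter_Ioi {r | ζ r = 0}, h.hasDerivAt_interface]
        with r hgic hunique hderiv hmem d hd
      have hr := hs.trans_lt hmem.1
      rcases lt_trichotomy (ζ r) 0 with hneg | hzero | hpos
      · exact h.neg_le_of_neg hA hr (hgic hmem) hneg hd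
      · have hflux := ((hgic hmem).2.2 hzero).2
        have hd' : HasDerivWithinAt (fun τ ↦ w (0, τ)) d ({r | ζ r = 0} ∩ Ioi r) r :=
          hd.hasDerivWithinAt.congr
            (fun q hq ↦ by simp [connectionPotential, show ζ q = 0 from hq.1])
            (by simp [connectionPotential, hzero])
        rw [(hunique hzero).eq_deriv _ hd' (hderiv hr).hasDerivWithinAt, hflux]
      · exact h.neg_le_of_pos hB hr (hgic hmem) hpos hd)
  refine le_antisymm (h.interface_le hs hst) ?_
  simp only [Function.comp_apply, hζs, hζt, connectionPotential, max_self, min_self, mul_zero,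
    add_zero, sub_zero] at hgrowth
  linarith

lemma pathJoined_of_gicJoined (h : IsInterfacePotential D w) (hP : 0 ≤ P.2) (hPQ : P.2 ≤ Q.2)
    (hgic : D.GicJoined P Q) : PathJoined D w P Q := by
  obtain ⟨y, s⟩ := P
  obtain ⟨x, t⟩ := Q
  obtain ⟨ζ, (hζ : D.IsGicOn ζ s t), (rfl : ζ s = y), (rfl : ζ t = x)⟩ := hgic
  obtain ⟨K, hK⟩ := hζ.1
  set Z := Icc s t ∩ ζ ⁻¹' {0}
  have hZ : IsCompact Z := isCompact_Icc.of_isClosed_subset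
    (hK.continuousOn.preimage_isClosed_of_isClosed isClosed_Icc isClosed_singleton)
    inter_subset_left
  rcases Z.eq_empty_or_nonempty with hempty | hne
  · exact Or.inl (h.sideJoined_of_ne_zero hP hPQ hζ fun r hr hzero ↦
      (hempty ▸ (⟨Ioo_subset_Icc_self hr, hzero⟩ : r ∈ Z) : r ∈ (∅ : Set ℝ)))
  obtain ⟨hfirst, hfirst_zero : ζ (sInf Z) = 0⟩ := hZ.sInf_mem hne
  obtain ⟨hlast, hlast_zero : ζ (sSup Z) = 0⟩ := hZ.sSup_mem hne
  have hle : sInf Z ≤ sSup Z := csInf_le hZ.bddBelow (hZ.sSup_mem hne)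
  refine Or.inr ⟨_, hfirst, _, hlast, hle, ?_, ?_, ?_⟩
  · have := h.sideJoined_of_ne_zero hP hfirst.1 (hζ.mono le_rfl hfirst.2) fun r hr hzero ↦
      hr.2.not_ge (csInf_le hZ.bddBelow ⟨⟨hr.1.le, hr.2.le.trans hfirst.2⟩, hzero⟩)
    rwa [hfirst_zero] at this
  · exact h.interfaceJoined_of_eq_zero (hP.trans hfirst.1) hle (hζ.mono hfirst.1 hlast.2)
      hfirst_zero hlast_zero
  · have := h.sideJoined_of_ne_zero (hP.trans hlast.1) hlast.2 (hζ.mono hlast.1 le_rfl)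
      fun r hr hzero ↦
        hr.1.not_ge (le_csSup hZ.bddAbove ⟨⟨hlast.1.trans hr.1.le, hr.2.le⟩, hzero⟩)
    rwa [hlast_zero] at this

lemma exists_gicJoined (h : IsInterfacePotential D w) (ht : 0 < t) (x : ℝ) :
    ∃ y, D.GicJoined (y, 0) (x, t) :=
  (h.exists_pathJoined ht x).imp fun _ ↦ h.gicJoined_of_pathJoined

lemma isCompact_setOf_gicJoined (h : IsInterfacePotential D w) (ht : 0 ≤ t) (x : ℝ) :
    IsCompact {y | D.GicJoined (y, 0) (x, t)} := by
  convert h.isCompact_setOf_pathJoined x t using 3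
  exact ⟨h.pathJoined_of_gicJoined le_rfl ht, h.gicJoined_of_pathJoined⟩

end IsInterfacePotential

/-! ### Dissipative pairs -/

section SmoothPlateau

/-- A smooth approximation, as `δ → 0`, of the indicator function of the interval from `a` to
`c`. -/
def smoothPlateau (a c δ y : ℝ) : ℝ :=
  Real.smoothTransition ((y - a) / δ) - Real.smoothTransition ((y - c) / δ)

variable {a c δ y L₁ L₂ M : ℝ} {g : ℝ → ℝ}

lemma contDiff_smoothPlateau : ContDiff ℝ 1 (smoothPlateau a c δ) := by
  have h (b : ℝ) : ContDiff ℝ 1 fun y ↦ Real.smoothTransition ((y - b) / δ) :=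
    Real.smoothTransition.contDiff.comp (by fun_prop)
  exact (h a).sub (h c)

lemma smoothPlateau_nonneg (hac : a ≤ c) (hδ : 0 < δ) (y : ℝ) : 0 ≤ smoothPlateau a c δ y :=
  sub_nonneg.2 (Real.smoothTransition.monotone (by gcongr))

lemma abs_smoothPlateau_le_one (a c δ y : ℝ) : |smoothPlateau a c δ y| ≤ 1 :=
  abs_sub_le_of_le_of_le (Real.smoothTransition.nonneg _) (Real.smoothTransition.le_one _)
    (Real.smoothTransition.nonneg _) (Real.smoothTransition.le_one _) |>.trans_eq (by ring)

lemma tsupport_smoothPlateau_subset (hac : a ≤ c) (hδ : 0 < δ) :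
    tsupport (smoothPlateau a c δ) ⊆ Icc a (c + δ) := by
  refine closure_minimal (fun y hy ↦ ?_) isClosed_Icc
  contrapose! hy
  rw [Function.notMem_support, smoothPlateau, sub_eq_zero]
  rcases not_and_or.1 hy with hlt | hlt <;> rw [not_le] at hlt
  · rw [Real.smoothTransition.zero_of_nonpos (div_nonpos_of_nonpos_of_nonneg (by linarith) hδ.le),
      Real.smoothTransition.zero_of_nonpos (div_nonpos_of_nonpos_of_nonneg (by linarith) hδ.le)]
  · rw [Real.smoothTransition.one_of_one_le ((one_le_div hδ).2 (by linarith)),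
      Real.smoothTransition.one_of_one_le ((one_le_div hδ).2 (by linarith))]

lemma hasCompactSupport_smoothPlateau (hac : a ≤ c) (hδ : 0 < δ) :
    HasCompactSupport (smoothPlateau a c δ) :=
  isCompact_Icc.of_isClosed_subset (isClosed_tsupport _) (tsupport_smoothPlateau_subset hac hδ)

lemma deriv_smoothTransition_eq_zero {s : ℝ} (hs : s ∉ Ioo 0 1) :
    deriv Real.smoothTransition s = 0 := by
  rcases not_and_or.1 hs with hs | hs <;> rw [not_lt] at hs
  · exact IsLocalMin.deriv_eq_zero <| .of_forall fun r ↦ by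
      simpa [Real.smoothTransition.zero_of_nonpos hs] using Real.smoothTransition.nonneg r
  · exact IsLocalMax.deriv_eq_zero <| .of_forall fun r ↦ by
      simpa [Real.smoothTransition.one_of_one_le hs] using Real.smoothTransition.le_one r

lemma integrable_deriv_smoothTransition : Integrable (deriv Real.smoothTransition) :=
  (Real.smoothTransition.contDiff.continuous_deriv le_rfl).integrable_of_hasCompactSupport <|
    HasCompactSupport.intro isCompact_Icc fun _ hs ↦
      deriv_smoothTransition_eq_zero fun hmem ↦ hs (Ioo_subset_Icc_self hmem)

lemma integral_deriv_smoothTransition : ∫ s, deriv Real.smoothTransition s = 1 := by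
  have hzero : Tendsto Real.smoothTransition atBot (nhds 0) :=
    tendsto_const_nhds.congr' <| (eventually_le_atBot 0).mono fun _ hs ↦
      (Real.smoothTransition.zero_of_nonpos hs).symm
  have hone : Tendsto Real.smoothTransition atTop (nhds 1) :=
    tendsto_const_nhds.congr' <| (eventually_ge_atTop 1).mono fun _ hs ↦
      (Real.smoothTransition.one_of_one_le hs).symm
  rw [integral_of_hasDerivAt_of_tendsto
    (fun s ↦ (Real.smoothTransition.contDiff.differentiable one_ne_zero s).hasDerivAt)
    integrable_deriv_smoothTransition hzero hone, sub_zero]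

lemma integrable_deriv_smoothTransition_mul (hg : Measurable g) (hM : ∀ y, |g y| ≤ M) :
    Integrable fun s ↦ deriv Real.smoothTransition s * g s :=
  integrable_deriv_smoothTransition.mul_bdd hg.aestronglyMeasurable (.of_forall hM)

lemma integral_inv_mul_comp_sub_div (F : ℝ → ℝ) (b : ℝ) (hδ : 0 < δ) :
    ∫ y, δ⁻¹ * F ((y - b) / δ) = ∫ s, F s := by
  rw [integral_const_mul, integral_sub_right_eq_self fun y ↦ F (y / δ),
    Measure.integral_comp_div F δ, abs_of_pos hδ, smul_eq_mul, inv_mul_cancel_left₀ hδ.ne']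

lemma integral_deriv_smoothPlateau_mul (hg : Measurable g) (hM : ∀ y, |g y| ≤ M) (hδ : 0 < δ) :
    ∫ y, deriv (smoothPlateau a c δ) y * g y =
      ∫ s, deriv Real.smoothTransition s * (g (a + δ * s) - g (c + δ * s)) := by
  let F : ℝ → ℝ → ℝ := fun b s ↦ deriv Real.smoothTransition s * g (b + δ * s)
  have hF (b : ℝ) : Integrable (F b) :=
    integrable_deriv_smoothTransition_mul (g := fun s ↦ g (b + δ * s)) (by fun_prop) fun _ ↦ hM _
  have hF' (b : ℝ) : Integrable fun y ↦ δ⁻¹ * F b ((y - b) / δ) :=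
    (((hF b).comp_div hδ.ne').comp_sub_right b).const_mul _
  have hderiv (b y : ℝ) : HasDerivAt (fun y ↦ Real.smoothTransition ((y - b) / δ))
      (deriv Real.smoothTransition ((y - b) / δ) * (1 / δ)) y :=
    (Real.smoothTransition.contDiff.differentiable one_ne_zero _).hasDerivAt.comp y
      (((hasDerivAt_id y).sub_const b).div_const δ)
  have hsub (y : ℝ) : deriv (smoothPlateau a c δ) y * g y =
      δ⁻¹ * F a ((y - a) / δ) - δ⁻¹ * F c ((y - c) / δ) := by
    have hrescale (b : ℝ) : b + δ * ((y - b) / δ) = y := by field_simp; ring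
    have hplateau : HasDerivAt (smoothPlateau a c δ) _ y := (hderiv a y).sub (hderiv c y)
    rw [hplateau.deriv]
    simp only [F, hrescale]
    ring
  simp only [hsub, mul_sub]
  rw [integral_sub (hF' a) (hF' c), integral_inv_mul_comp_sub_div _ _ hδ,
    integral_inv_mul_comp_sub_div _ _ hδ, ← integral_sub (hF a) (hF c)]

lemma abs_integral_deriv_smoothPlateau_mul_le (hg : Measurable g) (hM : ∀ y, |g y| ≤ M)
    (hδ : 0 < δ) : |∫ y, deriv (smoothPlateau a c δ) y * g y| ≤
      ∫ s, |deriv Real.smoothTransition s| * (M + M) := by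
  rw [integral_deriv_smoothPlateau_mul hg hM hδ, ← Real.norm_eq_abs]
  refine norm_integral_le_of_norm_le (integrable_deriv_smoothTransition.abs.mul_const _)
    (.of_forall fun s ↦ ?_)
  rw [Real.norm_eq_abs, abs_mul]
  gcongr
  exact (abs_sub _ _).trans (add_le_add (hM _) (hM _))

lemma tendsto_integral_deriv_smoothPlateau_mul (hg : Measurable g) (hM : ∀ y, |g y| ≤ M)
    {a c : ℝ → ℝ}
    (ha : ∀ s ∈ Ioo (0 : ℝ) 1, Tendsto (fun δ ↦ g (a δ + δ * s)) (nhdsWithin 0 (Ioi 0)) (nhds L₁))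
    (hc : ∀ s ∈ Ioo (0 : ℝ) 1, Tendsto (fun δ ↦ g (c δ + δ * s)) (nhdsWithin 0 (Ioi 0)) (nhds L₂)) :
    Tendsto (fun δ ↦ ∫ y, deriv (smoothPlateau (a δ) (c δ) δ) y * g y) (nhdsWithin 0 (Ioi 0))
      (nhds (L₁ - L₂)) := by
  have hlim : ∫ s, deriv Real.smoothTransition s * (L₁ - L₂) = L₁ - L₂ := by
    rw [integral_mul_const, integral_deriv_smoothTransition, one_mul]
  rw [← hlim]
  refine Tendsto.congr' (eventually_mem_nhdsWithin.mono fun δ hδ ↦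
    (integral_deriv_smoothPlateau_mul hg hM hδ).symm) ?_
  refine tendsto_integral_filter_of_dominated_convergence
    (fun s ↦ |deriv Real.smoothTransition s| * (M + M)) (.of_forall fun δ ↦ ?_)
    (.of_forall fun δ ↦ .of_forall fun s ↦ ?_)
    (integrable_deriv_smoothTransition.abs.mul_const _) (.of_forall fun s ↦ ?_)
  · exact ((measurable_deriv _).mul (by fun_prop)).aestronglyMeasurable
  · rw [Real.norm_eq_abs, abs_mul]
    gcongr
    exact (abs_sub _ _).trans (add_le_add (hM _) (hM _))
  · by_cases hs : s ∈ Ioo 0 1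
    · exact ((ha s hs).sub (hc s hs)).const_mul _
    · simp [deriv_smoothTransition_eq_zero hs]

lemma tendsto_smoothTransition_sub_div {b : ℝ → ℝ} {b₀ : ℝ}
    (hb : Tendsto b (nhdsWithin 0 (Ioi 0)) (nhds b₀)) (hy : y ≠ b₀) :
    Tendsto (fun δ ↦ Real.smoothTransition ((y - b δ) / δ)) (nhdsWithin 0 (Ioi 0))
      (nhds ((Ioi b₀).indicator 1 y)) := by
  have hδ : Tendsto (fun δ : ℝ ↦ δ) (nhdsWithin 0 (Ioi 0)) (nhds 0) := nhdsWithin_le_nhds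
  refine tendsto_const_nhds.congr' ?_
  rcases hy.lt_or_gt with hlt | hgt
  · filter_upwards [hb.eventually (lt_mem_nhds hlt), self_mem_nhdsWithin] with δ hbδ hδ
    rw [indicator_of_notMem (notMem_Ioi.2 hlt.le), Real.smoothTransition.zero_of_nonpos
      (div_nonpos_of_nonpos_of_nonneg (by linarith) (le_of_lt hδ))]
  · filter_upwards [(hb.add hδ).eventually (gt_mem_nhds (by simpa using hgt)),
      self_mem_nhdsWithin] with δ hbδ hδ
    rw [indicator_of_mem (mem_Ioi.2 hgt), Pi.one_apply, Real.smoothTransition.one_of_one_le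
      ((one_le_div hδ).2 (by linarith))]

lemma tendsto_integral_smoothPlateau_mul (hg : Measurable g) (hM : ∀ y, |g y| ≤ M) {a c : ℝ → ℝ}
    {a₀ c₀ : ℝ} (ha : Tendsto a (nhdsWithin 0 (Ioi 0)) (nhds a₀))
    (hc : Tendsto c (nhdsWithin 0 (Ioi 0)) (nhds c₀)) (hac : ∀ δ, 0 < δ → a δ ≤ c δ) :
    Tendsto (fun δ ↦ ∫ y, smoothPlateau (a δ) (c δ) δ y * g y) (nhdsWithin 0 (Ioi 0))
      (nhds (∫ y in a₀..c₀, g y)) := by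
  have hac₀ : a₀ ≤ c₀ := le_of_tendsto_of_tendsto ha hc (eventually_mem_nhdsWithin.mono hac)
  have hδ : Tendsto (fun δ : ℝ ↦ δ) (nhdsWithin 0 (Ioi 0)) (nhds 0) := nhdsWithin_le_nhds
  rw [intervalIntegral.integral_of_le hac₀, ← integral_indicator measurableSet_Ioc]
  refine tendsto_integral_filter_of_dominated_convergence
    ((Icc (a₀ - 1) (c₀ + 1)).indicator fun _ ↦ M) (.of_forall fun δ ↦ ?_) ?_
    ((integrable_indicator_iff measurableSet_Icc).2 (integrableOn_const (by simp))) ?_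
  · exact (contDiff_smoothPlateau.continuous.measurable.mul hg).aestronglyMeasurable
  · filter_upwards [eventually_mem_nhdsWithin, ha.eventually (lt_mem_nhds (sub_one_lt a₀)),
      (hc.add hδ).eventually (gt_mem_nhds (by simp : c₀ + 0 < c₀ + 1))] with δ hδ haδ hcδ
    refine .of_forall fun y ↦ ?_
    by_cases hy : smoothPlateau (a δ) (c δ) δ y = 0
    · rw [hy, zero_mul, norm_zero]
      exact indicator_nonneg (fun _ _ ↦ (abs_nonneg _).trans (hM 0)) y
    · have hmem := tsupport_smoothPlateau_subset (hac δ hδ) hδ (subset_tsupport _ hy)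
      have hmem' : y ∈ Icc (a₀ - 1) (c₀ + 1) := ⟨by linarith [hmem.1], by linarith [hmem.2]⟩
      rw [indicator_of_mem hmem', Real.norm_eq_abs, abs_mul]
      exact (mul_le_of_le_one_left (abs_nonneg _) (abs_smoothPlateau_le_one _ _ _ _)).trans (hM y)
  · filter_upwards [Measure.ae_ne volume a₀, Measure.ae_ne volume c₀] with y hya hyc
    have hstep : ((Ioi a₀).indicator 1 y - (Ioi c₀).indicator 1 y) * g y =
        (Ioc a₀ c₀).indicator g y := by
      rw [← Ioi_sdiff_Ioi, indicator_sdiff (Ioi_subset_Ioi hac₀)]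
      by_cases ha : a₀ < y <;> by_cases hc : c₀ < y <;> simp [indicator, ha, hc]
    exact hstep ▸ ((tendsto_smoothTransition_sub_div ha hya).sub
      (tendsto_smoothTransition_sub_div hc hyc)).mul_const (g y)

end SmoothPlateau

lemma abs_integral_mul_le {α : Type*} {ρ : ℝ → ℝ} (hρ : Continuous ρ)
    (hρ_supp : HasCompactSupport ρ) {g : α → ℝ → ℝ} {M : ℝ} (hM : ∀ i x, |g i x| ≤ M) (i : α) :
    |∫ x, ρ x * g i x| ≤ ∫ x, |ρ x| * M := by
  rw [← Real.norm_eq_abs]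
  refine norm_integral_le_of_norm_le
    ((hρ.integrable_of_hasCompactSupport (μ := volume) hρ_supp).abs.mul_const M)
    (.of_forall fun x ↦ ?_)
  rw [Real.norm_eq_abs, abs_mul]
  gcongr
  exact hM i x

lemma integrable_product_mul {ψ b : ℝ → ℝ} (hψ : Continuous ψ) (hψ_supp : HasCompactSupport ψ)
    (hb : Continuous b) (hb_supp : HasCompactSupport b) {g : ℝ × ℝ → ℝ} (hg : Measurable g) {M : ℝ}
    (hM : ∀ P, |g P| ≤ M) : Integrable fun P : ℝ × ℝ ↦ ψ P.1 * b P.2 * g P :=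
  ((hψ.integrable_of_hasCompactSupport hψ_supp).mul_prod
    (hb.integrable_of_hasCompactSupport hb_supp)).mul_bdd hg.aestronglyMeasurable (.of_forall hM)

lemma fderiv_product_apply {ψ b : ℝ → ℝ} (hψ : Differentiable ℝ ψ) (hb : Differentiable ℝ b)
    (P V : ℝ × ℝ) : fderiv ℝ (fun P : ℝ × ℝ ↦ ψ P.1 * b P.2) P V =
      deriv ψ P.1 * b P.2 * V.1 + ψ P.1 * deriv b P.2 * V.2 := by
  have hψP := (hψ P.1).hasDerivAt.comp_hasFDerivAt P
    (hasFDerivAt_fst (𝕜 := ℝ) (E := ℝ) (F := ℝ))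
  have hbP := (hb P.2).hasDerivAt.comp_hasFDerivAt P
    (hasFDerivAt_snd (𝕜 := ℝ) (E := ℝ) (F := ℝ))
  have hprod : HasFDerivAt (fun P : ℝ × ℝ ↦ ψ P.1 * b P.2) _ P := hψP.mul hbP
  rw [hprod.fderiv]
  simp only [Function.comp_apply, add_apply, smul_apply, ContinuousLinearMap.coe_fst',
    ContinuousLinearMap.coe_snd', smul_eq_mul]
  ring

/-- The balance inequality `e_t + q_x ≤ 0` on `ℝ × (0, ∞)` in the sense of distributions, for a
bounded density `e` which is continuous in time with values in `L¹_loc`, and a bounded flux `q`. -/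
structure IsDissipative (e q : ℝ × ℝ → ℝ) : Prop where
  measurable_density : Measurable e
  measurable_flux : Measurable q
  density_bounded : ∃ M, ∀ P, |e P| ≤ M
  flux_bounded : ∃ M, ∀ P, |q P| ≤ M
  divNonposOn : DivNonposOn volume (fun P ↦ (q P, e P)) {P | 0 < P.2}
  tendsto_density : ∀ r s, 0 ≤ s → Tendsto (fun t ↦ ∫ x in Icc (-r) r, |e (x, t) - e (x, s)|)
    (nhdsWithin s (Ici 0)) (nhds 0)

namespace IsDissipative

variable {e q : ℝ × ℝ → ℝ} {ψ b : ℝ → ℝ} {s t₁ t₂ x₁ x₂ : ℝ}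

lemma integral_product_nonneg (h : IsDissipative e q) (hψ : ContDiff ℝ 1 ψ)
    (hψ_supp : HasCompactSupport ψ) (hψ_nonneg : ∀ x, 0 ≤ ψ x) (hb : ContDiff ℝ 1 b)
    (hb_supp : HasCompactSupport b) (hb_nonneg : ∀ t, 0 ≤ b t) (hb_pos : tsupport b ⊆ Ioi 0) :
    0 ≤ (∫ t, b t * ∫ x, deriv ψ x * q (x, t)) + ∫ t, deriv b t * ∫ x, ψ x * e (x, t) := by
  obtain ⟨Mq, hMq⟩ := h.flux_bounded
  obtain ⟨Me, hMe⟩ := h.density_bounded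
  have hq := integrable_product_mul (hψ.continuous_deriv le_rfl) hψ_supp.deriv hb.continuous hb_supp
    h.measurable_flux hMq
  have he := integrable_product_mul hψ.continuous hψ_supp (hb.continuous_deriv le_rfl) hb_supp.deriv
    h.measurable_density hMe
  have hsupp : tsupport (fun P : ℝ × ℝ ↦ ψ P.1 * b P.2) ⊆ tsupport ψ ×ˢ tsupport b :=
    closure_minimal (fun P hP ↦ ⟨subset_tsupport _ (left_ne_zero_of_mul hP),
      subset_tsupport _ (right_ne_zero_of_mul hP)⟩)
      ((isClosed_tsupport ψ).prod (isClosed_tsupport b))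
  have hcompact : IsCompact (tsupport ψ ×ˢ tsupport b) := hψ_supp.isCompact.prod hb_supp.isCompact
  have hnonneg := h.divNonposOn (fun P ↦ ψ P.1 * b P.2)
    ((hψ.comp contDiff_fst).mul (hb.comp contDiff_snd))
    (hcompact.of_isClosed_subset (isClosed_tsupport _) hsupp)
    (fun P ↦ mul_nonneg (hψ_nonneg _) (hb_nonneg _)) fun P hP ↦ hb_pos (hsupp hP).2
  simp only [fderiv_product_apply (hψ.differentiable one_ne_zero)
    (hb.differentiable one_ne_zero)] at hnonneg
  rw [integral_add hq he, Measure.volume_eq_prod, integral_prod_symm _ hq,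
    integral_prod_symm _ he] at hnonneg
  simpa only [← integral_const_mul, mul_left_comm (b _), mul_left_comm (deriv b _), mul_assoc]
    using hnonneg

lemma tendsto_integral_mul_density (h : IsDissipative e q) (hψ : Continuous ψ)
    (hψ_supp : HasCompactSupport ψ) (hs : 0 ≤ s) :
    Tendsto (fun t ↦ ∫ x, ψ x * e (x, t)) (nhdsWithin s (Ici 0))
      (nhds (∫ x, ψ x * e (x, s))) := by
  obtain ⟨M, hM⟩ := h.density_bounded
  obtain ⟨C, hC⟩ := hψ_supp.exists_bound_of_continuous hψ
  obtain ⟨r, hr⟩ := hψ_supp.isCompact.isBounded.subset_closedBall 0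
  have he (t : ℝ) : Measurable fun x ↦ e (x, t) := h.measurable_density.comp (by fun_prop)
  have hint (t : ℝ) : Integrable fun x ↦ ψ x * e (x, t) :=
    (hψ.integrable_of_hasCompactSupport hψ_supp).mul_bdd (he t).aestronglyMeasurable
      (.of_forall fun x ↦ hM _)
  rw [tendsto_iff_norm_sub_tendsto_zero]
  refine squeeze_zero (fun _ ↦ norm_nonneg _) (fun t ↦ ?_)
    (by simpa using (h.tendsto_density r s hs).const_mul C)
  have hintegrable : IntegrableOn (fun x ↦ |e (x, t) - e (x, s)|) (Icc (-r) r) :=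
    Measure.integrableOn_of_bounded (M := M + M) (by simp)
      ((he t).sub (he s)).abs.aestronglyMeasurable
      (.of_forall fun x ↦ by
        simpa using (abs_sub _ _).trans (add_le_add (hM (x, t)) (hM (x, s))))
  rw [← integral_sub (hint t) (hint s), ← integral_const_mul,
    ← integral_indicator measurableSet_Icc]
  refine norm_integral_le_of_norm_le
    ((integrable_indicator_iff measurableSet_Icc).2 (hintegrable.const_mul C))
    (.of_forall fun x ↦ ?_)
  by_cases hx : x ∈ Icc (-r) r
  · rw [indicator_of_mem hx, ← mul_sub, norm_mul, Real.norm_eq_abs (e _ - _)]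
    gcongr
    exact hC x
  · have : ψ x = 0 := image_eq_zero_of_notMem_tsupport fun hmem ↦
      hx (by simpa [Real.closedBall_eq_Icc] using hr hmem)
    simp [indicator_of_notMem hx, this]

lemma integral_mul_density_sub_le (h : IsDissipative e q) (hψ : ContDiff ℝ 1 ψ)
    (hψ_supp : HasCompactSupport ψ) (hψ_nonneg : ∀ x, 0 ≤ ψ x) (ht₁ : 0 ≤ t₁) (ht : t₁ ≤ t₂) :
    (∫ x, ψ x * e (x, t₂)) - ∫ x, ψ x * e (x, t₁) ≤
      ∫ t in t₁..t₂, ∫ x, deriv ψ x * q (x, t) := by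
  obtain ⟨Mq, hMq⟩ := h.flux_bounded
  obtain ⟨Me, hMe⟩ := h.density_bounded
  have hδ : Tendsto (fun δ : ℝ ↦ δ) (nhdsWithin 0 (Ioi 0)) (nhds 0) := nhdsWithin_le_nhds
  have hendpoint (s : ℝ) (hs : 0 ≤ s) (σ : ℝ) (hσ : σ ∈ Ioo (0 : ℝ) 1) :
      Tendsto (fun δ ↦ ∫ x, ψ x * e (x, s + δ + δ * σ)) (nhdsWithin 0 (Ioi 0))
        (nhds (∫ x, ψ x * e (x, s))) := by
    refine (h.tendsto_integral_mul_density hψ.continuous hψ_supp hs).comp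
      (tendsto_nhdsWithin_iff.2 ⟨?_, eventually_mem_nhdsWithin.mono fun δ hδ ↦ ?_⟩)
    · simpa using (hδ.const_add s).add (hδ.mul_const σ)
    · exact add_nonneg (add_nonneg hs (le_of_lt hδ)) (mul_nonneg (le_of_lt hδ) hσ.1.le)
  have hmass : Measurable fun t ↦ ∫ x, ψ x * e (x, t) :=
    (((hψ.continuous.measurable.comp measurable_fst).mul
      h.measurable_density).stronglyMeasurable.integral_prod_left').measurable
  have hflux : Measurable fun t ↦ ∫ x, deriv ψ x * q (x, t) :=
    ((((measurable_deriv ψ).comp measurable_fst).mul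
      h.measurable_flux).stronglyMeasurable.integral_prod_left').measurable
  have hstart (s : ℝ) : Tendsto (fun δ ↦ s + δ) (nhdsWithin 0 (Ioi 0)) (nhds s) := by
    simpa using hδ.const_add s
  have hshift (δ : ℝ) (_ : 0 < δ) : t₁ + δ ≤ t₂ + δ := by linarith
  have hlim := (tendsto_integral_smoothPlateau_mul hflux
    (abs_integral_mul_le (hψ.continuous_deriv le_rfl) hψ_supp.deriv fun t x ↦ hMq (x, t))
    (hstart t₁) (hstart t₂) hshift).add (tendsto_integral_deriv_smoothPlateau_mul hmass
    (abs_integral_mul_le hψ.continuous hψ_supp fun t x ↦ hMe (x, t)) (hendpoint t₁ ht₁)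
    (hendpoint t₂ (ht₁.trans ht)))
  have hnonneg := ge_of_tendsto hlim <| eventually_mem_nhdsWithin.mono fun δ hδ ↦
    h.integral_product_nonneg hψ hψ_supp hψ_nonneg contDiff_smoothPlateau
      (hasCompactSupport_smoothPlateau (hshift δ hδ) hδ) (smoothPlateau_nonneg (hshift δ hδ) hδ)
      ((tsupport_smoothPlateau_subset (hshift δ hδ) hδ).trans
        fun t ht ↦ (add_pos_of_nonneg_of_pos ht₁ hδ).trans_le ht.1)
  linarith

theorem integral_density_sub_le (h : IsDissipative e q) (ht₁ : 0 ≤ t₁) (ht : t₁ ≤ t₂)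
    (hx : x₁ ≤ x₂) {q₁ q₂ : ℝ → ℝ}
    (hq₁ : ∀ t, 0 < t → Tendsto (fun x ↦ q (x, t)) (nhdsWithin x₁ (Iio x₁)) (nhds (q₁ t)))
    (hq₂ : ∀ t, 0 < t → Tendsto (fun x ↦ q (x, t)) (nhdsWithin x₂ (Ioi x₂)) (nhds (q₂ t))) :
    (∫ x in x₁..x₂, e (x, t₂)) - ∫ x in x₁..x₂, e (x, t₁) ≤ ∫ t in t₁..t₂, (q₁ t - q₂ t) := by
  obtain ⟨Mq, hMq⟩ := h.flux_bounded
  obtain ⟨Me, hMe⟩ := h.density_bounded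
  have hδ : Tendsto (fun δ : ℝ ↦ δ) (nhdsWithin 0 (Ioi 0)) (nhds 0) := nhdsWithin_le_nhds
  have hxδ (δ : ℝ) (hδ : 0 < δ) : x₁ - δ ≤ x₂ := by linarith
  have hx₁ : Tendsto (fun δ ↦ x₁ - δ) (nhdsWithin 0 (Ioi 0)) (nhds x₁) := by
    simpa using hδ.const_sub x₁
  have he (t : ℝ) : Measurable fun x ↦ e (x, t) := h.measurable_density.comp (by fun_prop)
  have hq (t : ℝ) : Measurable fun x ↦ q (x, t) := h.measurable_flux.comp (by fun_prop)
  have hmass (t : ℝ) := tendsto_integral_smoothPlateau_mul (he t) (fun _ ↦ hMe _) hx₁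
    (tendsto_const_nhds (x := x₂)) hxδ
  refine le_of_tendsto_of_tendsto ((hmass t₂).sub (hmass t₁)) ?_
    (eventually_mem_nhdsWithin.mono fun δ hδ ↦ h.integral_mul_density_sub_le contDiff_smoothPlateau
      (hasCompactSupport_smoothPlateau (hxδ δ hδ) hδ) (smoothPlateau_nonneg (hxδ δ hδ) hδ) ht₁ ht)
  refine intervalIntegral.tendsto_integral_filter_of_dominated_convergence _
    (.of_forall fun δ ↦ ?_) (eventually_mem_nhdsWithin.mono fun δ hδ ↦ .of_forall fun t _ ↦
      abs_integral_deriv_smoothPlateau_mul_le (hq t) (fun _ ↦ hMq _) hδ) (by simp)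
    (.of_forall fun t htmem ↦ ?_)
  · exact ((((measurable_deriv _).comp measurable_fst).mul
      h.measurable_flux).stronglyMeasurable.integral_prod_left').aestronglyMeasurable
  · have htpos : 0 < t := ht₁.trans_lt (uIoc_of_le ht ▸ htmem).1
    refine tendsto_integral_deriv_smoothPlateau_mul (hq t) (fun _ ↦ hMq _) (fun σ hσ ↦ ?_)
      fun σ hσ ↦ ?_
    · refine (hq₁ t htpos).comp (tendsto_nhdsWithin_iff.2
        ⟨by simpa using hx₁.add (hδ.mul_const σ), eventually_mem_nhdsWithin.mono fun δ hδ ↦ ?_⟩)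
      have : δ * σ < δ := mul_lt_of_lt_one_right hδ hσ.2
      exact mem_Iio.2 (by linarith)
    · refine (hq₂ t htpos).comp (tendsto_nhdsWithin_iff.2
        ⟨by simpa using (hδ.mul_const σ).const_add x₂,
          eventually_mem_nhdsWithin.mono fun δ hδ ↦ ?_⟩)
      exact lt_add_of_pos_right x₂ (mul_pos hδ hσ.1)

end IsDissipative

/-! ### Primitives of conservation laws -/

section Traces

lemma locallyIntegrable_of_abs_le {g : ℝ → ℝ} {M : ℝ} (hg : Measurable g) (hM : ∀ x, |g x| ≤ M) :
    LocallyIntegrable g :=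
  (locallyIntegrable_const M).mono hg.aestronglyMeasurable
    (.of_forall fun x ↦ (hM x).trans (le_abs_self M))

lemma intervalIntegrable_of_locallyIntegrable {k : ℝ → ℝ} (hk : LocallyIntegrable k) (a b : ℝ) :
    IntervalIntegrable k volume a b :=
  (hk.integrableOn_isCompact isCompact_uIcc).intervalIntegrable

lemma ae_nonneg_of_forall_intervalIntegral_nonneg {k : ℝ → ℝ} (hk : LocallyIntegrable k)
    (hnonneg : ∀ t₁ t₂, 0 ≤ t₁ → t₁ ≤ t₂ → 0 ≤ ∫ t in t₁..t₂, k t) : ∀ᵐ t, 0 < t → 0 ≤ k t := by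
  have hint := intervalIntegrable_of_locallyIntegrable hk
  filter_upwards [LocallyIntegrable.ae_hasDerivAt_integral hk] with t ht htpos
  have hmono : MonotoneOn (fun x ↦ ∫ s in (0 : ℝ)..x, k s) (Ioi 0) := fun a ha b _ hab ↦ by
    simpa only [← intervalIntegral.integral_interval_sub_left (hint 0 b) (hint 0 a), sub_nonneg]
      using hnonneg a b (le_of_lt ha) hab
  have hderiv := (ht 0).hasDerivWithinAt (s := Ioi 0)
  exact hderiv.derivWithin (uniqueDiffOn_Ioi 0 t htpos) ▸ hmono.derivWithin_nonneg

lemma measurable_indicator_of_tendsto {α ι : Type*} [MeasurableSpace α] {l : Filter ι} [l.NeBot]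
    [l.IsCountablyGenerated] {s : Set α} (hs : MeasurableSet s) {g : ι → α → ℝ}
    (hg : ∀ i, Measurable (g i)) {g₀ : α → ℝ}
    (hlim : ∀ a ∈ s, Tendsto (fun i ↦ g i a) l (nhds (g₀ a))) : Measurable (s.indicator g₀) := by
  refine measurable_of_tendsto_metrizable' l (fun i ↦ (hg i).indicator hs)
    (tendsto_pi_nhds.2 fun a ↦ ?_)
  by_cases ha : a ∈ s
  · simpa only [indicator_of_mem ha] using hlim a ha
  · simpa only [indicator_of_notMem ha] using tendsto_const_nhds

lemma tendsto_nhdsGT_of_forall_tendsto_nhdsLT {g g₀ : ℝ → ℝ} {x l : ℝ}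
    (hg : Tendsto g (nhdsWithin x (Ioi x)) (nhds l))
    (hg₀ : ∀ y, x < y → Tendsto g (nhdsWithin y (Iio y)) (nhds (g₀ y))) :
    Tendsto g₀ (nhdsWithin x (Ioi x)) (nhds l) := by
  refine (closed_nhds_basis l).tendsto_right_iff.2 fun s ⟨hs, hs_closed⟩ ↦ ?_
  filter_upwards [eventually_eventually_nhdsWithin.2 (hg.eventually hs), self_mem_nhdsWithin]
    with y hy hxy
  rw [(isOpen_Ioi.nhdsWithin_eq hxy)] at hy
  exact hs_closed.mem_of_tendsto (hg₀ y hxy) (hy.filter_mono nhdsWithin_le_nhds)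

lemma nhdsLE_inf_ae_le_nhdsLT (x : ℝ) :
    nhdsWithin x (Iic x) ⊓ ae volume ≤ nhdsWithin x (Iio x) := by
  have hne : ae volume ≤ 𝓟 {x}ᶜ := le_principal_iff.2 (Measure.ae_ne volume x)
  refine (inf_le_inf_left _ hne).trans ?_
  rw [nhdsWithin, inf_assoc, inf_principal, ← sdiff_eq, Iic_sdiff_right, nhdsWithin]

/-- A bounded function `g` on the `(x, t)`-plane with left and right limits in `x`, denoted `gm` and
`gp`, at all positive times. -/
structure HasTraces (g : ℝ × ℝ → ℝ) (gm gp : ℝ → ℝ → ℝ) : Prop where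
  measurable : Measurable g
  bounded : ∃ M, ∀ P, |g P| ≤ M
  tendsto_left : ∀ x t, 0 < t →
    Tendsto (fun y ↦ g (y, t)) (nhdsWithin x (Iio x)) (nhds (gm x t))
  tendsto_right : ∀ x t, 0 < t →
    Tendsto (fun y ↦ g (y, t)) (nhdsWithin x (Ioi x)) (nhds (gp x t))

namespace HasTraces

variable {g : ℝ × ℝ → ℝ} {gm gp : ℝ → ℝ → ℝ} {M t t₁ t₂ : ℝ}

lemma measurable_slice (h : HasTraces g gm gp) (t : ℝ) : Measurable fun x ↦ g (x, t) :=
  h.measurable.comp (by fun_prop)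

lemma locallyIntegrable_slice (h : HasTraces g gm gp) (t : ℝ) :
    LocallyIntegrable fun x ↦ g (x, t) :=
  let ⟨_, hM⟩ := h.bounded
  locallyIntegrable_of_abs_le (h.measurable_slice t) fun _ ↦ hM _

lemma intervalIntegrable_slice (h : HasTraces g gm gp) (t a b : ℝ) :
    IntervalIntegrable (fun x ↦ g (x, t)) volume a b :=
  intervalIntegrable_of_locallyIntegrable (h.locallyIntegrable_slice t) a b

lemma locallyIntegrable_indicator_of_tendsto (h : HasTraces g gm gp) {l : Filter ℝ} [l.NeBot]
    [l.IsCountablyGenerated] {g₀ : ℝ → ℝ}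
    (hlim : ∀ t, 0 < t → Tendsto (fun x ↦ g (x, t)) l (nhds (g₀ t))) :
    LocallyIntegrable ((Ioi 0).indicator g₀) := by
  obtain ⟨M, hM⟩ := h.bounded
  refine locallyIntegrable_of_abs_le (M := M) (measurable_indicator_of_tendsto measurableSet_Ioi
    (g := fun x t ↦ g (x, t)) (fun x ↦ h.measurable.comp (by fun_prop)) hlim) fun t ↦ ?_
  rcases lt_or_ge 0 t with ht | ht
  · simpa only [indicator_of_mem (mem_Ioi.2 ht)] using
      le_of_tendsto (hlim t ht).abs (.of_forall fun x ↦ hM _)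
  · simpa only [indicator_of_notMem (notMem_Ioi.2 ht), abs_zero] using (abs_nonneg _).trans (hM 0)

lemma hasDerivWithinAt_integral_Ioi (h : HasTraces g gm gp) (ht : 0 < t) (x : ℝ) :
    HasDerivWithinAt (fun y ↦ ∫ z in 0..y, g (z, t)) (gp x t) (Ioi x) x :=
  (intervalIntegral.integral_hasDerivWithinAt_of_tendsto_ae_right (s := Ici x) (t := Ioi x)
    (h.intervalIntegrable_slice t 0 x)
    (h.measurable_slice t).stronglyMeasurable.stronglyMeasurableAtFilter
    ((h.tendsto_right x t ht).mono_left inf_le_left)).mono Ioi_subset_Ici_self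

lemma hasDerivWithinAt_integral_Iio (h : HasTraces g gm gp) (ht : 0 < t) (x : ℝ) :
    HasDerivWithinAt (fun y ↦ ∫ z in 0..y, g (z, t)) (gm x t) (Iio x) x :=
  (intervalIntegral.integral_hasDerivWithinAt_of_tendsto_ae_right (s := Iic x) (t := Iic x)
    (h.intervalIntegrable_slice t 0 x)
    (h.measurable_slice t).stronglyMeasurable.stronglyMeasurableAtFilter
    ((h.tendsto_left x t ht).mono_left (nhdsLE_inf_ae_le_nhdsLT x))).mono Iio_subset_Iic_self

lemma neg (h : HasTraces g gm gp) :
    HasTraces (fun P ↦ -g P) (fun x t ↦ -gm x t) fun x t ↦ -gp x t where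
  measurable := h.measurable.neg
  bounded := let ⟨M, hM⟩ := h.bounded; ⟨M, fun P ↦ (abs_neg (g P)).trans_le (hM P)⟩
  tendsto_left x t ht := (h.tendsto_left x t ht).neg
  tendsto_right x t ht := (h.tendsto_right x t ht).neg

lemma intervalIntegrable_right (h : HasTraces g gm gp) (x : ℝ) (ht₁ : 0 ≤ t₁) (ht₂ : 0 ≤ t₂) :
    IntervalIntegrable (gp x) volume t₁ t₂ := by
  have hint := intervalIntegrable_of_locallyIntegrable
    (h.locallyIntegrable_indicator_of_tendsto (h.tendsto_right x)) t₁ t₂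
  refine hint.congr fun t ht ↦ ?_
  have htpos : t ∈ Ioi 0 := (le_min ht₁ ht₂).trans_lt ht.1
  exact indicator_of_mem htpos _

lemma tendsto_left_right (h : HasTraces g gm gp) (x : ℝ) (ht : 0 < t) :
    Tendsto (fun y ↦ gm y t) (nhdsWithin x (Ioi x)) (nhds (gp x t)) :=
  tendsto_nhdsGT_of_forall_tendsto_nhdsLT (h.tendsto_right x t ht)
    fun y _ ↦ h.tendsto_left y t ht

lemma ae_right_eq (h : HasTraces g gm gp) (ht : 0 < t) : ∀ᵐ x, gp x t = g (x, t) := by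
  filter_upwards [LocallyIntegrable.ae_hasDerivAt_integral (h.locallyIntegrable_slice t)]
    with x hx
  exact (uniqueDiffWithinAt_Ioi x).eq_deriv _ (h.hasDerivWithinAt_integral_Ioi ht x)
    (hx 0).hasDerivWithinAt

lemma measurable_indicator_right (h : HasTraces g gm gp) :
    Measurable ({P : ℝ × ℝ | 0 < P.2}.indicator fun P ↦ gp P.1 P.2) := by
  refine measurable_indicator_of_tendsto (l := nhdsWithin 0 (Ioi 0))
    (measurableSet_lt measurable_const measurable_snd) (g := fun δ P ↦ g (P.1 + δ, P.2))
    (fun δ ↦ h.measurable.comp (by fun_prop)) fun P hP ↦ (h.tendsto_right P.1 P.2 hP).comp ?_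
  refine tendsto_nhdsWithin_iff.2 ⟨?_, eventually_mem_nhdsWithin.mono fun δ hδ ↦
    lt_add_of_pos_right P.1 hδ⟩
  exact tendsto_nhdsWithin_of_tendsto_nhds (Continuous.tendsto' (by fun_prop) _ _ (by simp))

end HasTraces

end Traces

section ConservationLaw

lemma ae_of_forall_ae_fst {p : ℝ × ℝ → Prop} (hp : MeasurableSet {P | p P})
    (h : ∀ t, ∀ᵐ x, p (x, t)) : ∀ᵐ P, p P := by
  have hswap : ∀ᵐ P : ℝ × ℝ, p P.swap :=
    (Measure.ae_prod_iff_ae_ae (measurable_swap hp)).2 (.of_forall h)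
  exact (Measure.measurePreserving_swap (μ := volume) (ν := volume)).quasiMeasurePreserving.ae hswap

lemma ae_hasFDerivAt_of_ae_hasDerivAt {w a b : ℝ × ℝ → ℝ} {K : NNReal} {U : Set (ℝ × ℝ)}
    (hw : LipschitzWith K w) (hU : MeasurableSet U) (ha : Measurable a) (hb : Measurable b)
    (hfst : ∀ t, ∀ᵐ x, (x, t) ∈ U → HasDerivAt (fun y ↦ w (y, t)) (a (x, t)) x)
    (hsnd : ∀ x, ∀ᵐ t, (x, t) ∈ U → HasDerivAt (fun s ↦ w (x, s)) (b (x, t)) t) :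
    ∀ᵐ P, P ∈ U →
      HasFDerivAt w
        (a P • ContinuousLinearMap.fst ℝ ℝ ℝ + b P • ContinuousLinearMap.snd ℝ ℝ ℝ) P := by
  have hmeas (v : ℝ × ℝ) {c : ℝ × ℝ → ℝ} (hc : Measurable c) :
      MeasurableSet {P | P ∈ U → DifferentiableAt ℝ w P → fderiv ℝ w P v = c P} :=
    hU.imp ((measurableSet_of_differentiableAt ℝ w).imp
      (measurableSet_eq_fun (measurable_fderiv_apply_const ℝ w v) hc))
  have hderiv_fst : ∀ᵐ P, P ∈ U → DifferentiableAt ℝ w P → fderiv ℝ w P (1, 0) = a P := by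
    refine ae_of_forall_ae_fst (hmeas _ ha) fun t ↦ (hfst t).mono fun x hx hU hd ↦ ?_
    exact (hd.hasFDerivAt.comp_hasDerivAt x
      ((hasDerivAt_id x).prodMk (hasDerivAt_const x t))).unique (hx hU)
  have hderiv_snd : ∀ᵐ P, P ∈ U → DifferentiableAt ℝ w P → fderiv ℝ w P (0, 1) = b P := by
    refine (Measure.ae_prod_iff_ae_ae (hmeas _ hb)).2 (.of_forall fun x ↦
      (hsnd x).mono fun t ht hU hd ↦ ?_)
    exact (hd.hasFDerivAt.comp_hasDerivAt t
      ((hasDerivAt_const t x).prodMk (hasDerivAt_id t))).unique (ht hU)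
  filter_upwards [hderiv_fst, hderiv_snd, hw.ae_differentiableAt] with P hfst hsnd hd hP
  have heq : a P • ContinuousLinearMap.fst ℝ ℝ ℝ + b P • ContinuousLinearMap.snd ℝ ℝ ℝ =
      fderiv ℝ w P := by
    ext <;> simp [hfst hP hd, hsnd hP hd]
  exact heq ▸ hd.hasFDerivAt

lemma IsDissipative.ae_right_le_left {e q : ℝ × ℝ → ℝ} {qm qp : ℝ → ℝ → ℝ}
    (h : IsDissipative e q) (hq : HasTraces q qm qp) (x : ℝ) :
    ∀ᵐ t, 0 < t → qp x t ≤ qm x t := by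
  have hloc := (hq.locallyIntegrable_indicator_of_tendsto (hq.tendsto_left x)).sub
    (hq.locallyIntegrable_indicator_of_tendsto (hq.tendsto_right x))
  refine (ae_nonneg_of_forall_intervalIntegral_nonneg hloc fun t₁ t₂ ht₁ ht ↦ ?_).mono
    fun t hk ht ↦ ?_
  · have hle := h.integral_density_sub_le ht₁ ht (le_refl x) (hq.tendsto_left x)
      (hq.tendsto_right x)
    rw [intervalIntegral.integral_same, intervalIntegral.integral_same, sub_zero] at hle
    refine hle.trans_eq (intervalIntegral.integral_congr_ae (.of_forall fun t htmem ↦ ?_))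
    have htpos : t ∈ Ioi 0 := ht₁.trans_lt (uIoc_of_le ht ▸ htmem).1
    simp only [Pi.sub_apply, indicator_of_mem htpos]
  · simpa only [Pi.sub_apply, indicator_of_mem (mem_Ioi.2 ht), sub_nonneg] using hk ht

/-- A bounded solution of the conservation law `u_t + q_x = 0` in the upper half-plane, with
one-sided traces of the density `u` and of the flux `q` on vertical lines. The equation is expressed
by dissipativity of both `(u, q)` and `(-u, -q)`. -/
structure IsConservationLaw (u q : ℝ × ℝ → ℝ) (um up qm qp : ℝ → ℝ → ℝ) : Prop where
  density_traces : HasTraces u um up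
  flux_traces : HasTraces q qm qp
  dissipative : IsDissipative u q
  dissipative_neg : IsDissipative (fun P ↦ -u P) fun P ↦ -q P

/-- The primitive `w` with `w_x = u` and `w_t = -q` of a solution of `u_t + q_x = 0`, normalized at
the origin and extended by its initial values to negative times; the integral in `t` is taken along
the line `x = 0`, where the flux is `qp 0`. -/
def conservationPotential (u : ℝ × ℝ → ℝ) (qp : ℝ → ℝ → ℝ) (P : ℝ × ℝ) : ℝ :=
  (∫ x in 0..P.1, u (x, max P.2 0)) - ∫ t in 0..max P.2 0, qp 0 t

namespace IsConservationLaw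

variable {u q : ℝ × ℝ → ℝ} {um up qm qp : ℝ → ℝ → ℝ} {t t₁ t₂ x₁ x₂ : ℝ}

lemma ae_flux_eq (h : IsConservationLaw u q um up qm qp) (x : ℝ) :
    ∀ᵐ t, 0 < t → qm x t = qp x t := by
  filter_upwards [h.dissipative.ae_right_le_left h.flux_traces x,
    h.dissipative_neg.ae_right_le_left h.flux_traces.neg x] with t hle hge ht
  exact le_antisymm (neg_le_neg_iff.1 (hge ht)) (hle ht)

lemma integral_density_sub_of_le (h : IsConservationLaw u q um up qm qp) (ht₁ : 0 ≤ t₁)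
    (ht : t₁ ≤ t₂) (hx : x₁ ≤ x₂) : (∫ x in x₁..x₂, u (x, t₂)) - ∫ x in x₁..x₂, u (x, t₁) =
      ∫ t in t₁..t₂, (qp x₁ t - qp x₂ t) := by
  have hq : ∫ t in t₁..t₂, (qm x₁ t - qp x₂ t) = ∫ t in t₁..t₂, (qp x₁ t - qp x₂ t) :=
    intervalIntegral.integral_congr_ae <| (h.ae_flux_eq x₁).mono fun t hflux htmem ↦ by
      rw [hflux (ht₁.trans_lt (uIoc_of_le ht ▸ htmem).1)]
  have hle := h.dissipative.integral_density_sub_le ht₁ ht hx (h.flux_traces.tendsto_left x₁)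
    (h.flux_traces.tendsto_right x₂)
  have hge := h.dissipative_neg.integral_density_sub_le ht₁ ht hx
    (h.flux_traces.neg.tendsto_left x₁) (h.flux_traces.neg.tendsto_right x₂)
  simp only [intervalIntegral.integral_neg, ← neg_sub', neg_le_neg_iff] at hge
  exact hq ▸ le_antisymm hle hge

lemma integral_density_sub (h : IsConservationLaw u q um up qm qp) (ht₁ : 0 ≤ t₁) (ht : t₁ ≤ t₂)
    (x₁ x₂ : ℝ) : (∫ x in x₁..x₂, u (x, t₂)) - ∫ x in x₁..x₂, u (x, t₁) =
      ∫ t in t₁..t₂, (qp x₁ t - qp x₂ t) := by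
  rcases le_total x₁ x₂ with hx | hx
  · exact h.integral_density_sub_of_le ht₁ ht hx
  · have hswap := h.integral_density_sub_of_le ht₁ ht hx
    simp only [← neg_sub (qp x₁ _), intervalIntegral.integral_neg] at hswap
    rw [intervalIntegral.integral_symm x₂ x₁, intervalIntegral.integral_symm x₂ x₁]
    linarith

lemma conservationPotential_sub_fst (h : IsConservationLaw u q um up qm qp) (x₁ x₂ t : ℝ) :
    conservationPotential u qp (x₂, t) - conservationPotential u qp (x₁, t) =
      ∫ x in x₁..x₂, u (x, max t 0) := by
  have hint := h.density_traces.intervalIntegrable_slice (max t 0) 0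
  rw [conservationPotential, conservationPotential, sub_sub_sub_cancel_right,
    intervalIntegral.integral_interval_sub_left (hint x₂) (hint x₁)]

lemma conservationPotential_sub_snd (h : IsConservationLaw u q um up qm qp) (ht₁ : 0 ≤ t₁)
    (ht : t₁ ≤ t₂) (x : ℝ) :
    conservationPotential u qp (x, t₂) - conservationPotential u qp (x, t₁) =
      -∫ t in t₁..t₂, qp x t := by
  have ht₂ := ht₁.trans ht
  have hint (x : ℝ) {s t : ℝ} := h.flux_traces.intervalIntegrable_right x (t₁ := s) (t₂ := t)
  have hbalance := h.integral_density_sub ht₁ ht 0 x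
  rw [intervalIntegral.integral_sub (hint 0 ht₁ ht₂) (hint x ht₁ ht₂)] at hbalance
  have hsplit := intervalIntegral.integral_interval_sub_left (hint 0 le_rfl ht₂)
    (hint 0 le_rfl ht₁)
  simp only [conservationPotential, max_eq_left ht₁, max_eq_left ht₂]
  linarith

lemma abs_conservationPotential_sub_snd_le (h : IsConservationLaw u q um up qm qp) {C : ℝ}
    (hC : ∀ P, |q P| ≤ C) (ht₁ : 0 ≤ t₁) (ht : t₁ ≤ t₂) (x : ℝ) :
    |conservationPotential u qp (x, t₂) - conservationPotential u qp (x, t₁)| ≤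
      C * |t₂ - t₁| := by
  rw [h.conservationPotential_sub_snd ht₁ ht, abs_neg]
  refine (Real.norm_eq_abs _).symm.trans_le <|
    intervalIntegral.norm_integral_le_of_norm_le_const fun t htmem ↦ ?_
  have htpos : 0 < t := ht₁.trans_lt (uIoc_of_le ht ▸ htmem).1
  exact le_of_tendsto (h.flux_traces.tendsto_right x t htpos).abs (.of_forall fun y ↦ hC _)

lemma exists_lipschitzWith (h : IsConservationLaw u q um up qm qp) :
    ∃ K, LipschitzWith K (conservationPotential u qp) := by
  obtain ⟨M, hM⟩ := h.density_traces.bounded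
  obtain ⟨C, hC⟩ := h.flux_traces.bounded
  have hM₀ : 0 ≤ M := (abs_nonneg _).trans (hM 0)
  have hC₀ : 0 ≤ C := (abs_nonneg _).trans (hC 0)
  have hsnd (x s t : ℝ) :
      |conservationPotential u qp (x, t) - conservationPotential u qp (x, s)| ≤ C * |t - s| := by
    wlog hst : max s 0 ≤ max t 0 generalizing s t
    · rw [abs_sub_comm, abs_sub_comm t]
      exact this t s (le_of_not_ge hst)
    have hle := h.abs_conservationPotential_sub_snd_le hC (le_max_right s 0) hst x
    simp only [conservationPotential, max_eq_left (le_max_right _ (0 : ℝ))] at hle ⊢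
    exact hle.trans (mul_le_mul_of_nonneg_left (abs_max_sub_max_le_abs t s 0) hC₀)
  refine ⟨⟨M + C, add_nonneg hM₀ hC₀⟩, LipschitzWith.of_dist_le_mul fun ⟨x, t⟩ ⟨y, s⟩ ↦ ?_⟩
  have hfst : |conservationPotential u qp (x, t) - conservationPotential u qp (y, t)| ≤
      M * |x - y| := by
    rw [h.conservationPotential_sub_fst]
    exact (Real.norm_eq_abs _).symm.trans_le <|
      intervalIntegral.norm_integral_le_of_norm_le_const fun z _ ↦ hM _
  simp only [Real.dist_eq, Prod.dist_eq]
  calc |conservationPotential u qp (x, t) - conservationPotential u qp (y, s)|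
      ≤ M * |x - y| + C * |t - s| := (abs_sub_le _ _ _).trans (add_le_add hfst (hsnd y s t))
    _ ≤ M * max |x - y| |t - s| + C * max |x - y| |t - s| := by
        gcongr
        exacts [le_max_left _ _, le_max_right _ _]
    _ = (M + C) * max |x - y| |t - s| := by ring

lemma conservationPotential_slice (ht : 0 < t) : (fun x ↦ conservationPotential u qp (x, t)) =
    fun x ↦ (∫ y in 0..x, u (y, t)) - ∫ s in 0..t, qp 0 s := by
  simp only [conservationPotential, max_eq_left ht.le]

lemma hasDerivWithinAt_conservationPotential_Ioi (h : IsConservationLaw u q um up qm qp)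
    (ht : 0 < t) (x : ℝ) :
    HasDerivWithinAt (fun y ↦ conservationPotential u qp (y, t)) (up x t) (Ioi x) x := by
  rw [conservationPotential_slice ht]
  exact (h.density_traces.hasDerivWithinAt_integral_Ioi ht x).sub_const _

lemma hasDerivWithinAt_conservationPotential_Iio (h : IsConservationLaw u q um up qm qp)
    (ht : 0 < t) (x : ℝ) :
    HasDerivWithinAt (fun y ↦ conservationPotential u qp (y, t)) (um x t) (Iio x) x := by
  rw [conservationPotential_slice ht]
  exact (h.density_traces.hasDerivWithinAt_integral_Iio ht x).sub_const _

lemma ae_hasDerivAt_conservationPotential_fst (h : IsConservationLaw u q um up qm qp)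
    (ht : 0 < t) : ∀ᵐ x, HasDerivAt (fun y ↦ conservationPotential u qp (y, t)) (u (x, t)) x := by
  rw [conservationPotential_slice ht]
  exact (LocallyIntegrable.ae_hasDerivAt_integral
    (h.density_traces.locallyIntegrable_slice t)).mono fun x hx ↦ (hx 0).sub_const _

lemma ae_hasDerivAt_conservationPotential_snd (h : IsConservationLaw u q um up qm qp) (x : ℝ) :
    ∀ᵐ t, 0 < t → HasDerivAt (fun s ↦ conservationPotential u qp (x, s)) (-qp x t) t := by
  filter_upwards [LocallyIntegrable.ae_hasDerivAt_integral
    (h.flux_traces.locallyIntegrable_indicator_of_tendsto (h.flux_traces.tendsto_right x))]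
    with t ht htpos
  have hderiv := (ht 0).const_sub (conservationPotential u qp (x, 0))
  rw [indicator_of_mem (mem_Ioi.2 htpos)] at hderiv
  refine hderiv.congr_of_eventuallyEq ((lt_mem_nhds htpos).mono fun s hs ↦ ?_)
  have hint : ∫ r in 0..s, (Ioi 0).indicator (qp x) r = ∫ r in 0..s, qp x r :=
    intervalIntegral.integral_congr_ae <| .of_forall fun r hr ↦ by
      have hrpos : r ∈ Ioi 0 := (uIoc_of_le hs.le ▸ hr).1
      rw [indicator_of_mem hrpos]
  have hsub := h.conservationPotential_sub_snd le_rfl hs.le x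
  simp only [hint]
  linarith

theorem ae_hasFDerivAt_conservationPotential (h : IsConservationLaw u q um up qm qp) :
    ∀ᵐ P, 0 < P.2 → HasFDerivAt (conservationPotential u qp)
      (u P • ContinuousLinearMap.fst ℝ ℝ ℝ - q P • ContinuousLinearMap.snd ℝ ℝ ℝ) P := by
  obtain ⟨K, hK⟩ := h.exists_lipschitzWith
  have hU : MeasurableSet {P : ℝ × ℝ | 0 < P.2} := measurableSet_lt measurable_const measurable_snd
  have hflux : ∀ᵐ P : ℝ × ℝ, {P | 0 < P.2}.indicator (fun P ↦ qp P.1 P.2) P =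
      {P | 0 < P.2}.indicator q P := by
    refine ae_of_forall_ae_fst (measurableSet_eq_fun h.flux_traces.measurable_indicator_right
      (h.flux_traces.measurable.indicator hU)) fun t ↦ ?_
    by_cases ht : 0 < t
    · filter_upwards [h.flux_traces.ae_right_eq ht] with x hx
      simp only [indicator, mem_ofPred_eq, ht, if_true, hx]
    · simp only [indicator, mem_ofPred_eq, ht, if_false, Eventually.of_forall, implies_true]
  filter_upwards [hflux, ae_hasFDerivAt_of_ae_hasDerivAt hK hU h.density_traces.measurable
    h.flux_traces.measurable_indicator_right.neg
    (fun t ↦ by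
      by_cases ht : 0 < t
      · exact (h.ae_hasDerivAt_conservationPotential_fst ht).mono fun x hx _ ↦ hx
      · exact .of_forall fun x hx ↦ absurd hx ht)
    (fun x ↦ (h.ae_hasDerivAt_conservationPotential_snd x).mono fun t ht htpos ↦ by
      simpa only [Pi.neg_apply, indicator_of_mem htpos] using ht htpos)] with P hflux hderiv hP
  have hP' : P ∈ {P : ℝ × ℝ | 0 < P.2} := hP
  rw [indicator_of_mem hP', indicator_of_mem hP'] at hflux
  have hsub : u P • ContinuousLinearMap.fst ℝ ℝ ℝ - q P • ContinuousLinearMap.snd ℝ ℝ ℝ =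
      u P • ContinuousLinearMap.fst ℝ ℝ ℝ + -q P • ContinuousLinearMap.snd ℝ ℝ ℝ := by
    ext <;> simp
  simpa only [hsub, Pi.neg_apply, indicator_of_mem hP', hflux] using hderiv hP

end IsConservationLaw

end ConservationLaw

/-! ### Entropy solutions for a connection -/

section Divergence

lemma divNonposOn_of_forall_deriv {e q : ℝ × ℝ → ℝ} {U : Set (ℝ × ℝ)}
    (h : ∀ φ : ℝ → ℝ → ℝ, ContDiff ℝ 1 (fun P : ℝ × ℝ ↦ φ P.1 P.2) →
      HasCompactSupport (fun P : ℝ × ℝ ↦ φ P.1 P.2) → (∀ x t, 0 ≤ φ x t) →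
      (∀ x t, (x, t) ∉ U → φ x t = 0) →
      0 ≤ ∫ P : ℝ × ℝ, (e P * deriv (fun s ↦ φ P.1 s) P.2 + q P * deriv (fun y ↦ φ y P.2) P.1)) :
    DivNonposOn volume (fun P ↦ (q P, e P)) U := fun φ hφ hφ_supp hφ_nonneg hφU ↦ by
  refine (h (fun x t ↦ φ (x, t)) hφ hφ_supp (fun x t ↦ hφ_nonneg _)
    fun x t hxt ↦ image_eq_zero_of_notMem_tsupport fun hmem ↦ hxt (hφU hmem)).trans_eq
    (integral_congr_ae (.of_forall fun P ↦ ?_))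
  have hderiv := (hφ.differentiable one_ne_zero P).hasFDerivAt
  have hfst := hderiv.comp_hasDerivAt_of_eq P.1
    ((hasDerivAt_id P.1).prodMk (hasDerivAt_const P.1 P.2)) rfl
  have hsnd := hderiv.comp_hasDerivAt_of_eq P.2
    ((hasDerivAt_const P.2 P.1).prodMk (hasDerivAt_id P.2)) rfl
  have hsplit : (q P, e P) = q P • ((1, 0) : ℝ × ℝ) + e P • ((0, 1) : ℝ × ℝ) := by simp
  simp only [hsplit, map_add, map_smul, smul_eq_mul]
  rw [← hfst.deriv, ← hsnd.deriv, add_comm]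
  rfl

lemma DivNonposOn.comp_continuousLinearEquiv {E F : Type*} [NormedAddCommGroup E]
    [NormedSpace ℝ E] [MeasurableSpace E] [BorelSpace E] [NormedAddCommGroup F] [NormedSpace ℝ F]
    [MeasurableSpace F] [BorelSpace F] {μ : Measure E} {ν : Measure F} {X : F → F} {U : Set F}
    (h : DivNonposOn ν X U) (L : E ≃L[ℝ] F) (hL : MeasurePreserving L μ ν) :
    DivNonposOn μ (fun P ↦ L.symm (X (L P))) (L ⁻¹' U) := fun φ hφ hφ_supp hφ_nonneg hφU ↦ by
  refine (h (φ ∘ L.symm) (hφ.comp L.symm.contDiff)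
    (hφ_supp.comp_homeomorph L.symm.toHomeomorph) (fun P ↦ hφ_nonneg _)
    fun Q hQ ↦ ?_).trans_eq ?_
  · have hQ' : L.symm Q ∈ tsupport φ := tsupport_comp_subset_preimage φ L.symm.continuous hQ
    simpa using hφU hQ'
  · rw [← hL.integral_comp L.toHomeomorph.measurableEmbedding]
    refine integral_congr_ae (.of_forall fun P ↦ ?_)
    simp [L.symm.comp_right_fderiv]

end Divergence

section Mirror

/-- The reflection in the interface, as a linear automorphism of space-time. -/
def mirrorEquiv : (ℝ × ℝ) ≃L[ℝ] ℝ × ℝ :=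
  (ContinuousLinearEquiv.neg ℝ).prodCongr (.refl ℝ ℝ)

lemma coe_mirrorEquiv : ⇑mirrorEquiv = mirrorPt := rfl

lemma measurePreserving_mirrorEquiv : MeasurePreserving mirrorEquiv :=
  (Measure.measurePreserving_neg volume).prod (.id _)

lemma kruzkovField_neg_comp_mirrorPt (f : ℝ → ℝ) (u : ℝ × ℝ → ℝ) (k : ℝ) (P : ℝ × ℝ) :
    mirrorEquiv.symm (kruzkovField f u (-k) (mirrorPt P)) =
      kruzkovField (fun v ↦ f (-v)) (fun Q ↦ -u (mirrorPt Q)) k P := by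
  have harg : -u (mirrorPt P) - k = -(u (mirrorPt P) - -k) := by ring
  simp only [kruzkovField, harg, Real.sign_neg, abs_neg, neg_neg, neg_mul]
  rfl

lemma IsEntropyPotential.mirror {f : ℝ → ℝ} {w u : ℝ × ℝ → ℝ} {U : Set (ℝ × ℝ)}
    (h : IsEntropyPotential f w u U) :
    IsEntropyPotential (fun v ↦ f (-v)) (w ∘ mirrorPt) (fun P ↦ -u (mirrorPt P))
      (mirrorPt ⁻¹' U) where
  lipschitz := let ⟨_, hK⟩ := h.lipschitz; ⟨_, hK.comp mirrorEquiv.lipschitz⟩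
  measurable := (h.measurable.comp continuous_mirrorPt.measurable).neg
  bounded := h.bounded.imp fun _ hM _ ↦ (abs_neg _).trans_le (hM _)
  hasFDerivAt := by
    filter_upwards [measurePreserving_mirrorEquiv.quasiMeasurePreserving.ae h.hasFDerivAt]
      with P hP hPU
    refine ((hP hPU).comp P mirrorEquiv.hasFDerivAt).congr_fderiv ?_
    ext <;> simp [mirrorEquiv, mirrorPt]
  kruzkov k := by
    have hdiv := (h.kruzkov (-k)).comp_continuousLinearEquiv mirrorEquiv
      measurePreserving_mirrorEquiv
    simpa only [coe_mirrorEquiv, kruzkovField_neg_comp_mirrorPt] using hdiv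

lemma HasTraces.mirror {g : ℝ × ℝ → ℝ} {gm gp : ℝ → ℝ → ℝ} (h : HasTraces g gm gp) :
    HasTraces (fun P ↦ -g (mirrorPt P)) (fun x t ↦ -gp (-x) t) fun x t ↦ -gm (-x) t where
  measurable := (h.measurable.comp continuous_mirrorPt.measurable).neg
  bounded := h.bounded.imp fun _ hM _ ↦ (abs_neg _).trans_le (hM _)
  tendsto_left x t ht := ((h.tendsto_right (-x) t ht).comp tendsto_neg_nhdsLT).neg
  tendsto_right x t ht := ((h.tendsto_left (-x) t ht).comp tendsto_neg_nhdsGT).neg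

end Mirror

section DiscontinuousFlux

variable {gl gr : ℝ → ℝ} {g : ℝ × ℝ → ℝ} {gm gp : ℝ → ℝ → ℝ}

lemma dflux_self (f : ℝ → ℝ) (x v : ℝ) : dflux f f x v = f v :=
  ite_self _

lemma measurable_dflux (hl : Continuous gl) (hr : Continuous gr) (hg : Measurable g) :
    Measurable fun P ↦ dflux gl gr P.1 (g P) :=
  Measurable.ite (measurableSet_lt measurable_fst measurable_const)
    (hl.measurable.comp hg) (hr.measurable.comp hg)

lemma exists_abs_dflux_le (hl : Continuous gl) (hr : Continuous gr) (hg : ∃ M, ∀ P, |g P| ≤ M) :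
    ∃ M, ∀ P, |dflux gl gr P.1 (g P)| ≤ M := by
  obtain ⟨M, hM⟩ := hg
  obtain ⟨Cl, hCl⟩ := isCompact_Icc.exists_bound_of_continuousOn (s := Icc (-M) M) hl.continuousOn
  obtain ⟨Cr, hCr⟩ := isCompact_Icc.exists_bound_of_continuousOn (s := Icc (-M) M) hr.continuousOn
  refine ⟨max Cl Cr, fun P ↦ ?_⟩
  have hmem : g P ∈ Icc (-M) M := abs_le.1 (hM P)
  rw [dflux]
  split_ifs
  exacts [(hCl _ hmem).trans (le_max_left _ _), (hCr _ hmem).trans (le_max_right _ _)]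

lemma eventually_nhdsLT_dflux_eq (gl gr : ℝ → ℝ) (x : ℝ) :
    ∀ᶠ y in nhdsWithin x (Iio x), dflux gl gr y = if x ≤ 0 then gl else gr := by
  split_ifs with hx
  · filter_upwards [eventually_mem_nhdsWithin] with y hy
    exact funext fun v ↦ if_pos (hy.trans_le hx)
  · filter_upwards [nhdsWithin_le_nhds (lt_mem_nhds (not_le.1 hx))] with y hy
    exact funext fun v ↦ if_neg hy.not_gt

lemma eventually_nhdsGT_dflux_eq (gl gr : ℝ → ℝ) (x : ℝ) :
    ∀ᶠ y in nhdsWithin x (Ioi x), dflux gl gr y = if x < 0 then gl else gr := by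
  split_ifs with hx
  · filter_upwards [nhdsWithin_le_nhds (gt_mem_nhds hx)] with y hy
    exact funext fun v ↦ if_pos hy
  · filter_upwards [eventually_mem_nhdsWithin] with y hy
    exact funext fun v ↦ if_neg ((not_lt.1 hx).trans_lt hy).not_gt

lemma HasTraces.dflux (h : HasTraces g gm gp) (hl : Continuous gl) (hr : Continuous gr) :
    HasTraces (fun P ↦ dflux gl gr P.1 (g P)) (fun x t ↦ (if x ≤ 0 then gl else gr) (gm x t))
      fun x t ↦ (if x < 0 then gl else gr) (gp x t) where
  measurable := measurable_dflux hl hr h.measurable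
  bounded := exists_abs_dflux_le hl hr h.bounded
  tendsto_left x t ht := by
    have hcont : Continuous (if x ≤ 0 then gl else gr) := by split_ifs <;> assumption
    refine ((hcont.tendsto _).comp (h.tendsto_left x t ht)).congr' ?_
    filter_upwards [eventually_nhdsLT_dflux_eq gl gr x] with y hy
    rw [hy, Function.comp_apply]
  tendsto_right x t ht := by
    have hcont : Continuous (if x < 0 then gl else gr) := by split_ifs <;> assumption
    refine ((hcont.tendsto _).comp (h.tendsto_right x t ht)).congr' ?_
    filter_upwards [eventually_nhdsGT_dflux_eq gl gr x] with y hy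
    rw [hy, Function.comp_apply]

/-- The flux `sgn(v - k) (f v - f k)` of Kruzkov's entropy `|v - k|`, in a form which shows its
continuity in `v`. -/
def kruzkovFlux (f : ℝ → ℝ) (k v : ℝ) : ℝ := f (max v k) - f (min v k)

lemma continuous_kruzkovFlux {f : ℝ → ℝ} (hf : Continuous f) (k : ℝ) :
    Continuous (kruzkovFlux f k) := by
  unfold kruzkovFlux
  fun_prop

lemma real_sign_mul_sub (f : ℝ → ℝ) (k v : ℝ) :
    Real.sign (v - k) * (f v - f k) = kruzkovFlux f k v := by
  rw [kruzkovFlux]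
  rcases lt_trichotomy v k with h | rfl | h
  · rw [Real.sign_of_neg (sub_neg.2 h), max_eq_right h.le, min_eq_left h.le]
    ring
  · simp
  · rw [Real.sign_of_pos (sub_pos.2 h), max_eq_left h.le, min_eq_right h.le, one_mul]

end DiscontinuousFlux

namespace ABSol

variable {fl fr : ℝ → ℝ} {A B : ℝ} {u0 : ℝ → ℝ} (sol : ABSol fl fr A B u0)

lemma exists_abs_le : ∃ M, ∀ P : ℝ × ℝ, |sol.u P.1 P.2| ≤ M :=
  sol.bdd.imp fun _ hM _ ↦ hM _ _

lemma hasTraces : HasTraces (fun P ↦ sol.u P.1 P.2) sol.um sol.up where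
  measurable := sol.meas
  bounded := sol.exists_abs_le
  tendsto_left := sol.um_spec
  tendsto_right := sol.up_spec

lemma isDissipative_dflux {ηl ηr gl gr : ℝ → ℝ} (hηl : LipschitzWith 1 ηl)
    (hηr : LipschitzWith 1 ηr) (hgl : Continuous gl) (hgr : Continuous gr)
    (hdiv : ∀ φ : ℝ → ℝ → ℝ, ContDiff ℝ 1 (fun P : ℝ × ℝ ↦ φ P.1 P.2) →
      HasCompactSupport (fun P : ℝ × ℝ ↦ φ P.1 P.2) → (∀ x t, 0 ≤ φ x t) →
      (∀ x t, t ≤ 0 → φ x t = 0) →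
      0 ≤ ∫ P : ℝ × ℝ, (dflux ηl ηr P.1 (sol.u P.1 P.2) * deriv (fun s ↦ φ P.1 s) P.2 +
        dflux gl gr P.1 (sol.u P.1 P.2) * deriv (fun y ↦ φ y P.2) P.1)) :
    IsDissipative (fun P ↦ dflux ηl ηr P.1 (sol.u P.1 P.2))
      fun P ↦ dflux gl gr P.1 (sol.u P.1 P.2) where
  measurable_density := measurable_dflux hηl.continuous hηr.continuous sol.meas
  measurable_flux := measurable_dflux hgl hgr sol.meas
  density_bounded := exists_abs_dflux_le hηl.continuous hηr.continuous sol.exists_abs_le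
  flux_bounded := exists_abs_dflux_le hgl hgr sol.exists_abs_le
  divNonposOn := divNonposOn_of_forall_deriv fun φ hφ hφ_supp hφ_nonneg hφU ↦
    hdiv φ hφ hφ_supp hφ_nonneg fun x t ht ↦ hφU x t (not_lt.2 ht)
  tendsto_density r s hs := by
    have hle (x v v' : ℝ) : |dflux ηl ηr x v - dflux ηl ηr x v'| ≤ |v - v'| := by
      rw [dflux, dflux]
      split_ifs
      exacts [by simpa [Real.dist_eq] using hηl.dist_le_mul v v',
        by simpa [Real.dist_eq] using hηr.dist_le_mul v v']
    refine squeeze_zero (fun t ↦ integral_nonneg fun x ↦ abs_nonneg _)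
      (fun t ↦ integral_mono_of_nonneg (.of_forall fun x ↦ abs_nonneg _) ?_
        (.of_forall fun x ↦ hle x _ _)) (sol.timeCont r s hs)
    have hslice (t : ℝ) : LocallyIntegrable fun x ↦ sol.u x t :=
      sol.hasTraces.locallyIntegrable_slice t
    exact (((hslice t).sub (hslice s)).integrableOn_isCompact isCompact_Icc).abs

lemma isConservationLaw (hl : Continuous fl) (hr : Continuous fr) :
    IsConservationLaw (fun P ↦ sol.u P.1 P.2) (fun P ↦ dflux fl fr P.1 (sol.u P.1 P.2)) sol.um
      sol.up (fun x t ↦ (if x ≤ 0 then fl else fr) (sol.um x t))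
      fun x t ↦ (if x < 0 then fl else fr) (sol.up x t) where
  density_traces := sol.hasTraces
  flux_traces := sol.hasTraces.dflux hl hr
  dissipative := by
    simpa only [dflux_self] using sol.isDissipative_dflux (ηl := fun v ↦ v) (ηr := fun v ↦ v) .id
      .id hl hr fun φ hφ hφ_supp _ hφ_zero ↦ by
        simpa only [dflux_self] using (sol.weak φ hφ hφ_supp hφ_zero).ge
  dissipative_neg := by
    have hneg (x v : ℝ) : dflux (-fl) (-fr) x v = -dflux fl fr x v :=
      (apply_ite Neg.neg _ _ _).symm
    simpa only [dflux_self, hneg] using sol.isDissipative_dflux (ηl := fun v ↦ -v)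
      (ηr := fun v ↦ -v) LipschitzWith.id.neg LipschitzWith.id.neg hl.neg hr.neg
      fun φ hφ hφ_supp _ hφ_zero ↦ by
        simp only [dflux_self, hneg, neg_mul, ← neg_add, integral_neg,
          sol.weak φ hφ hφ_supp hφ_zero, neg_zero, le_refl]

lemma isDissipative_interfaceEntropy (hl : Continuous fl) (hr : Continuous fr) :
    IsDissipative (fun P ↦ dflux (fun v ↦ |v - A|) (fun v ↦ |v - B|) P.1 (sol.u P.1 P.2))
      fun P ↦ dflux (kruzkovFlux fl A) (kruzkovFlux fr B) P.1 (sol.u P.1 P.2) := by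
  have hdist (k : ℝ) : LipschitzWith 1 fun v : ℝ ↦ |v - k| := LipschitzWith.dist_left k
  refine sol.isDissipative_dflux (hdist A) (hdist B) (continuous_kruzkovFlux hl A)
    (continuous_kruzkovFlux hr B) fun φ hφ hφ_supp hφ_nonneg hφ_zero ↦
      (sol.interfaceEntropy φ hφ hφ_supp hφ_nonneg hφ_zero).trans_eq (integral_congr_ae ?_)
  filter_upwards [Measure.quasiMeasurePreserving_fst.ae (Measure.ae_ne volume (0 : ℝ))] with P hP
  rcases lt_or_gt_of_ne hP with hneg | hpos
  · simp only [dflux, cAB, if_pos hneg, if_pos hneg.le, real_sign_mul_sub]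
  · simp only [dflux, cAB, if_neg hpos.not_gt, if_neg hpos.not_ge, real_sign_mul_sub]

lemma ae_kruzkovFlux_le (hl : Continuous fl) (hr : Continuous fr) :
    ∀ᵐ t, 0 < t → kruzkovFlux fr B (sol.up 0 t) ≤ kruzkovFlux fl A (sol.um 0 t) := by
  have h := (sol.isDissipative_interfaceEntropy hl hr).ae_right_le_left (sol.hasTraces.dflux
    (continuous_kruzkovFlux hl A) (continuous_kruzkovFlux hr B)) 0
  simpa only [le_refl, if_true, lt_irrefl, if_false] using h

/-- The data to which the `AB`-genuine/interface characteristics of the solution `sol` refer. -/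
def gicData : GicData where
  fl := fl
  fr := fr
  γ := fl A
  um := sol.um
  up := sol.up

/-- The primitive of an `AB`-entropy solution. -/
def potential : ℝ × ℝ → ℝ :=
  conservationPotential (fun P ↦ sol.u P.1 P.2) fun x t ↦ (if x < 0 then fl else fr) (sol.up x t)

lemma isEntropyPotential_right (hl : Continuous fl) (hr : Continuous fr) :
    IsEntropyPotential fr sol.potential (fun P ↦ sol.u P.1 P.2) quadrant where
  lipschitz := (sol.isConservationLaw hl hr).exists_lipschitzWith
  measurable := sol.meas
  bounded := sol.exists_abs_le
  hasFDerivAt := by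
    filter_upwards [(sol.isConservationLaw hl hr).ae_hasFDerivAt_conservationPotential]
      with P hP hPmem
    have hfr := hP hPmem.2
    simp only [dflux, if_neg (mem_Ioi.1 hPmem.1).not_gt] at hfr
    exact hfr
  kruzkov k := divNonposOn_of_forall_deriv fun φ hφ hφ_supp hφ_nonneg hφ_zero ↦
    sol.kruzkov_r k φ hφ hφ_supp hφ_nonneg fun x t h ↦ hφ_zero x t fun hmem ↦
      h.elim (mem_Ioi.1 hmem.1).not_ge (mem_Ioi.1 hmem.2).not_ge

lemma isEntropyPotential_left (hl : Continuous fl) (hr : Continuous fr) :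
    IsEntropyPotential fl sol.potential (fun P ↦ sol.u P.1 P.2) (mirrorPt ⁻¹' quadrant) where
  lipschitz := (sol.isConservationLaw hl hr).exists_lipschitzWith
  measurable := sol.meas
  bounded := sol.exists_abs_le
  hasFDerivAt := by
    filter_upwards [(sol.isConservationLaw hl hr).ae_hasFDerivAt_conservationPotential]
      with P hP hPmem
    have hfl := hP hPmem.2
    simp only [dflux, if_pos (neg_pos.1 (mem_Ioi.1 hPmem.1))] at hfl
    exact hfl
  kruzkov k := divNonposOn_of_forall_deriv fun φ hφ hφ_supp hφ_nonneg hφ_zero ↦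
    sol.kruzkov_l k φ hφ hφ_supp hφ_nonneg fun x t h ↦ hφ_zero x t fun hmem ↦
      h.elim (neg_pos.1 (mem_Ioi.1 hmem.1)).not_ge (mem_Ioi.1 hmem.2).not_ge

lemma isTracedPotential_right (hl : IsConvexFlux fl) (hr : IsConvexFlux fr) :
    IsTracedPotential fr sol.potential sol.um sol.up where
  isConvexFlux := hr
  exists_isEntropyPotential := ⟨_, sol.isEntropyPotential_right hl.continuous hr.continuous⟩
  hasDerivWithinAt_Ioi _ ht := (sol.isConservationLaw hl.continuous
    hr.continuous).hasDerivWithinAt_conservationPotential_Ioi ht _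
  hasDerivWithinAt_Iio _ ht := (sol.isConservationLaw hl.continuous
    hr.continuous).hasDerivWithinAt_conservationPotential_Iio ht _
  tendsto_interface ht := sol.hasTraces.tendsto_left_right 0 ht

lemma isTracedPotential_left (hl : IsConvexFlux fl) (hr : IsConvexFlux fr) :
    IsTracedPotential (fun v ↦ fl (-v)) (sol.potential ∘ mirrorPt) (fun x t ↦ -sol.up (-x) t)
      fun x t ↦ -sol.um (-x) t where
  isConvexFlux := hl.comp_neg
  exists_isEntropyPotential := by
    have h := (sol.isEntropyPotential_left hl.continuous hr.continuous).mirror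
    rw [← preimage_comp, mirrorPt_comp_mirrorPt, preimage_id] at h
    exact ⟨_, h⟩
  hasDerivWithinAt_Ioi {x t} _ ht := by
    have h := ((sol.isConservationLaw hl.continuous
      hr.continuous).hasDerivWithinAt_conservationPotential_Iio ht (-x)).scomp (s := Ioi x) x
        (hasDerivAt_neg x).hasDerivWithinAt fun y hy ↦ neg_lt_neg (mem_Ioi.1 hy)
    exact h.congr_deriv (neg_one_smul ℝ _)
  hasDerivWithinAt_Iio {x t} _ ht := by
    have h := ((sol.isConservationLaw hl.continuous
      hr.continuous).hasDerivWithinAt_conservationPotential_Ioi ht (-x)).scomp (s := Iio x) x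
        (hasDerivAt_neg x).hasDerivWithinAt fun y hy ↦ neg_lt_neg (mem_Iio.1 hy)
    exact h.congr_deriv (neg_one_smul ℝ _)
  tendsto_interface ht := sol.hasTraces.mirror.tendsto_left_right 0 ht

end ABSol

section Connection

variable {fl fr : ℝ → ℝ} {A B a b : ℝ}

lemma le_of_kruzkovFlux_le (hl : IsConvexFlux fl) (hr : IsConvexFlux fr) (hAB : fl A = fr B)
    (hA : deriv fl A ≤ 0) (hB : 0 ≤ deriv fr B) (hab : fl a = fr b)
    (hle : kruzkovFlux fr B b ≤ kruzkovFlux fl A a) : fl A ≤ fl a := by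
  by_contra! hlt
  have ha : A < a := by
    by_contra! haA
    nlinarith [hl.add_deriv_mul_le a A]
  have hb : b < B := by
    by_contra! hbB
    nlinarith [hr.add_deriv_mul_le b B]
  rw [kruzkovFlux, kruzkovFlux, max_eq_right hb.le, min_eq_left hb.le, max_eq_left ha.le,
    min_eq_right ha.le] at hle
  linarith

lemma deriv_pos_or_deriv_neg_of_kruzkovFlux_le (hl : IsConvexFlux fl) (hr : IsConvexFlux fr)
    (hAB : fl A = fr B) (hab : fl a = fr b) (hle : kruzkovFlux fr B b ≤ kruzkovFlux fl A a)
    (hlt : fl A < fl a) : 0 < deriv fl a ∨ deriv fr b < 0 := by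
  by_contra! hout
  have ha : a < A := by
    by_contra! haA
    nlinarith [hl.add_deriv_mul_le A a, hout.1]
  have hb : B < b := by
    by_contra! hbB
    nlinarith [hr.add_deriv_mul_le B b, hout.2]
  rw [kruzkovFlux, kruzkovFlux, max_eq_left hb.le, min_eq_right hb.le, max_eq_right ha.le,
    min_eq_left ha.le] at hle
  linarith

end Connection

namespace ABSol

variable {fl fr : ℝ → ℝ} {A B : ℝ} {u0 : ℝ → ℝ} (sol : ABSol fl fr A B u0)

lemma ae_flux_eq (hl : Continuous fl) (hr : Continuous fr) :
    ∀ᵐ t, 0 < t → fl (sol.um 0 t) = fr (sol.up 0 t) := by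
  simpa only [le_refl, if_true, lt_irrefl, if_false] using
    (sol.isConservationLaw hl hr).ae_flux_eq 0

theorem isInterfacePotential (hl : IsConvexFlux fl) (hr : IsConvexFlux fr) (hAB : fl A = fr B)
    (hA : deriv fl A ≤ 0) (hB : 0 ≤ deriv fr B) :
    IsInterfacePotential sol.gicData sol.potential where
  right := sol.isTracedPotential_right hl hr
  left := sol.isTracedPotential_left hl hr
  exists_fl_eq := ⟨A, rfl⟩
  exists_fr_eq := ⟨B, hAB.symm⟩
  flux_eq := sol.ae_flux_eq hl.continuous hr.continuous
  le_flux := by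
    filter_upwards [sol.ae_flux_eq hl.continuous hr.continuous,
      sol.ae_kruzkovFlux_le hl.continuous hr.continuous] with t heq hle ht
    exact (le_of_kruzkovFlux_le hl hr hAB hA hB (heq ht) (hle ht)).trans_eq (heq ht)
  incoming := by
    filter_upwards [sol.ae_flux_eq hl.continuous hr.continuous,
      sol.ae_kruzkovFlux_le hl.continuous hr.continuous] with t heq hle ht hlt
    exact deriv_pos_or_deriv_neg_of_kruzkovFlux_le hl hr hAB (heq ht) (hle ht)
      (hlt.trans_eq (heq ht).symm)
  hasDerivAt_interface := by
    have h := (sol.isConservationLaw hl.continuous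
      hr.continuous).ae_hasDerivAt_conservationPotential_snd 0
    simp only [lt_irrefl, if_false] at h
    exact h

end ABSol

lemma sInf_le_sInf_and_sSup_le_sSup_of_cross {α : Type*} [ConditionallyCompleteLinearOrder α]
    [TopologicalSpace α] [OrderTopology α] {S₁ S₂ : Set α} (hS₁ : IsCompact S₁)
    (hS₂ : IsCompact S₂) (hne₁ : S₁.Nonempty) (hne₂ : S₂.Nonempty)
    (hcross : ∀ y₁ ∈ S₁, ∀ y₂ ∈ S₂, y₂ ≤ y₁ → y₂ ∈ S₁ ∧ y₁ ∈ S₂) :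
    sInf S₁ ≤ sInf S₂ ∧ sSup S₁ ≤ sSup S₂ := by
  constructor
  · by_contra! hlt
    exact hlt.not_ge (csInf_le hS₁.bddBelow
      (hcross _ (hS₁.sInf_mem hne₁) _ (hS₂.sInf_mem hne₂) hlt.le).1)
  · by_contra! hlt
    exact hlt.not_ge (le_csSup hS₂.bddAbove
      (hcross _ (hS₁.sSup_mem hne₁) _ (hS₂.sSup_mem hne₂) hlt.le).2)

namespace ABSol

variable {T A B : ℝ} {fl fr u0 : ℝ → ℝ} (sol : ABSol fl fr A B u0)

lemma isABgic_iff_isGicOn (ζ : ℝ → ℝ) :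
    IsABgic T fl fr (fl A) sol ζ ↔ sol.gicData.IsGicOn ζ 0 T := by
  rw [IsABgic, ← restrict_Ioo_eq_restrict_Icc, ae_restrict_iff' measurableSet_Ioo]
  rfl

lemma charSet0_eq_setOf_gicJoined (x : ℝ) :
    charSet0 T fl fr (fl A) sol x = {y | sol.gicData.GicJoined (y, 0) (x, T)} := by
  ext y
  simp only [charSet0, charSet, mem_image, mem_ofPred_eq, isABgic_iff_isGicOn, GicData.GicJoined]
  exact exists_congr fun ζ ↦ and_right_comm.trans and_assoc

end ABSol

theorem charSet0_compact_and_monotone_general {T A B : ℝ} {fl fr u0 : ℝ → ℝ} (hT : 0 < T)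
    (hl : IsConvexFlux fl) (hr : IsConvexFlux fr) (hAB : fl A = fr B) (hA : deriv fl A ≤ 0)
    (hB : 0 ≤ deriv fr B) (sol : ABSol fl fr A B u0) :
    (∀ x : ℝ, (charSet0 T fl fr (fl A) sol x).Nonempty ∧
      IsCompact (charSet0 T fl fr (fl A) sol x)) ∧
    (∀ x1 x2 : ℝ, x1 < x2 →
      sInf (charSet0 T fl fr (fl A) sol x1) ≤ sInf (charSet0 T fl fr (fl A) sol x2) ∧
      sSup (charSet0 T fl fr (fl A) sol x1) ≤ sSup (charSet0 T fl fr (fl A) sol x2)) := by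
  simp only [sol.charSet0_eq_setOf_gicJoined]
  have hpot := sol.isInterfacePotential hl hr hAB hA hB
  have hne (x) : {y | sol.gicData.GicJoined (y, 0) (x, T)}.Nonempty := hpot.exists_gicJoined hT x
  have hcpt (x) : IsCompact {y | sol.gicData.GicJoined (y, 0) (x, T)} :=
    hpot.isCompact_setOf_gicJoined hT.le x
  refine ⟨fun x ↦ ⟨hne x, hcpt x⟩, fun x1 x2 hx ↦ ?_⟩
  exact sInf_le_sInf_and_sSup_le_sSup_of_cross (hcpt x1) (hcpt x2) (hne x1) (hne x2)
    fun y₁ h₁ y₂ h₂ hy ↦ h₁.cross hT.le h₂ hx.le hy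

/-- `C₀(u,x)` is nonempty and compact for every `x`, and
`x ↦ min C₀(u,x)`, `x ↦ max C₀(u,x)` are nondecreasing
(Proposition 4.1 (i),(iv) of the paper). -/
theorem charSet0_compact_and_monotone
    {T a θl θr A B : ℝ} {fl fr : ℝ → ℝ}
    (hT : 0 < T)
    (hflC : ContDiff ℝ 2 fl) (hfrC : ContDiff ℝ 2 fr)
    (ha : 0 < a)
    (hfl2 : ∀ w : ℝ, a ≤ deriv (deriv fl) w)
    (hfr2 : ∀ w : ℝ, a ≤ deriv (deriv fr) w)
    (hf0 : fl 0 = fr 0) (hf1 : fl 1 = fr 1)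
    (hθl : deriv fl θl = 0) (hθr : deriv fr θr = 0)
    (hθl0 : 0 ≤ θl) (hθr1 : θr ≤ 1)
    (hAB : fl A = fr B) (hA' : deriv fl A ≤ 0) (hB' : 0 ≤ deriv fr B)
    {u0 : ℝ → ℝ} (hu0 : IsLinf u0) (sol : ABSol fl fr A B u0) :
    (∀ x : ℝ, (charSet0 T fl fr (fl A) sol x).Nonempty ∧
      IsCompact (charSet0 T fl fr (fl A) sol x)) ∧
    (∀ x1 x2 : ℝ, x1 < x2 →
      sInf (charSet0 T fl fr (fl A) sol x1) ≤
        sInf (charSet0 T fl fr (fl A) sol x2) ∧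
      sSup (charSet0 T fl fr (fl A) sol x1) ≤
        sSup (charSet0 T fl fr (fl A) sol x2)) := by
  exact charSet0_compact_and_monotone_general hT (isConvexFlux_of_le_deriv_deriv hflC ha hfl2)
    (isConvexFlux_of_le_deriv_deriv hfrC ha hfr2) hAB hA' hB' sol
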